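/- Let F ∈ R^{l×m} with l < m and rank r, and suppose d_r(F) is associated to (z_1 − f) h, where f ∈ K[z_2, …, z_n] and h ∈ K[z_j] for some fixed j ∈ {2, …, n}. Then F is equivalent to its Smith form if and only if J_k(F) = R for every k = 1, …, r. -/

import Mathlib

open MvPolynomial Matrix

section Defs

variable {A : Type*} [CommRing A]

/-- The set of all `k × k` minors of a matrix. -/
def minorsSet {l m : ℕ} (F : Matrix (Fin l) (Fin m) A) (k : ℕ) : Set A :=
  { p | ∃ (r : Fin k ↪ Fin l) (c : Fin k ↪ Fin m), p = (F.submatrix ⇑r ⇑c).det }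

/-- `d` is a greatest common divisor of the `k × k` minors of `F`. -/
def IsGcdMinors {l m : ℕ} (F : Matrix (Fin l) (Fin m) A) (k : ℕ) (d : A) : Prop :=
  (∀ p ∈ minorsSet F k, d ∣ p) ∧ ∀ e : A, (∀ p ∈ minorsSet F k, e ∣ p) → e ∣ d

/-- The ideal generated by the `k × k` reduced minors of `F`, relative to a gcd `d`
of the `k × k` minors (the reduced minors are the `v` with `d * v` a minor). -/
def reducedIdeal {l m : ℕ} (F : Matrix (Fin l) (Fin m) A) (k : ℕ) (d : A) : Ideal A :=
  Ideal.span { v : A | d * v ∈ minorsSet F k }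

/-- `J_k(F) = R`: the `k × k` reduced minors of `F` generate the unit ideal. -/
def JkUnit {l m : ℕ} (F : Matrix (Fin l) (Fin m) A) (k : ℕ) : Prop :=
  ∃ d : A, IsGcdMinors F k d ∧ reducedIdeal F k d = ⊤

/-- `F` has rank `r`: some `r × r` minor is nonzero and all `(r+1) × (r+1)` minors vanish. -/
def HasRank {l m : ℕ} (F : Matrix (Fin l) (Fin m) A) (r : ℕ) : Prop :=
  (∃ p ∈ minorsSet F r, p ≠ 0) ∧ ∀ p ∈ minorsSet F (r + 1), p = 0

/-- Equivalence of matrices: `F₁ = U * F₂ * V` for unimodular `U`, `V`. -/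
def MatEquiv {l m : ℕ} (F₁ F₂ : Matrix (Fin l) (Fin m) A) : Prop :=
  ∃ (U : Matrix (Fin l) (Fin l) A) (V : Matrix (Fin m) (Fin m) A),
    IsUnit U.det ∧ IsUnit V.det ∧ F₁ = U * F₂ * V

/-- The rectangular diagonal matrix with diagonal entries `Φ`. -/
def smithDiag {l m : ℕ} (Φ : Fin l → A) : Matrix (Fin l) (Fin m) A :=
  Matrix.of fun i j => if (i : ℕ) = (j : ℕ) then Φ i else 0

/-- `F` (of rank `r`) is equivalent to its Smith form: there are diagonal entries `Φ` such that
for each `i ≤ r` the product `Φ_1 ⋯ Φ_i` is a gcd of the `i × i` minors of `F`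
(i.e. `Φ_i = d_i(F)/d_{i-1}(F)`), `Φ_i = 0` for `i > r`, and `F` is equivalent to
the diagonal matrix with entries `Φ`. -/
def SmithEquivAt {l m : ℕ} (F : Matrix (Fin l) (Fin m) A) (r : ℕ) : Prop :=
  ∃ Φ : Fin l → A,
    (∀ i : Fin l, (i : ℕ) < r →
      IsGcdMinors F ((i : ℕ) + 1) (∏ j ∈ Finset.Iic i, Φ j)) ∧
    (∀ i : Fin l, r ≤ (i : ℕ) → Φ i = 0) ∧
    MatEquiv F (smithDiag Φ)

/-- `F` is equivalent to its Smith form. -/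
def EquivToSmith {l m : ℕ} (F : Matrix (Fin l) (Fin m) A) : Prop :=
  ∃ r : ℕ, HasRank F r ∧ SmithEquivAt F r

end Defs

section Basics

variable {A : Type*} [CommRing A]

/-- Generic matrix equivalence. -/
def Eqv {m n : Type*} [Fintype m] [DecidableEq m] [Fintype n] [DecidableEq n]
    (F G : Matrix m n A) : Prop :=
  ∃ (U : Matrix m m A) (V : Matrix n n A), IsUnit U.det ∧ IsUnit V.det ∧ F = U * G * V

theorem Eqv.refl {m n : Type*} [Fintype m] [DecidableEq m] [Fintype n] [DecidableEq n]
    (F : Matrix m n A) : Eqv F F := ⟨1, 1, by simp, by simp, by simp⟩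

theorem Eqv.symm {m n : Type*} [Fintype m] [DecidableEq m] [Fintype n] [DecidableEq n]
    {F G : Matrix m n A} (h : Eqv F G) : Eqv G F := by
  obtain ⟨U, V, hU, hV, rfl⟩ := h
  refine ⟨U⁻¹, V⁻¹, ?_, ?_, ?_⟩
  · exact Matrix.isUnit_nonsing_inv_det U hU
  · exact Matrix.isUnit_nonsing_inv_det V hV
  · rw [Matrix.mul_assoc U, Matrix.nonsing_inv_mul_cancel_left U _ hU,
      Matrix.mul_nonsing_inv_cancel_right V _ hV]

theorem Eqv.trans {m n : Type*} [Fintype m] [DecidableEq m] [Fintype n] [DecidableEq n]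
    {F G H : Matrix m n A} (h : Eqv F G) (h' : Eqv G H) : Eqv F H := by
  obtain ⟨U, V, hU, hV, rfl⟩ := h
  obtain ⟨U', V', hU', hV', rfl⟩ := h'
  refine ⟨U * U', V' * V, ?_, ?_, ?_⟩
  · rw [det_mul]; exact hU.mul hU'
  · rw [det_mul]; exact hV'.mul hV
  · simp only [Matrix.mul_assoc]

theorem Eqv.map {B : Type*} [CommRing B] (f : A →+* B)
    {m n : Type*} [Fintype m] [DecidableEq m] [Fintype n] [DecidableEq n]
    {F G : Matrix m n A} (h : Eqv F G) : Eqv (F.map f) (G.map f) := by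
  obtain ⟨U, V, hU, hV, rfl⟩ := h
  refine ⟨U.map f, V.map f, ?_, ?_, ?_⟩
  · have := hU.map f; rwa [RingHom.map_det] at this
  · have := hV.map f; rwa [RingHom.map_det] at this
  · simp only [Matrix.map_mul]

theorem Eqv.smul {m n : Type*} [Fintype m] [DecidableEq m] [Fintype n] [DecidableEq n]
    {F G : Matrix m n A} (c : A) (h : Eqv F G) : Eqv (c • F) (c • G) := by
  obtain ⟨U, V, hU, hV, rfl⟩ := h
  exact ⟨U, V, hU, hV, by simp⟩

theorem Eqv.of_mul {m n : Type*} [Fintype m] [DecidableEq m] [Fintype n] [DecidableEq n]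
    {F : Matrix m n A} {U : Matrix m m A} {V : Matrix n n A} (hU : IsUnit U.det)
    (hV : IsUnit V.det) : Eqv (U * F * V) F := ⟨U, V, hU, hV, rfl⟩

/-- determinantal ideals -/
def dI {m n : Type*} (F : Matrix m n A) (k : ℕ) : Ideal A :=
  Ideal.span (Set.range fun rc : (Fin k → m) × (Fin k → n) => (F.submatrix rc.1 rc.2).det)

theorem mem_dI {m n : Type*} (F : Matrix m n A) {k : ℕ} (r : Fin k → m) (c : Fin k → n) :
    (F.submatrix r c).det ∈ dI F k := Ideal.subset_span ⟨(r, c), rfl⟩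

theorem dI_le_iff {m n : Type*} (F : Matrix m n A) {k : ℕ} (I : Ideal A) :
    dI F k ≤ I ↔ ∀ (r : Fin k → m) (c : Fin k → n), (F.submatrix r c).det ∈ I := by
  unfold dI
  rw [Ideal.span_le]
  constructor
  · intro h r c; exact h ⟨(r, c), rfl⟩
  · rintro h _ ⟨⟨r, c⟩, rfl⟩; exact h r c

theorem dI_transpose {m n : Type*} (F : Matrix m n A) (k : ℕ) : dI Fᵀ k = dI F k := by
  apply le_antisymm
  · rw [dI_le_iff]; intro r c
    rw [← det_transpose]; exact mem_dI F c r
  · rw [dI_le_iff]; intro r c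
    rw [← det_transpose]; exact mem_dI Fᵀ c r

theorem dI_mul_left_le {m n p : Type*} [Fintype m] (U : Matrix p m A) (F : Matrix m n A) (k : ℕ) :
    dI (U * F) k ≤ dI F k := by
  classical
  rw [dI_le_iff]
  intro r c
  have h1 : ((U * F).submatrix r c) = fun i => ∑ x : m, U (r i) x • fun j => F x (c j) := by
    funext i j
    simp [Matrix.mul_apply]
  rw [h1]
  have h2 := (Matrix.detRowAlternating (R := A) (n := Fin k)).toMultilinearMap.map_sum
    (α := fun _ => m) (fun i x => U (r i) x • fun j => F x (c j))
  have h3 : (Matrix.det fun i => ∑ x : m, U (r i) x • fun j => F x (c j))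
    = ∑ f : (Fin k → m), Matrix.det (fun i => U (r i) (f i) • fun j => F (f i) (c j)) := h2
  rw [h3]
  refine Ideal.sum_mem _ fun f _ => ?_
  have h4 : Matrix.det (fun i => U (r i) (f i) • fun j => F (f i) (c j)) =
      (∏ i, U (r i) (f i)) * (F.submatrix f c).det := by
    rw [← Matrix.det_mul_column]; rfl
  rw [h4]
  exact Ideal.mul_mem_left _ _ (mem_dI F f c)

theorem dI_mul_right_le {m n p : Type*} [Fintype n] (F : Matrix m n A) (V : Matrix n p A) (k : ℕ) :
    dI (F * V) k ≤ dI F k := by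
  rw [← dI_transpose, ← dI_transpose F, transpose_mul]
  exact dI_mul_left_le _ _ _

theorem Eqv.dI_eq {m n : Type*} [Fintype m] [DecidableEq m] [Fintype n] [DecidableEq n]
    {F G : Matrix m n A} (h : Eqv F G) (k : ℕ) : dI F k = dI G k := by
  have key : ∀ {F G : Matrix m n A}, Eqv F G → dI F k ≤ dI G k := by
    rintro F G ⟨U, V, -, -, rfl⟩
    exact (dI_mul_right_le _ _ _).trans (dI_mul_left_le _ _ _)
  exact le_antisymm (key h) (key h.symm)

theorem dI_zero' {m n : Type*} (F : Matrix m n A) : dI F 0 = ⊤ := by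
  rw [Ideal.eq_top_iff_one]
  have := mem_dI F (k := 0) Fin.elim0 Fin.elim0
  simpa using this

theorem dI_succ_le {m n : Type*} (F : Matrix m n A) (k : ℕ) : dI F (k + 1) ≤ dI F k := by
  rw [dI_le_iff]
  intro r c
  rw [det_succ_row_zero]
  refine Ideal.sum_mem _ fun j _ => Ideal.mul_mem_left _ _ ?_
  rw [submatrix_submatrix]
  exact mem_dI F _ _

theorem dI_antitone {m n : Type*} (F : Matrix m n A) : Antitone (dI F) :=
  antitone_nat_of_succ_le (dI_succ_le F)

theorem entry_mem_dI {m n : Type*} (F : Matrix m n A) (i : m) (j : n) : F i j ∈ dI F 1 := by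
  have := mem_dI F (k := 1) (fun _ => i) (fun _ => j)
  simpa using this

theorem dI_one_le_iff {m n : Type*} (F : Matrix m n A) (I : Ideal A) :
    dI F 1 ≤ I ↔ ∀ i j, F i j ∈ I := by
  rw [dI_le_iff]
  constructor
  · intro h i j; simpa using h (fun _ => i) (fun _ => j)
  · intro h r c; simpa using h _ _

theorem dI_smul {m n : Type*} (F : Matrix m n A) (c : A) (k : ℕ) :
    dI (c • F) k = Ideal.span {c ^ k} * dI F k := by
  unfold dI
  rw [Ideal.span_mul_span', Set.singleton_mul, ← Set.range_comp]
  congr 2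
  funext rc
  simp [submatrix_smul, det_smul]

theorem dI_map {m n : Type*} {B : Type*} [CommRing B] (f : A →+* B) (F : Matrix m n A) (k : ℕ) :
    dI (F.map f) k = (dI F k).map f := by
  unfold dI
  rw [Ideal.map_span, ← Set.range_comp]
  congr 2
  funext rc
  simp only [Function.comp, RingHom.map_det, RingHom.mapMatrix_apply, submatrix_map]

/-- block sum of a scalar and a matrix -/
def blk {l m : ℕ} (d : A) (F : Matrix (Fin l) (Fin m) A) : Matrix (Fin (l + 1)) (Fin (m + 1)) A :=
  Matrix.of fun i j => Fin.cases (Fin.cases d (fun _ => 0) j) (fun i' => Fin.cases 0 (fun j' => F i' j') j) i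

@[simp] theorem blk_00 {l m : ℕ} (d : A) (F : Matrix (Fin l) (Fin m) A) : blk d F 0 0 = d := rfl
@[simp] theorem blk_0s {l m : ℕ} (d : A) (F : Matrix (Fin l) (Fin m) A) (j : Fin m) :
    blk d F 0 j.succ = 0 := rfl
@[simp] theorem blk_s0 {l m : ℕ} (d : A) (F : Matrix (Fin l) (Fin m) A) (i : Fin l) :
    blk d F i.succ 0 = 0 := rfl
@[simp] theorem blk_ss {l m : ℕ} (d : A) (F : Matrix (Fin l) (Fin m) A) (i : Fin l) (j : Fin m) :
    blk d F i.succ j.succ = F i j := rfl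

theorem blk_mul {l m p : ℕ} (d e : A) (F : Matrix (Fin l) (Fin m) A) (G : Matrix (Fin m) (Fin p) A) :
    blk d F * blk e G = blk (d * e) (F * G) := by
  ext i j
  refine Fin.cases ?_ (fun i => ?_) i <;> refine Fin.cases ?_ (fun j => ?_) j <;>
    simp [Matrix.mul_apply, Fin.sum_univ_succ]

theorem blk_det {l : ℕ} (d : A) (F : Matrix (Fin l) (Fin l) A) : (blk d F).det = d * F.det := by
  rw [det_succ_row_zero, Fin.sum_univ_succ]
  simp
  rfl

theorem blk_map {l m : ℕ} {B : Type*} [CommRing B] (f : A →+* B) (d : A)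
    (F : Matrix (Fin l) (Fin m) A) : (blk d F).map f = blk (f d) (F.map f) := by
  ext i j
  refine Fin.cases ?_ (fun i => ?_) i <;> refine Fin.cases ?_ (fun j => ?_) j <;> simp

theorem blk_smul {l m : ℕ} (c d : A)
    (F : Matrix (Fin l) (Fin m) A) : c • (blk d F) = blk (c * d) (c • F) := by
  ext i j
  refine Fin.cases ?_ (fun i => ?_) i <;> refine Fin.cases ?_ (fun j => ?_) j <;> simp

theorem Eqv.blk {l m : ℕ} (d : A) {F G : Matrix (Fin l) (Fin m) A} (h : Eqv F G) :
    Eqv (blk d F) (blk d G) := by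
  obtain ⟨U, V, hU, hV, rfl⟩ := h
  refine ⟨_root_.blk 1 U, _root_.blk 1 V, ?_, ?_, ?_⟩
  · simpa [blk_det] using hU
  · simpa [blk_det] using hV
  · simp [blk_mul]

theorem dI_blk_one {l m : ℕ} (F : Matrix (Fin l) (Fin m) A) (k : ℕ) :
    dI (blk 1 F) (k + 1) = dI F k := by
  have aux : ∀ (r : Fin k → Fin (l + 1)) (c : Fin k → Fin (m + 1)), (∀ i, r i ≠ 0) →
      ((blk 1 F).submatrix r c).det ∈ dI F k := by
    intro r c hr
    choose r' hr' using fun i => Fin.exists_succ_eq.2 (hr i)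
    by_cases hc : ∀ j, c j ≠ 0
    · choose c' hc' using fun i => Fin.exists_succ_eq.2 (hc i)
      have : (blk 1 F).submatrix r c = F.submatrix r' c' := by
        ext i j; simp [← hr', ← hc']
      rw [this]; exact mem_dI _ _ _
    · push Not at hc
      obtain ⟨j, hj⟩ := hc
      rw [det_eq_zero_of_column_eq_zero j]
      · exact zero_mem _
      · intro i; simp [← hr', hj]
  apply le_antisymm
  · rw [dI_le_iff]
    intro r c
    by_cases hinj : Function.Injective r
    swap
    · rw [Function.Injective] at hinj
      push Not at hinj
      obtain ⟨a, b, hab, hne⟩ := hinj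
      rw [det_zero_of_row_eq hne]
      · exact zero_mem _
      · funext j; simp [hab]
    obtain ⟨i0, hi0⟩ : ∃ i0 : Fin (k + 1), ∀ i, i ≠ i0 → r i ≠ 0 := by
      by_cases h : ∃ i0, r i0 = 0
      · obtain ⟨i0, h0⟩ := h
        exact ⟨i0, fun i hi h1 => hi (hinj (h1.trans h0.symm))⟩
      · push Not at h
        exact ⟨0, fun i _ => h i⟩
    rw [det_succ_row _ i0]
    refine Ideal.sum_mem _ fun j _ => Ideal.mul_mem_left _ _ ?_
    rw [submatrix_submatrix]
    exact aux _ _ fun i => hi0 _ (Fin.succAbove_ne i0 i)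
  · rw [dI_le_iff]
    intro r c
    have : (blk 1 F).submatrix (Fin.cons 0 (fun i => (r i).succ)) (Fin.cons 0 (fun i => (c i).succ))
        = blk 1 (F.submatrix r c) := by
      ext i j
      refine Fin.cases ?_ (fun i => ?_) i <;> refine Fin.cases ?_ (fun j => ?_) j <;> simp
    have h2 := mem_dI (blk 1 F) (Fin.cons 0 (fun i => (r i).succ)) (Fin.cons 0 (fun i => (c i).succ))
    rw [this, blk_det, one_mul] at h2
    exact h2

/-- clear the first row and column using a unit pivot -/
theorem clear_pivot {l m : ℕ} (G : Matrix (Fin (l + 1)) (Fin (m + 1)) A) (h : IsUnit (G 0 0)) :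
    ∃ G' : Matrix (Fin l) (Fin m) A, Eqv G (blk 1 G') := by
  obtain ⟨u, hu⟩ := h
  have huu : G 0 0 * (↑u⁻¹ : A) = 1 := by rw [← hu]; simp
  let G' : Matrix (Fin l) (Fin m) A :=
    Matrix.of fun i j => G i.succ j.succ - G i.succ 0 * (↑u⁻¹ : A) * G 0 j.succ
  let U : Matrix (Fin (l + 1)) (Fin (l + 1)) A :=
    Matrix.of fun i j => Fin.cases (Fin.cases (G 0 0) (fun _ => 0) j)
      (fun i' => Fin.cases (G i'.succ 0) (fun j' => (1 : Matrix _ _ A) i' j') j) i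
  let V : Matrix (Fin (m + 1)) (Fin (m + 1)) A :=
    Matrix.of fun i j => Fin.cases (Fin.cases 1 (fun j' => (↑u⁻¹ : A) * G 0 j'.succ) j)
      (fun i' => Fin.cases 0 (fun j' => (1 : Matrix _ _ A) i' j') j) i
  refine ⟨G', U, V, ?_, ?_, ?_⟩
  · have : U.det = G 0 0 := by
      rw [det_succ_row_zero, Fin.sum_univ_succ]
      have h1 : U.submatrix Fin.succ Fin.succ = 1 := by
        ext i j; rfl
      have z : ∀ j : Fin l, U 0 j.succ = 0 := fun _ => rfl
      have z0 : U 0 0 = G 0 0 := rfl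
      simp [h1, z, z0]
    rw [this, ← hu]; exact u.isUnit
  · have : V.det = 1 := by
      rw [det_succ_column_zero, Fin.sum_univ_succ]
      have h1 : V.submatrix Fin.succ Fin.succ = 1 := by
        ext i j; rfl
      have z : ∀ j : Fin m, V j.succ 0 = 0 := fun _ => rfl
      have z0 : V 0 0 = 1 := rfl
      simp [h1, z, z0]
    rw [this]; exact isUnit_one
  · have e1 : U * blk 1 G' = Matrix.of fun i j => Fin.cases (Fin.cases (G 0 0) (fun _ => 0) j)
      (fun i' => Fin.cases (G i'.succ 0) (fun j' => G' i' j') j) i := by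
      ext i j
      refine Fin.cases ?_ (fun i => ?_) i <;> refine Fin.cases ?_ (fun j => ?_) j <;>
        simp [Matrix.mul_apply, Fin.sum_univ_succ, U, Matrix.one_apply]
    rw [e1]
    ext i j
    refine Fin.cases ?_ (fun i => ?_) i <;> refine Fin.cases ?_ (fun j => ?_) j
    · simp [Matrix.mul_apply, Fin.sum_univ_succ, V]
    · simp [Matrix.mul_apply, Fin.sum_univ_succ, V]
      rw [← mul_assoc, huu, one_mul]
    · simp [Matrix.mul_apply, Fin.sum_univ_succ, V]
    · simp [Matrix.mul_apply, Fin.sum_univ_succ, V, Matrix.one_apply, G']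
      ring

end Basics

section Euclid

/-- elementary lower column matrix -/
def lowM {A : Type*} [CommRing A] {N : ℕ} (c : Fin N → A) : Matrix (Fin (N + 1)) (Fin (N + 1)) A :=
  Matrix.of fun i j => Fin.cases (Fin.cases 1 (fun _ => 0) j)
      (fun i' => Fin.cases (c i') (fun j' => (1 : Matrix _ _ A) i' j') j) i

theorem lowM_det {A : Type*} [CommRing A] {N : ℕ} (c : Fin N → A) : (lowM c).det = 1 := by
  rw [det_succ_row_zero, Fin.sum_univ_succ]
  have h1 : (lowM c).submatrix Fin.succ Fin.succ = 1 := by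
    ext i j; rfl
  have z : ∀ j : Fin N, (lowM c) 0 j.succ = 0 := fun _ => rfl
  have z0 : (lowM c) 0 0 = 1 := rfl
  simp [h1, z, z0]

theorem lowM_map {A B : Type*} [CommRing A] [CommRing B] (f : A →+* B) {N : ℕ} (c : Fin N → A) :
    (lowM c).map f = lowM (f ∘ c) := by
  ext i j
  refine Fin.cases ?_ (fun i => ?_) i <;> refine Fin.cases ?_ (fun j => ?_) j <;>
    simp [lowM, Matrix.one_apply, apply_ite f]

theorem lowM_mul_zero {A : Type*} [CommRing A] {N : ℕ} {p : Type*} (c : Fin N → A)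
    (M : Matrix (Fin (N + 1)) p A) (j : p) : (lowM c * M) 0 j = M 0 j := by
  simp [lowM, Matrix.mul_apply, Fin.sum_univ_succ]

theorem lowM_mul_succ {A : Type*} [CommRing A] {N : ℕ} {p : Type*} (c : Fin N → A)
    (M : Matrix (Fin (N + 1)) p A) (i : Fin N) (j : p) :
    (lowM c * M) i.succ j = c i * M 0 j + M i.succ j := by
  simp [lowM, Matrix.mul_apply, Fin.sum_univ_succ, Matrix.one_apply]

theorem lowMT_mul_zero {A : Type*} [CommRing A] {N : ℕ} {p : Type*} (c : Fin N → A)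
    (M : Matrix (Fin (N + 1)) p A) (j : p) :
    ((lowM c)ᵀ * M) 0 j = M 0 j + ∑ i, c i * M i.succ j := by
  simp [lowM, Matrix.mul_apply, Fin.sum_univ_succ]

theorem mul_lowMT_zero {A : Type*} [CommRing A] {N : ℕ} {p : Type*} (c : Fin N → A)
    (M : Matrix p (Fin (N + 1)) A) (i : p) : (M * (lowM c)ᵀ) i 0 = M i 0 := by
  simp [lowM, Matrix.mul_apply, Fin.sum_univ_succ]

theorem mul_lowMT_succ {A : Type*} [CommRing A] {N : ℕ} {p : Type*} (c : Fin N → A)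
    (M : Matrix p (Fin (N + 1)) A) (i : p) (j : Fin N) :
    (M * (lowM c)ᵀ) i j.succ = c j * M i 0 + M i j.succ := by
  simp [lowM, Matrix.mul_apply, Fin.sum_univ_succ, Matrix.one_apply, mul_comm]

/-- the monoid generated by elementary matrices -/
def ELM (A : Type*) [CommRing A] (N : ℕ) : Submonoid (Matrix (Fin (N + 1)) (Fin (N + 1)) A) :=
  Submonoid.closure {M | (∃ c, M = lowM c) ∨ (∃ c, M = (lowM c)ᵀ) ∨ ∃ i j, M = Matrix.swap A i j}

theorem ELM_low {A : Type*} [CommRing A] {N : ℕ} (c : Fin N → A) : lowM c ∈ ELM A N :=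
  Submonoid.subset_closure (Or.inl ⟨c, rfl⟩)
theorem ELM_lowT {A : Type*} [CommRing A] {N : ℕ} (c : Fin N → A) : (lowM c)ᵀ ∈ ELM A N :=
  Submonoid.subset_closure (Or.inr (Or.inl ⟨c, rfl⟩))
theorem ELM_swap {A : Type*} [CommRing A] {N : ℕ} (i j) : Matrix.swap A i j ∈ ELM A N :=
  Submonoid.subset_closure (Or.inr (Or.inr ⟨i, j, rfl⟩))

theorem ELM_det {A : Type*} [CommRing A] {N : ℕ} {P : Matrix (Fin (N + 1)) (Fin (N + 1)) A}
    (hP : P ∈ ELM A N) : IsUnit P.det := by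
  induction hP using Submonoid.closure_induction with
  | mem x hx =>
    rcases hx with ⟨c, rfl⟩ | ⟨c, rfl⟩ | ⟨i, j, rfl⟩
    · rw [lowM_det]; exact isUnit_one
    · rw [det_transpose, lowM_det]; exact isUnit_one
    · have h : Matrix.swap A i j * Matrix.swap A i j = 1 := Matrix.swap_mul_self i j
      have := congrArg Matrix.det h
      rw [det_mul, det_one] at this
      exact IsUnit.of_mul_eq_one _ this
  | one => simp
  | mul x y _ _ hx hy => rw [det_mul]; exact hx.mul hy

theorem ELM_lift {A B : Type*} [CommRing A] [CommRing B] (f : A →+* B)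
    (hf : Function.Surjective f) {N : ℕ} {P : Matrix (Fin (N + 1)) (Fin (N + 1)) B}
    (hP : P ∈ ELM B N) : ∃ P' ∈ ELM A N, P'.map f = P := by
  induction hP using Submonoid.closure_induction with
  | mem x hx =>
    rcases hx with ⟨c, rfl⟩ | ⟨c, rfl⟩ | ⟨i, j, rfl⟩
    · choose g hg using hf
      exact ⟨lowM (g ∘ c), ELM_low _, by rw [lowM_map]; congr 1; funext i; simp [hg]⟩
    · choose g hg using hf
      refine ⟨(lowM (g ∘ c))ᵀ, ELM_lowT _, ?_⟩
      rw [transpose_map, lowM_map]; congr 2; funext i; simp [hg]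
    · refine ⟨Matrix.swap A i j, ELM_swap _ _, ?_⟩
      simp
  | one => exact ⟨1, one_mem _, by simp⟩
  | mul x y _ _ hx hy =>
    obtain ⟨x', hx', rfl⟩ := hx
    obtain ⟨y', hy', rfl⟩ := hy
    exact ⟨x' * y', mul_mem hx' hy', by simp⟩

theorem euclid_reduce {D : Type*} [EuclideanDomain D] {l m : ℕ}
    (M : Matrix (Fin (l + 1)) (Fin (m + 1)) D) (hM : M ≠ 0) :
    ∃ P ∈ ELM D l, ∃ Q ∈ ELM D m, ∃ (d : D) (M' : Matrix (Fin l) (Fin m) D),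
      P * M * Q = blk d M' ∧ ∀ i j, d ∣ M i j := by
  classical
  let S : Set D := {x | x ≠ 0 ∧ ∃ P ∈ ELM D l, ∃ Q ∈ ELM D m, ∃ i j, (P * M * Q) i j = x}
  have hS : S.Nonempty := by
    by_contra h
    apply hM
    ext i j
    by_contra h'
    exact h ⟨M i j, h', 1, one_mem _, 1, one_mem _, i, j, by simp⟩
  have hwf : WellFounded (EuclideanDomain.r (R := D)) := EuclideanDomain.r_wellFounded
  obtain ⟨x, hxS, hmin⟩ := hwf.has_min S hS
  obtain ⟨hx0, P, hP, Q, hQ, i, j, hx⟩ := hxS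
  have claim1 : ∀ P ∈ ELM D l, ∀ Q ∈ ELM D m, (P * M * Q) 0 0 = x →
      ∀ i, x ∣ (P * M * Q) i 0 := by
    intro P hP Q hQ h0 i
    refine Fin.cases (by rw [h0]) (fun i => ?_) i
    by_contra hnd
    have hr : (P * M * Q) i.succ 0 % x ≠ 0 := fun h => hnd ((EuclideanDomain.mod_eq_zero).1 h)
    refine hmin _ ⟨hr, lowM (Pi.single i (-((P * M * Q) i.succ 0 / x))) * P,
      mul_mem (ELM_low _) hP, Q, hQ, i.succ, 0, ?_⟩ (EuclideanDomain.mod_lt _ hx0)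
    rw [Matrix.mul_assoc, Matrix.mul_assoc, lowM_mul_succ, ← Matrix.mul_assoc, h0,
      EuclideanDomain.mod_eq_sub_mul_div]
    simp; ring
  have claim2 : ∀ P ∈ ELM D l, ∀ Q ∈ ELM D m, (P * M * Q) 0 0 = x →
      ∀ j, x ∣ (P * M * Q) 0 j := by
    intro P hP Q hQ h0 j
    refine Fin.cases (by rw [h0]) (fun j => ?_) j
    by_contra hnd
    have hr : (P * M * Q) 0 j.succ % x ≠ 0 := fun h => hnd ((EuclideanDomain.mod_eq_zero).1 h)
    refine hmin _ ⟨hr, P, hP, Q * (lowM (Pi.single j (-((P * M * Q) 0 j.succ / x))))ᵀ,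
      mul_mem hQ (ELM_lowT _), 0, j.succ, ?_⟩ (EuclideanDomain.mod_lt _ hx0)
    rw [← Matrix.mul_assoc, mul_lowMT_succ, h0,
      EuclideanDomain.mod_eq_sub_mul_div]
    simp; ring
  -- move to the corner
  have h00 : ((Matrix.swap D 0 i * P) * M * (Q * Matrix.swap D 0 j)) 0 0 = x := by
    have : (Matrix.swap D 0 i * P) * M * (Q * Matrix.swap D 0 j) =
      Matrix.swap D 0 i * (P * M * Q) * Matrix.swap D 0 j := by simp only [Matrix.mul_assoc]
    rw [this]
    simp [hx]
  set P1 := Matrix.swap D 0 i * P with hP1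
  set Q1 := Q * Matrix.swap D 0 j with hQ1
  have hP1m : P1 ∈ ELM D l := mul_mem (ELM_swap _ _) hP
  have hQ1m : Q1 ∈ ELM D m := mul_mem hQ (ELM_swap _ _)
  choose a ha using claim1 P1 hP1m Q1 hQ1m h00
  choose b hb using claim2 P1 hP1m Q1 hQ1m h00
  set P2 := lowM (fun i => - a i.succ) * P1 with hP2
  set Q2 := Q1 * (lowM (fun i => - b i.succ))ᵀ with hQ2
  have hP2m : P2 ∈ ELM D l := mul_mem (ELM_low _) hP1m
  have hQ2m : Q2 ∈ ELM D m := mul_mem hQ1m (ELM_lowT _)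
  have e2 : P2 * M * Q2 = lowM (fun i => - a i.succ) * ((P1 * M * Q1) *
    (lowM (fun i => - b i.succ))ᵀ) := by
    simp only [hP2, hQ2, Matrix.mul_assoc]
  have e00 : (P2 * M * Q2) 0 0 = x := by
    rw [e2, lowM_mul_zero, mul_lowMT_zero, h00]
  have e2' : P2 * M * Q2 = blk x ((P2 * M * Q2).submatrix Fin.succ Fin.succ) := by
    ext i j
    refine Fin.cases ?_ (fun i => ?_) i <;> refine Fin.cases ?_ (fun j => ?_) j
    · rw [e00]; rfl
    · rw [blk_0s, e2, lowM_mul_zero, mul_lowMT_succ, h00, hb]; ring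
    · rw [blk_s0, e2, lowM_mul_succ, mul_lowMT_zero, mul_lowMT_zero, h00, ha]; ring
    · rfl
  set M' := (P2 * M * Q2).submatrix Fin.succ Fin.succ with hM'
  have hdiv : ∀ i j, x ∣ (P2 * M * Q2) i j := by
    intro i j
    refine Fin.cases ?_ (fun i => ?_) i
    · exact claim2 P2 hP2m Q2 hQ2m e00 j
    · refine Fin.cases ?_ (fun j => ?_) j
      · exact claim1 P2 hP2m Q2 hQ2m e00 _
      have key : (lowM (Pi.single i (1 : D)))ᵀ * P2 * M * Q2 = (lowM (Pi.single i (1 : D)))ᵀ * blk x M' := by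
        rw [← e2']; simp only [Matrix.mul_assoc]
      have h3 := claim2 ((lowM (Pi.single i (1 : D)))ᵀ * P2) (mul_mem (ELM_lowT _) hP2m) Q2 hQ2m
        (by rw [key, lowMT_mul_zero]; simp) j.succ
      rw [key, lowMT_mul_zero] at h3
      rw [e2']
      simpa [Pi.single_apply] using h3
  refine ⟨P2, hP2m, Q2, hQ2m, x, M', e2', ?_⟩
  have hle : dI (P2 * M * Q2) 1 ≤ Ideal.span {x} := by
    rw [dI_one_le_iff]
    intro i j; exact Ideal.mem_span_singleton.2 (hdiv i j)
  rw [(Eqv.of_mul (ELM_det hP2m) (ELM_det hQ2m)).dI_eq, dI_one_le_iff] at hle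
  exact fun i j => Ideal.mem_span_singleton.1 (hle i j)

theorem GL_lift {B D : Type*} [CommRing B] [EuclideanDomain D] (q : B →+* D)
    (hq : Function.Surjective q) (hu : ∀ d : D, IsUnit d → ∃ b : B, IsUnit b ∧ q b = d) :
    ∀ (N : ℕ) (M : Matrix (Fin N) (Fin N) D), IsUnit M.det →
      ∃ M' : Matrix (Fin N) (Fin N) B, IsUnit M'.det ∧ M'.map q = M := by
  intro N
  induction N with
  | zero => exact fun M _ => ⟨1, by simp, by ext i; exact i.elim0⟩
  | succ N ih =>
    intro M hM
    have hM0 : M ≠ 0 := by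
      rintro rfl
      rw [det_zero] at hM
      exact not_isUnit_zero hM
    obtain ⟨P, hP, Q, hQ, d, M', he, -⟩ := euclid_reduce M hM0
    obtain ⟨P', hP', rfl⟩ := ELM_lift q hq hP
    obtain ⟨Q', hQ', rfl⟩ := ELM_lift q hq hQ
    have hdet : IsUnit (blk d M').det := by
      rw [← he, det_mul, det_mul]
      exact ((ELM_det hP).mul hM).mul (ELM_det hQ)
    rw [blk_det, IsUnit.mul_iff] at hdet
    obtain ⟨d', hd', rfl⟩ := hu d hdet.1
    obtain ⟨M'', hM'', rfl⟩ := ih M' hdet.2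
    refine ⟨P'⁻¹ * blk d' M'' * Q'⁻¹, ?_, ?_⟩
    · rw [det_mul, det_mul, blk_det]
      exact ((isUnit_nonsing_inv_det _ (ELM_det hP')).mul (hd'.mul hM'')).mul
        (isUnit_nonsing_inv_det _ (ELM_det hQ'))
    · have h1 : P'⁻¹.map q * P'.map q = 1 := by
        rw [← Matrix.map_mul, nonsing_inv_mul _ (ELM_det hP')]; simp
      have h2 : Q'.map q * Q'⁻¹.map q = 1 := by
        rw [← Matrix.map_mul, mul_nonsing_inv _ (ELM_det hQ')]; simp
      rw [Matrix.map_mul, Matrix.map_mul, blk_map, ← he]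
      simp only [Matrix.mul_assoc]
      rw [h2, Matrix.mul_one, ← Matrix.mul_assoc, h1, Matrix.one_mul]

end Euclid

section Peel

/-- partial products of a sequence -/
def pp {B : Type*} [CommRing B] {l : ℕ} (Φ : Fin l → B) (k : ℕ) : B :=
  ∏ i : Fin l, if (i : ℕ) < k then Φ i else 1

theorem pp_zero {B : Type*} [CommRing B] {l : ℕ} (Φ : Fin l → B) : pp Φ 0 = 1 := by
  simp [pp]

theorem pp_cons {B : Type*} [CommRing B] {l : ℕ} (a : B) (Φ : Fin l → B) (k : ℕ) :
    pp (Fin.cons a Φ : Fin (l + 1) → B) (k + 1) = a * pp Φ k := by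
  simp [pp, Fin.prod_univ_succ]

theorem pp_smul {B : Type*} [CommRing B] (c : B) : ∀ {l : ℕ} (Φ : Fin l → B) (k : ℕ), k ≤ l →
    pp (c • Φ) k = c ^ k * pp Φ k := by
  intro l
  induction l with
  | zero => intro Φ k hk; obtain rfl : k = 0 := by omega
            simp [pp]
  | succ l ih =>
    intro Φ k hk
    cases k with
    | zero => simp [pp_zero]
    | succ k =>
      obtain ⟨a, Ψ, rfl⟩ : ∃ a, ∃ Ψ : Fin l → B, Φ = Fin.cons a Ψ :=
        ⟨Φ 0, Fin.tail Φ, (Fin.cons_self_tail Φ).symm⟩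
      have : c • (Fin.cons a Ψ : Fin (l + 1) → B) = Fin.cons (c * a) (c • Ψ) := by
        funext i; refine Fin.cases ?_ (fun i => ?_) i <;> simp
      rw [this, pp_cons, pp_cons, ih _ _ (by omega)]; ring

theorem pp_succ {B : Type*} [CommRing B] {l : ℕ} (Φ : Fin l → B) (i : Fin l) :
    pp Φ (i + 1) = pp Φ i * Φ i := by
  unfold pp
  rw [← Finset.mul_prod_erase Finset.univ _ (Finset.mem_univ i),
    ← Finset.mul_prod_erase Finset.univ (fun j : Fin l => if (j : ℕ) < i then Φ j else 1)
      (Finset.mem_univ i)]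
  simp only [lt_add_iff_pos_right, zero_lt_one, if_true, lt_irrefl, if_false, one_mul]
  rw [mul_comm]
  congr 1
  refine Finset.prod_congr rfl fun j hj => ?_
  have hne : (j : ℕ) ≠ i := fun h => (Finset.ne_of_mem_erase hj) (Fin.ext h)
  have : ((j : ℕ) < i + 1) ↔ (j : ℕ) < i := by omega
  simp [this]

theorem pp_map {A B : Type*} [CommRing A] [CommRing B] (f : A →+* B) {l : ℕ} (Φ : Fin l → A)
    (k : ℕ) : pp (fun i => f (Φ i)) k = f (pp Φ k) := by
  simp [pp, apply_ite f]

theorem pp_eq_zero {B : Type*} [CommRing B] [IsDomain B] {l : ℕ} (Φ : Fin l → B) (k : ℕ) :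
    pp Φ k = 0 ↔ ∃ i : Fin l, (i : ℕ) < k ∧ Φ i = 0 := by
  unfold pp
  rw [Finset.prod_eq_zero_iff]
  constructor
  · rintro ⟨i, -, hi⟩
    by_cases h : (i : ℕ) < k
    · exact ⟨i, h, by simpa [h] using hi⟩
    · simp [h] at hi
  · rintro ⟨i, h, hi⟩
    exact ⟨i, Finset.mem_univ _, by simp [h, hi]⟩

/-- divisibility chain -/
def Chain {B : Type*} [CommRing B] {l : ℕ} (Φ : Fin l → B) : Prop :=
  ∀ i j, i ≤ j → Φ i ∣ Φ j

theorem Chain.map {A B : Type*} [CommRing A] [CommRing B] (f : A →+* B) {l : ℕ} {Φ : Fin l → A}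
    (h : Chain Φ) : Chain (fun i => f (Φ i)) := fun i j hij => map_dvd f (h i j hij)

theorem smithDiag_cons {B : Type*} [CommRing B] {l m : ℕ} (a : B) (Φ : Fin l → B) :
    (smithDiag (Fin.cons a Φ : Fin (l + 1) → B) : Matrix _ (Fin (m + 1)) B) =
      blk a (smithDiag Φ) := by
  ext i j
  refine Fin.cases ?_ (fun i => ?_) i <;> refine Fin.cases ?_ (fun j => ?_) j <;> simp [smithDiag]

theorem smithDiag_smul {B : Type*} [CommRing B] {l m : ℕ} (a : B) (Φ : Fin l → B) :
    a • (smithDiag Φ : Matrix _ (Fin m) B) = smithDiag (a • Φ) := by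
  ext i j
  simp [smithDiag]

theorem smithDiag_map {A B : Type*} [CommRing A] [CommRing B] (f : A →+* B) {l m : ℕ}
    (Φ : Fin l → A) : (smithDiag Φ : Matrix _ (Fin m) A).map f = smithDiag (fun i => f (Φ i)) := by
  ext i j
  simp [smithDiag, apply_ite f]

theorem smithDiag_sq {A : Type*} [CommRing A] {N : ℕ} (Φ : Fin N → A) :
    (smithDiag Φ : Matrix (Fin N) (Fin N) A) = Matrix.diagonal Φ := by
  ext i j
  simp [smithDiag, Matrix.diagonal, Fin.ext_iff]

/-- all determinantal ideals principal, generators zero or dividing D0 -/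
def HP {B : Type*} [CommRing B] (D0 : B) {l m : ℕ} (F : Matrix (Fin l) (Fin m) B) : Prop :=
  ∀ k, ∃ δ, dI F k = Ideal.span {δ} ∧ (δ = 0 ∨ δ ∣ D0)

theorem dI_zero_matrix {B : Type*} [CommRing B] {l m : Type*} (k : ℕ) :
    dI (0 : Matrix l m B) (k + 1) = ⊥ := by
  rw [eq_bot_iff, dI_le_iff]
  intro r c
  rw [submatrix_zero]
  simp [det_zero]

theorem general_peel {B : Type*} [CommRing B] [IsDomain B] (D0 : B)
    (hX : ∀ (l m : ℕ) (F : Matrix (Fin (l + 1)) (Fin (m + 1)) B), dI F 1 = ⊤ → HP D0 F →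
      ∃ F'', Eqv F (blk 1 F'')) :
    ∀ (l m : ℕ) (F : Matrix (Fin l) (Fin m) B), HP D0 F →
      ∃ Φ : Fin l → B, Chain Φ ∧ Eqv F (smithDiag Φ) ∧
        ∀ k, k ≤ l → dI F k = Ideal.span {pp Φ k} := by
  intro l
  induction l with
  | zero =>
    intro m F _
    refine ⟨Fin.elim0, fun i => i.elim0, ?_, ?_⟩
    · convert Eqv.refl F; ext i; exact i.elim0
    · intro k hk
      obtain rfl : k = 0 := by omega
      rw [dI_zero', pp_zero, Ideal.span_singleton_one]
  | succ l ih =>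
    intro m F hF
    have hzero : F = 0 → ∃ Φ : Fin (l + 1) → B, Chain Φ ∧ Eqv F (smithDiag Φ) ∧
        ∀ k, k ≤ (l + 1) → dI F k = Ideal.span {pp Φ k} := by
      rintro rfl
      refine ⟨fun _ => 0, fun i j _ => dvd_rfl, ?_, ?_⟩
      · have e : (smithDiag (fun _ => 0) : Matrix (Fin (l + 1)) (Fin m) B) = 0 := by
          ext i j; simp [smithDiag]
        rw [e]; exact Eqv.refl _
      · intro k hk
        cases k with
        | zero => rw [dI_zero', pp_zero, Ideal.span_singleton_one]
        | succ k =>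
          rw [dI_zero_matrix]
          have : pp (fun _ : Fin (l + 1) => (0 : B)) (k + 1) = 0 := by
            rw [pp_eq_zero]; exact ⟨0, by simp, rfl⟩
          rw [this]; simp
    cases m with
    | zero => exact hzero (by ext i j; exact j.elim0)
    | succ m =>
      choose δ hδ hδ0 using hF
      by_cases h1 : δ 1 = 0
      · apply hzero
        have := hδ 1
        rw [h1] at this
        have h2 := (dI_one_le_iff F _).1 this.le
        ext i j
        simpa using h2 i j
      have hd : ∀ i j, δ 1 ∣ F i j := fun i j =>
        Ideal.mem_span_singleton.1 ((dI_one_le_iff F _).1 (hδ 1).le i j)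
      choose F' hF' using hd
      have hFF : F = δ 1 • (Matrix.of F') := by
        ext i j; simp [hF']
      set G : Matrix (Fin (l + 1)) (Fin (m + 1)) B := Matrix.of F' with hG
      have hk : ∀ k, ∃ ε, dI G k = Ideal.span {ε} ∧ δ k = δ 1 ^ k * ε := by
        intro k
        have e := hδ k
        rw [hFF, dI_smul] at e
        have hm : δ k ∈ Ideal.span {δ 1 ^ k} * dI G k := by
          rw [e]; exact Ideal.mem_span_singleton_self _
        obtain ⟨ε, hε, he⟩ := Ideal.mem_span_singleton_mul.1 hm
        refine ⟨ε, ?_, he.symm⟩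
        rw [← he, ← Ideal.span_singleton_mul_span_singleton] at e
        exact (Ideal.span_singleton_mul_right_inj (pow_ne_zero k h1)).1 e
      choose ε hε hε2 using hk
      have hG1 : dI G 1 = ⊤ := by
        rw [hε 1, Ideal.span_singleton_eq_top]
        have := hε2 1
        rw [pow_one] at this
        have h3 : ε 1 = 1 := mul_left_cancel₀ h1 (by rw [mul_one]; exact this.symm)
        rw [h3]; exact isUnit_one
      have hGP : HP D0 G := by
        intro k
        refine ⟨ε k, hε k, ?_⟩
        rcases hδ0 k with h | h
        · left
          rw [hε2, mul_eq_zero] at h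
          exact h.resolve_left (pow_ne_zero k h1)
        · right
          exact (Dvd.intro_left _ (hε2 k).symm).trans h
      obtain ⟨F'', hE⟩ := hX l m G hG1 hGP
      have hdI : ∀ k, dI F'' k = dI G (k + 1) := fun k => by
        rw [hE.dI_eq, dI_blk_one]
      have hF'' : HP D0 F'' := by
        intro k; rw [hdI]; exact hGP (k + 1)
      obtain ⟨Ψ, hc, hS, hp⟩ := ih m F'' hF''
      refine ⟨Fin.cons (δ 1) (δ 1 • Ψ), ?_, ?_, ?_⟩
      · intro i j
        refine Fin.cases ?_ (fun i => ?_) i <;> refine Fin.cases ?_ (fun j => ?_) j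
        · simp
        · simp
        · intro h; simp at h
        · intro h
          simpa using mul_dvd_mul_left _ (hc i j (by simpa using h))
      · rw [smithDiag_cons, ← smithDiag_smul]
        have h4 := (hE.trans (hS.blk 1)).smul (δ 1)
        rw [← hFF, blk_smul, mul_one] at h4
        exact h4
      · intro k hk
        cases k with
        | zero => rw [dI_zero', pp_zero, Ideal.span_singleton_one]
        | succ k =>
          rw [hFF, dI_smul, ← hdI, hp k (by omega), pp_cons, pp_smul _ _ _ (by omega),
            Ideal.span_singleton_mul_span_singleton]
          congr 2; ring

theorem peel_step {B D : Type*} [CommRing B] [EuclideanDomain D] (q : B →+* D)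
    (hq : Function.Surjective q) (hl : ∀ b, IsUnit (q b) → IsUnit b)
    (l m : ℕ) (F : Matrix (Fin (l + 1)) (Fin (m + 1)) B) (h1 : dI F 1 = ⊤) :
      ∃ F'', Eqv F (blk 1 F'') := by
  have hM : dI (F.map q) 1 = ⊤ := by rw [dI_map, h1, Ideal.map_top]
  have hM0 : F.map q ≠ 0 := by
    intro h
    rw [h, dI_zero_matrix] at hM
    exact bot_ne_top hM
  obtain ⟨P, hP, Q, hQ, d, M', he, hd⟩ := euclid_reduce _ hM0
  obtain ⟨P', hP', rfl⟩ := ELM_lift q hq hP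
  obtain ⟨Q', hQ', rfl⟩ := ELM_lift q hq hQ
  have hdu : IsUnit d := by
    rw [← Ideal.span_singleton_eq_top, eq_top_iff, ← hM, dI_one_le_iff]
    exact fun i j => Ideal.mem_span_singleton.2 (hd i j)
  have h00 : IsUnit ((P' * F * Q') 0 0) := by
    apply hl
    have : (P'.map q * F.map q * Q'.map q) 0 0 = q ((P' * F * Q') 0 0) := by
      rw [← Matrix.map_mul, ← Matrix.map_mul]; rfl
    rw [← this, he]; exact hdu
  obtain ⟨G', hG'⟩ := clear_pivot _ h00
  exact ⟨G', (Eqv.of_mul (ELM_det hP') (ELM_det hQ')).symm.trans hG'⟩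

theorem peel_smith {B D : Type*} [CommRing B] [IsDomain B] [EuclideanDomain D] (q : B →+* D)
    (hq : Function.Surjective q) (hl : ∀ b, IsUnit (q b) → IsUnit b)
    {l m : ℕ} (F : Matrix (Fin l) (Fin m) B) (hF : ∀ k, ∃ δ, dI F k = Ideal.span {δ}) :
    ∃ Φ : Fin l → B, Chain Φ ∧ Eqv F (smithDiag Φ) ∧
        ∀ k, k ≤ l → dI F k = Ideal.span {pp Φ k} := by
  refine general_peel 0 (fun l m F h1 _ => peel_step q hq hl l m F h1) l m F ?_
  intro k
  obtain ⟨δ, hδ⟩ := hF k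
  exact ⟨δ, hδ, Or.inr (dvd_zero _)⟩

theorem chain_unique {B : Type*} [CommRing B] [IsDomain B] {l : ℕ} {Φ Ψ : Fin l → B}
    (hΦ : Chain Φ) (hΨ : Chain Ψ)
    (h : ∀ k, k ≤ l → Ideal.span {pp Φ k} = Ideal.span {pp Ψ k}) (i : Fin l) :
    Associated (Φ i) (Ψ i) := by
  have h1 := h i i.2.le
  have h2 := h (i + 1) i.2
  rw [Ideal.span_singleton_eq_span_singleton] at h1 h2
  by_cases h0 : pp Φ i = 0
  · have h0' : pp Ψ i = 0 := by rw [h0] at h1; exact (associated_zero_iff_eq_zero _).1 h1.symm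
    rw [pp_eq_zero] at h0 h0'
    obtain ⟨a, ha, ha0⟩ := h0
    obtain ⟨b, hb, hb0⟩ := h0'
    have e1 : Φ i = 0 := zero_dvd_iff.1 (ha0 ▸ hΦ a i (Fin.le_def.2 ha.le))
    have e2 : Ψ i = 0 := zero_dvd_iff.1 (hb0 ▸ hΨ b i (Fin.le_def.2 hb.le))
    rw [e1, e2]
  · rw [pp_succ, pp_succ] at h2
    exact Associated.of_mul_left h2 h1 h0

theorem smithDiag_assoc {B : Type*} [CommRing B] {l m : ℕ} {Φ Ψ : Fin l → B}
    (h : ∀ i, Associated (Φ i) (Ψ i)) :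
    Eqv (smithDiag Φ : Matrix _ (Fin m) B) (smithDiag Ψ) := by
  choose u hu using h
  apply Eqv.symm
  refine ⟨diagonal fun i => (u i : B), 1, ?_, by simp, ?_⟩
  · rw [det_diagonal]
    exact ⟨∏ i, u i, by simp⟩
  · ext i j
    rw [Matrix.mul_one, Matrix.diagonal_mul]
    simp only [smithDiag, of_apply, mul_ite, mul_zero]
    rw [← hu, mul_comm]

end Peel

section Patch

/-- y ↦ a y -/
noncomputable def psiH {A : Type*} [CommRing A] (a : A) : Polynomial (Polynomial A) →+* Polynomial (Polynomial A) :=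
  Polynomial.eval₂RingHom Polynomial.C (Polynomial.C (Polynomial.C a) * Polynomial.X)

/-- x ↦ x + a y -/
noncomputable def phiH {A : Type*} [CommRing A] (a : A) : Polynomial A →+* Polynomial (Polynomial A) :=
  Polynomial.eval₂RingHom (Polynomial.C.comp Polynomial.C)
    (Polynomial.C Polynomial.X + Polynomial.C (Polynomial.C a) * Polynomial.X)

/-- x ↦ x + a y, y ↦ y -/
noncomputable def chiH {A : Type*} [CommRing A] (a : A) : Polynomial (Polynomial A) →+* Polynomial (Polynomial A) :=
  Polynomial.eval₂RingHom (phiH a) Polynomial.X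

theorem phiH_zero {A : Type*} [CommRing A] : phiH (0 : A) = Polynomial.C := by
  apply Polynomial.ringHom_ext <;> simp [phiH]

theorem psi_phi {A : Type*} [CommRing A] (a s : A) : (psiH a).comp (phiH s) = phiH (s * a) := by
  apply Polynomial.ringHom_ext <;> simp [phiH, psiH, mul_assoc]

theorem psi_C {A : Type*} [CommRing A] (a : A) : (psiH a).comp Polynomial.C = Polynomial.C := by
  apply Polynomial.ringHom_ext <;> simp [psiH]

theorem chi_phi {A : Type*} [CommRing A] (s t : A) : (chiH t).comp (phiH s) = phiH (t + s) := by
  apply Polynomial.ringHom_ext <;> simp [phiH, chiH, add_mul, add_assoc]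

theorem chi_C {A : Type*} [CommRing A] (t : A) : (chiH t).comp Polynomial.C = phiH t := by
  apply Polynomial.ringHom_ext <;> simp [phiH, chiH]

theorem psi_psi {A : Type*} [CommRing A] (a b : A) : (psiH a).comp (psiH b) = psiH (b * a) := by
  apply Polynomial.ringHom_ext <;> simp [psiH, mul_assoc]

theorem isUnit_map_det {A B : Type*} [CommRing A] [CommRing B] {m : Type*} [Fintype m]
    [DecidableEq m] (f : A →+* B) {U : Matrix m m A} (h : IsUnit U.det) : IsUnit (U.map f).det := by
  rw [← RingHom.mapMatrix_apply, ← RingHom.map_det]; exact h.map f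

/-- constant specialization x ↦ 0 -/
noncomputable def ev0 {A : Type*} [CommRing A] : Polynomial A →+* Polynomial A :=
  Polynomial.C.comp (Polynomial.evalRingHom 0)

theorem map_comp_mat {A B C : Type*} [CommRing A] [CommRing B] [CommRing C] {m n : Type*}
    (f : A →+* B) (g : B →+* C) (F : Matrix m n A) : (F.map f).map g = F.map (g.comp f) := by
  ext i j; simp

theorem sub_zero_one {A : Type*} [CommRing A] :
    (Polynomial.eval₂RingHom ev0 Polynomial.X : Polynomial (Polynomial A) →+* Polynomial A).comp
      (phiH 1) = RingHom.id _ := by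
  apply Polynomial.ringHom_ext <;> simp [phiH, ev0]

theorem sub_zero_C {A : Type*} [CommRing A] :
    (Polynomial.eval₂RingHom ev0 Polynomial.X : Polynomial (Polynomial A) →+* Polynomial A).comp
      Polynomial.C = ev0 := by
  ext <;> simp [ev0]

section
variable {A A' : Type*} [CommRing A] [CommRing A'] (g : A →+* A')

noncomputable def iotaH : Polynomial (Polynomial A) →+* Polynomial (Polynomial A') :=
  Polynomial.mapRingHom (Polynomial.mapRingHom g)

theorem iota_psi (a : A) : (iotaH g).comp (psiH a) = (psiH (g a)).comp (iotaH g) := by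
  apply Polynomial.ringHom_ext <;> simp [iotaH, psiH]

theorem iota_phi (a : A) : (iotaH g).comp (phiH a) = (phiH (g a)).comp (Polynomial.mapRingHom g) := by
  apply Polynomial.ringHom_ext <;> simp [iotaH, phiH]

theorem iota_C : (iotaH g).comp Polynomial.C = Polynomial.C.comp (Polynomial.mapRingHom g) := by
  apply Polynomial.ringHom_ext <;> simp [iotaH]

theorem iota_inj (hg : Function.Injective g) : Function.Injective (iotaH g) :=
  Polynomial.map_injective _ (Polynomial.map_injective _ hg)

theorem exists_clear (M : Submonoid A) [Algebra A A'] [IsLocalization M A']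
    (w : Polynomial (Polynomial A')) :
    ∃ s ∈ M, Polynomial.C (Polynomial.C (algebraMap A A' s)) * w ∈ (iotaH (algebraMap A A')).range := by
  have hC : ∀ s, Polynomial.C (Polynomial.C (algebraMap A A' s)) ∈ (iotaH (algebraMap A A')).range :=
    fun s => ⟨Polynomial.C (Polynomial.C s), by simp [iotaH]⟩
  have hadd : ∀ p q : Polynomial (Polynomial A'),
      (∃ s ∈ M, Polynomial.C (Polynomial.C (algebraMap A A' s)) * p ∈ (iotaH (algebraMap A A')).range) →
      (∃ s ∈ M, Polynomial.C (Polynomial.C (algebraMap A A' s)) * q ∈ (iotaH (algebraMap A A')).range) →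
      (∃ s ∈ M, Polynomial.C (Polynomial.C (algebraMap A A' s)) * (p + q) ∈ (iotaH (algebraMap A A')).range) := by
    rintro p q ⟨s, hs, hp⟩ ⟨t, ht, hq⟩
    refine ⟨s * t, mul_mem hs ht, ?_⟩
    have : Polynomial.C (Polynomial.C (algebraMap A A' (s * t))) * (p + q) =
      Polynomial.C (Polynomial.C (algebraMap A A' t)) * (Polynomial.C (Polynomial.C (algebraMap A A' s)) * p)
      + Polynomial.C (Polynomial.C (algebraMap A A' s)) * (Polynomial.C (Polynomial.C (algebraMap A A' t)) * q) := by
      simp only [map_mul]; ring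
    rw [this]
    exact add_mem (mul_mem (hC t) hp) (mul_mem (hC s) hq)
  induction w using Polynomial.induction_on' with
  | add p q hp hq => exact hadd p q hp hq
  | monomial n a =>
    induction a using Polynomial.induction_on' with
    | add p q hp hq => rw [map_add]; exact hadd _ _ hp hq
    | monomial k c =>
      obtain ⟨⟨a, s⟩, h⟩ := IsLocalization.surj M c
      refine ⟨s, s.2, ⟨Polynomial.monomial n (Polynomial.monomial k a), ?_⟩⟩
      simp only at h
      simp [iotaH, Polynomial.map_monomial, Polynomial.C_mul_monomial, ← h, mul_comm]

theorem exists_clear2 (M : Submonoid A) [Algebra A A'] [IsLocalization M A']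
    (w : Polynomial (Polynomial A')) (hw : w.coeff 0 = 1 ∨ w.coeff 0 = 0) :
    ∃ s ∈ M, psiH (algebraMap A A' s) w ∈ (iotaH (algebraMap A A')).range := by
  obtain ⟨s, hs, hr⟩ := exists_clear M w.divX
  refine ⟨s, hs, ?_⟩
  have h0 : Polynomial.C (w.coeff 0) ∈ (iotaH (algebraMap A A')).range := by
    rcases hw with h | h <;> rw [h]
    · rw [map_one]; exact one_mem _
    · rw [map_zero]; exact zero_mem _
  have e : psiH (algebraMap A A' s) w = Polynomial.X * psiH (algebraMap A A' s)
      (Polynomial.C (Polynomial.C (algebraMap A A' s)) * w.divX) + Polynomial.C (w.coeff 0) := by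
    conv_lhs => rw [← Polynomial.X_mul_divX_add w]
    have e1 : psiH (algebraMap A A' s) Polynomial.X =
      Polynomial.C (Polynomial.C (algebraMap A A' s)) * Polynomial.X := by simp [psiH]
    have e2 : ∀ c, psiH (algebraMap A A' s) (Polynomial.C c) = Polynomial.C c := by simp [psiH]
    simp only [map_add, map_mul, e1, e2]; ring
  rw [e]
  refine add_mem (mul_mem ⟨Polynomial.X, by simp [iotaH]⟩ ?_) h0
  obtain ⟨u, hu⟩ := hr
  refine ⟨psiH s u, ?_⟩
  rw [← hu]
  exact RingHom.congr_fun (iota_psi (algebraMap A A') s) u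

theorem exists_clear_mat (M : Submonoid A) [Algebra A A'] [IsLocalization M A']
    {m : Type*} [Fintype m] [DecidableEq m] (W : Matrix m m (Polynomial (Polynomial A')))
    (hW : W.map (Polynomial.evalRingHom 0) = 1) :
    ∃ s ∈ M, ∀ t, s ∣ t → ∃ W' : Matrix m m (Polynomial (Polynomial A)),
      W'.map (iotaH (algebraMap A A')) = W.map (psiH (algebraMap A A' t)) := by
  have h : ∀ i j, ∃ s ∈ M, psiH (algebraMap A A' s) (W i j) ∈ (iotaH (algebraMap A A')).range := by
    intro i j
    apply exists_clear2
    rw [Polynomial.coeff_zero_eq_eval_zero]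
    have := congrFun (congrFun hW i) j
    simp only [map_apply, Polynomial.coe_evalRingHom] at this
    rw [this, Matrix.one_apply]
    split_ifs <;> simp
  choose s hs hr using h
  refine ⟨∏ i, ∏ j, s i j, prod_mem fun i _ => prod_mem fun j _ => hs i j, ?_⟩
  intro t ht
  have : ∀ i j, ∃ w, iotaH (algebraMap A A') w = psiH (algebraMap A A' t) (W i j) := by
    intro i j
    have h1 : s i j ∣ t := ((Finset.dvd_prod_of_mem (fun j => s i j) (Finset.mem_univ j)).trans
      (Finset.dvd_prod_of_mem (fun i => ∏ j, s i j) (Finset.mem_univ i))).trans ht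
    obtain ⟨u, rfl⟩ := h1
    obtain ⟨w, hw⟩ := hr i j
    refine ⟨psiH u w, ?_⟩
    have e1 := RingHom.congr_fun (iota_psi (algebraMap A A') u) w
    have e2 := RingHom.congr_fun (psi_psi (algebraMap A A' u) (algebraMap A A' (s i j))) (W i j)
    simp only [RingHom.comp_apply] at e1 e2
    rw [e1, hw, e2, map_mul]
  choose W' hW' using this
  exact ⟨Matrix.of W', by ext1 i j; simp [hW']⟩

end

/-- unit-determinant matrices equal to one at y = 0 have determinant one -/
theorem det_one_of_eval {B : Type*} [CommRing B] [IsDomain B] {m : Type*} [Fintype m] [DecidableEq m]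
    (W : Matrix m m (Polynomial B)) (hW : IsUnit W.det)
    (h0 : W.map (Polynomial.evalRingHom 0) = 1) : W.det = 1 := by
  obtain ⟨c, hc, e⟩ := Polynomial.isUnit_iff.1 hW
  have h1 : Polynomial.evalRingHom 0 W.det = 1 := by
    rw [RingHom.map_det, RingHom.mapMatrix_apply, h0, det_one]
  rw [← e] at h1 ⊢
  simp at h1
  rw [h1, map_one]

theorem patch {A : Type*} [CommRing A] [IsDomain A] {m n : Type*} [Fintype m] [DecidableEq m]
    [Fintype n] [DecidableEq n] (F : Matrix m n (Polynomial A))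
    (h : ∀ (M : Ideal A) [M.IsMaximal],
      Eqv (F.map (Polynomial.mapRingHom (algebraMap A (Localization.AtPrime M))))
        ((F.map (Polynomial.mapRingHom (algebraMap A (Localization.AtPrime M)))).map ev0)) :
    Eqv F (F.map ev0) := by
  let J : Ideal A :=
    { carrier := {s | Eqv (F.map (phiH s)) (F.map Polynomial.C)}
      zero_mem' := by
        show Eqv _ _
        rw [phiH_zero]; exact Eqv.refl _
      add_mem' := by
        intro s t hs ht
        show Eqv _ _
        have h1 := Eqv.map (chiH s) (show Eqv _ _ from ht)
        rw [map_comp_mat, map_comp_mat, chi_phi, chi_C] at h1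
        exact h1.trans hs
      smul_mem' := by
        intro a s hs
        show Eqv _ _
        have h1 := Eqv.map (psiH a) (show Eqv _ _ from hs)
        rw [map_comp_mat, map_comp_mat, psi_phi, psi_C] at h1
        rwa [smul_eq_mul, mul_comm] }
  have hJ : J = ⊤ := by
    by_contra hne
    obtain ⟨M, hM, hle⟩ := Ideal.exists_le_maximal J hne
    have hex : ∃ s ∈ M.primeCompl, s ∈ J := by
      have hinj : Function.Injective (algebraMap A (Localization.AtPrime M)) :=
        IsLocalization.injective _ M.primeCompl_le_nonZeroDivisors
      have : IsDomain (Localization.AtPrime M) :=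
        IsLocalization.isDomain_localization M.primeCompl_le_nonZeroDivisors
      obtain ⟨U, V, hU, hV, he⟩ := h M
      set g := algebraMap A (Localization.AtPrime M) with hg
      set G := F.map (Polynomial.mapRingHom g) with hG
      have e0 : (phiH (1 : Localization.AtPrime M)).comp ev0 =
          (Polynomial.C).comp ev0 := by
        apply Polynomial.ringHom_ext <;> simp [phiH, ev0]
      have e1 : G.map (phiH 1) = U.map (phiH 1) * (G.map ev0).map Polynomial.C * V.map (phiH 1) := by
        conv_lhs => rw [he]
        rw [Matrix.map_mul, Matrix.map_mul, map_comp_mat _ _ G, map_comp_mat _ _ G, e0]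
      have e2 : G.map Polynomial.C = U.map Polynomial.C * (G.map ev0).map Polynomial.C *
          V.map Polynomial.C := by
        conv_lhs => rw [he]
        rw [Matrix.map_mul, Matrix.map_mul]
      have hUC : IsUnit (U.map (Polynomial.C : Polynomial (Localization.AtPrime M) →+* _)).det := by
        exact isUnit_map_det _ hU
      have hVC : IsUnit (V.map (Polynomial.C : Polynomial (Localization.AtPrime M) →+* _)).det := by
        exact isUnit_map_det _ hV
      have hUp : IsUnit (U.map (phiH 1)).det := by
        have := hU.map (phiH (1 : Localization.AtPrime M))
        rwa [RingHom.map_det] at this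
      have hVp : IsUnit (V.map (phiH 1)).det := by
        have := hV.map (phiH (1 : Localization.AtPrime M))
        rwa [RingHom.map_det] at this
      set U' := U.map (phiH 1) * (U.map Polynomial.C)⁻¹ with hU'
      set V' := (V.map Polynomial.C)⁻¹ * V.map (phiH 1) with hV'
      have e3 : G.map (phiH 1) = U' * G.map Polynomial.C * V' := by
        rw [e1, e2, hU', hV']
        simp only [Matrix.mul_assoc]
        rw [Matrix.mul_nonsing_inv_cancel_left _ _ hVC, Matrix.nonsing_inv_mul_cancel_left _ _ hUC]
      have hU'd : IsUnit U'.det := by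
        rw [hU', det_mul]; exact hUp.mul (isUnit_nonsing_inv_det _ hUC)
      have hV'd : IsUnit V'.det := by
        rw [hV', det_mul]; exact (isUnit_nonsing_inv_det _ hVC).mul hVp
      have ec : (Polynomial.evalRingHom (0 : Polynomial (Localization.AtPrime M))).comp (phiH 1) =
        (Polynomial.evalRingHom 0).comp Polynomial.C := by
        apply Polynomial.ringHom_ext <;> simp [phiH]
      have hU'0 : U'.map (Polynomial.evalRingHom 0) = 1 := by
        rw [hU', Matrix.map_mul, map_comp_mat, ec, ← map_comp_mat, ← Matrix.map_mul,
          mul_nonsing_inv _ hUC]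
        simp
      have hV'0 : V'.map (Polynomial.evalRingHom 0) = 1 := by
        rw [hV', Matrix.map_mul, map_comp_mat (phiH 1), ec, ← map_comp_mat, ← Matrix.map_mul,
          nonsing_inv_mul _ hVC]
        simp
      have hU'1 := det_one_of_eval _ hU'd hU'0
      have hV'1 := det_one_of_eval _ hV'd hV'0
      obtain ⟨s, hs, hsW⟩ := exists_clear_mat (A' := Localization.AtPrime M) M.primeCompl U' hU'0
      obtain ⟨t, ht, htW⟩ := exists_clear_mat (A' := Localization.AtPrime M) M.primeCompl V' hV'0
      obtain ⟨P, hP⟩ := hsW (s * t) (dvd_mul_right _ _)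
      obtain ⟨Q, hQ⟩ := htW (s * t) (dvd_mul_left _ _)
      refine ⟨s * t, mul_mem hs ht, ?_⟩
      have hii := iota_inj g hinj
      refine ⟨P, Q, ?_, ?_, ?_⟩
      · have : P.det = 1 := by
          apply hii
          rw [RingHom.map_det, RingHom.mapMatrix_apply, hP, ← RingHom.mapMatrix_apply,
            ← RingHom.map_det, hU'1]; simp
        rw [this]; exact isUnit_one
      · have : Q.det = 1 := by
          apply hii
          rw [RingHom.map_det, RingHom.mapMatrix_apply, hQ, ← RingHom.mapMatrix_apply,
            ← RingHom.map_det, hV'1]; simp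
        rw [this]; exact isUnit_one
      · apply Matrix.map_injective hii
        beta_reduce
        rw [Matrix.map_mul, Matrix.map_mul, hP, hQ, map_comp_mat, map_comp_mat, iota_phi, iota_C,
          ← map_comp_mat, ← map_comp_mat, ← hG]
        have e4 := congrArg (fun W => W.map (psiH (g (s * t)))) e3
        simp only [Matrix.map_mul] at e4
        rw [map_comp_mat _ _ G, map_comp_mat _ _ G, psi_phi, psi_C, one_mul] at e4
        exact e4
    obtain ⟨s, hs, hsJ⟩ := hex
    exact hs (hle hsJ)
  have h1 : (1 : A) ∈ J := by rw [hJ]; trivial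
  have h2 := Eqv.map (Polynomial.eval₂RingHom ev0 Polynomial.X : Polynomial (Polynomial A) →+* Polynomial A)
    (show Eqv (F.map (phiH 1)) (F.map Polynomial.C) from h1)
  rw [map_comp_mat, map_comp_mat, sub_zero_one, sub_zero_C] at h2
  have h3 : F.map (RingHom.id (Polynomial A)) = F := by ext1; rfl
  rwa [h3] at h2

end Patch

section HorrocksA

/-- quotient by a monic followed by dropping the constant term -/
noncomputable def divT {A : Type*} [CommRing A] (g : Polynomial A) (hg : g.Monic) :
    Polynomial A →ₗ[A] Polynomial A where
  toFun p := (p /ₘ g).divX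
  map_add' := by
    intro p q
    nontriviality A
    rw [← Polynomial.divX_add]
    congr 1
    refine (Polynomial.div_modByMonic_unique (p /ₘ g + q /ₘ g) (p %ₘ g + q %ₘ g) hg ⟨?_, ?_⟩).1
    · conv_rhs => rw [← Polynomial.modByMonic_add_div p g, ← Polynomial.modByMonic_add_div q g]
      ring
    · exact (Polynomial.degree_add_le _ _).trans_lt
        (max_lt (Polynomial.degree_modByMonic_lt _ hg) (Polynomial.degree_modByMonic_lt _ hg))
  map_smul' := by
    intro a p
    nontriviality A
    rw [RingHom.id_apply, Polynomial.smul_eq_C_mul, Polynomial.smul_eq_C_mul,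
      ← Polynomial.divX_C_mul]
    congr 1
    refine (Polynomial.div_modByMonic_unique (Polynomial.C a * (p /ₘ g))
      (Polynomial.C a * (p %ₘ g)) hg ⟨?_, ?_⟩).1
    · conv_rhs => rw [← Polynomial.modByMonic_add_div p g]
      ring
    · rw [← Polynomial.smul_eq_C_mul]
      exact (Polynomial.degree_smul_le _ _).trans_lt (Polynomial.degree_modByMonic_lt _ hg)

theorem divT_mul {A : Type*} [CommRing A] (g : Polynomial A) (hg : g.Monic) (p : Polynomial A) :
    divT g hg (g * p) = p.divX := by
  show (_ /ₘ g).divX = _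
  rw [Polynomial.mul_divByMonic_cancel_left _ hg]

theorem divT_eq_zero {A : Type*} [CommRing A] (g : Polynomial A) (hg : g.Monic) (p : Polynomial A)
    (h : divT g hg p = 0) : p.natDegree ≤ g.natDegree := by
  nontriviality A
  have h1 := Polynomial.divX_eq_zero_iff.1 (show (p /ₘ g).divX = 0 from h)
  rw [← Polynomial.modByMonic_add_div p g, h1]
  refine (Polynomial.natDegree_add_le _ _).trans (max_le ?_ ?_)
  · exact Polynomial.natDegree_le_natDegree (Polynomial.degree_modByMonic_lt _ hg).le
  · exact (Polynomial.natDegree_mul_C_le _ _)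

/-- reduction of polynomials modulo the maximal ideal -/
noncomputable def redH (A : Type*) [CommRing A] [IsLocalRing A] :
    Polynomial A →+* Polynomial (IsLocalRing.ResidueField A) :=
  Polynomial.mapRingHom (IsLocalRing.residue A)

theorem mem_msmul {A : Type*} [CommRing A] [IsLocalRing A] (p : Polynomial A) (h : redH A p = 0) :
    p ∈ (IsLocalRing.maximalIdeal A) • (⊤ : Submodule A (Polynomial A)) := by
  rw [Polynomial.as_sum_support p]
  refine Submodule.sum_mem _ fun i _ => ?_
  have : p.coeff i ∈ IsLocalRing.maximalIdeal A := by
    have h1 := congrArg (fun q => Polynomial.coeff q i) h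
    simp only [redH, Polynomial.coe_mapRingHom, Polynomial.coeff_map, Polynomial.coeff_zero] at h1
    exact (IsLocalRing.residue_eq_zero_iff _).1 h1
  rw [← mul_one (p.coeff i), ← smul_eq_mul, ← Polynomial.smul_monomial]
  exact Submodule.smul_mem_smul this trivial

theorem mem_msmul_pi {A : Type*} [CommRing A] [IsLocalRing A] {n : Type*} [Fintype n]
    [DecidableEq n] (v : n → Polynomial A) (h : ∀ j, redH A (v j) = 0) :
    v ∈ (IsLocalRing.maximalIdeal A) • (⊤ : Submodule A (n → Polynomial A)) := by
  have : v = ∑ j, LinearMap.single A (fun _ : n => Polynomial A) j (v j) := by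
    funext i
    simp [Finset.sum_apply, Pi.single_apply]
  rw [this]
  refine Submodule.sum_mem _ fun j _ => ?_
  have h1 := Submodule.mem_map_of_mem (f := LinearMap.single A (fun _ : n => Polynomial A) j)
    (mem_msmul _ (h j))
  rw [Submodule.map_smul''] at h1
  exact Submodule.smul_mono le_rfl le_top h1

theorem red_of_mem_msmul {A : Type*} [CommRing A] [IsLocalRing A] {n : Type*}
    (v : n → Polynomial A)
    (h : v ∈ (IsLocalRing.maximalIdeal A) • (⊤ : Submodule A (n → Polynomial A))) (j : n) :
    redH A (v j) = 0 := by
  refine Submodule.smul_induction_on h ?_ ?_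
  · intro r hr w _
    rw [Pi.smul_apply, Polynomial.smul_eq_C_mul, map_mul]
    have : redH A (Polynomial.C r) = 0 := by
      simp only [redH, Polynomial.coe_mapRingHom, Polynomial.map_C]
      rw [(IsLocalRing.residue_eq_zero_iff _).2 hr, map_zero]
    rw [this, zero_mul]
  · intro x y hx hy
    rw [Pi.add_apply, map_add, hx, hy, add_zero]

theorem redH_divX {A : Type*} [CommRing A] [IsLocalRing A] (p : Polynomial A) :
    redH A p.divX = (redH A p).divX := by
  ext i
  simp [redH, Polynomial.coeff_divX]

theorem redH_divT {A : Type*} [CommRing A] [IsLocalRing A] (g : Polynomial A) (hg : g.Monic)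
    (p : Polynomial A) (h : redH A p = 0) : redH A (divT g hg p) = 0 := by
  have h1 := mem_msmul p h
  have h2 := Submodule.mem_map_of_mem (f := divT g hg) h1
  rw [Submodule.map_smul''] at h2
  have h3 : (fun _ : Unit => divT g hg p) ∈ (IsLocalRing.maximalIdeal A) •
      (⊤ : Submodule A (Unit → Polynomial A)) := by
    have h4 := Submodule.mem_map_of_mem
      (f := LinearMap.single A (fun _ : Unit => Polynomial A) ()) h2
    rw [Submodule.map_smul''] at h4
    have h5 := Submodule.smul_mono (le_refl (IsLocalRing.maximalIdeal A))
      (le_top : _ ≤ (⊤ : Submodule A (Unit → Polynomial A))) h4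
    convert h5 using 1
    funext i; simp
  exact red_of_mem_msmul _ h3 ()

theorem LB_poly {A : Type*} [CommRing A] [IsLocalRing A] {n : Type*} [Fintype n]
    [DecidableEq n] (g g2 : Polynomial A) (hg : g.Monic) (hg2 : g2.Monic)
    (W W2 : Matrix n n (Polynomial A)) (hWW : W2 * W = (g * g2) • 1)
    (hred : W.map (redH A) = (redH A g) • 1) :
    ∃ Y : Matrix n n (Polynomial A), Y.map (redH A) = 1 ∧
      ∀ i j, ((Y * W) i j).natDegree ≤ g.natDegree := by
  classical
  let T : (n → Polynomial A) →ₗ[A] (n → Polynomial A) :=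
    { toFun := fun y j => divT g hg ((y ᵥ* W) j)
      map_add' := by
        intro x y; funext j
        rw [Matrix.add_vecMul, Pi.add_apply, map_add]; rfl
      map_smul' := by
        intro a y; funext j
        rw [Matrix.smul_vecMul, Pi.smul_apply, map_smul]; rfl }
  have hT : ∀ y j, T y j = divT g hg ((y ᵥ* W) j) := fun _ _ => rfl
  have hTred : ∀ y j, redH A (T y j) = redH A ((y j).divX) := by
    intro y j
    rw [hT, ← sub_eq_zero, ← map_sub, ← divT_mul g hg (y j), ← map_sub]
    apply redH_divT
    rw [map_sub, sub_eq_zero]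
    have h1 : redH A ((y ᵥ* W) j) = ((fun i => redH A (y i)) ᵥ* W.map (redH A)) j := by
      simp [Matrix.vecMul, dotProduct]
    rw [h1, hred, Matrix.vecMul_smul, Matrix.vecMul_one]
    simp
  set m := IsLocalRing.maximalIdeal A with hm
  have hsup : LinearMap.range T ⊔ m • (⊤ : Submodule A (n → Polynomial A)) = ⊤ := by
    rw [eq_top_iff]
    intro z _
    have e : z = T (fun j => Polynomial.X * z j) + (z - T (fun j => Polynomial.X * z j)) := by
      rw [add_sub_cancel]
    rw [e]
    refine Submodule.add_mem_sup ⟨_, rfl⟩ (mem_msmul_pi _ fun j => ?_)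
    rw [Pi.sub_apply, map_sub, hTred, sub_eq_zero]
    congr 1
    ext i; simp [Polynomial.coeff_divX]
  let Sp : Submodule A (n → Polynomial A) := Submodule.span A
    (Set.range fun ji : n × Fin g2.natDegree =>
      LinearMap.single A (fun _ : n => Polynomial A) ji.1 (Polynomial.X ^ (ji.2 : ℕ)))
  have hSpFG : Sp.FG := ⟨Finset.univ.image fun ji : n × Fin g2.natDegree =>
      LinearMap.single A (fun _ : n => Polynomial A) ji.1 (Polynomial.X ^ (ji.2 : ℕ)), by
        simp [Sp]⟩
  have hRS : LinearMap.range T ⊔ Sp = ⊤ := by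
    rw [eq_top_iff]
    intro z _
    have e : z = (fun j => g2 * (z j /ₘ g2)) + fun j => z j %ₘ g2 := by
      funext j
      rw [Pi.add_apply, add_comm, Polynomial.modByMonic_add_div (z j) g2]
    rw [e]
    refine Submodule.add_mem_sup ⟨(fun j => Polynomial.X * (z j /ₘ g2)) ᵥ* W2, ?_⟩ ?_
    · funext j
      rw [hT, Matrix.vecMul_vecMul, hWW, Matrix.vecMul_smul, Matrix.vecMul_one, Pi.smul_apply,
        smul_eq_mul]
      rw [show g * g2 * (Polynomial.X * (z j /ₘ g2)) = g * (Polynomial.X * (g2 * (z j /ₘ g2))) by ring,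
        divT_mul]
      ext i; simp [Polynomial.coeff_divX]
    · have e2 : (fun j => z j %ₘ g2) = ∑ j, LinearMap.single A (fun _ : n => Polynomial A) j
          (z j %ₘ g2) := by
        funext i
        simp [Finset.sum_apply, Pi.single_apply]
      rw [e2]
      refine Submodule.sum_mem _ fun j _ => ?_
      by_cases ht : g2.natDegree = 0
      · have : g2 = 1 := (Polynomial.Monic.natDegree_eq_zero hg2).1 ht
        rw [this, Polynomial.modByMonic_one, map_zero]; exact zero_mem _
      rw [Polynomial.as_sum_range' (z j %ₘ g2) g2.natDegree
        (Polynomial.natDegree_modByMonic_lt _ hg2 (fun h => ht (by rw [h]; simp))), map_sum]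
      refine Submodule.sum_mem _ fun i hi => ?_
      rw [← mul_one ((z j %ₘ g2).coeff i), ← smul_eq_mul, ← Polynomial.smul_monomial, map_smul]
      refine Submodule.smul_mem _ _ (Submodule.subset_span ⟨(j, ⟨i, Finset.mem_range.1 hi⟩), ?_⟩)
      simp [Polynomial.X_pow_eq_monomial]
  have hle : Sp ≤ LinearMap.range T := by
    refine Submodule.le_of_le_smul_of_le_jacobson_bot (I := m) hSpFG
      (IsLocalRing.jacobson_eq_maximalIdeal _ bot_ne_top).ge ?_
    calc Sp ≤ ⊤ := le_top
      _ = LinearMap.range T ⊔ m • (LinearMap.range T ⊔ Sp) := by rw [hRS, hsup]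
      _ ≤ LinearMap.range T ⊔ m • Sp := by
        rw [Submodule.smul_sup]
        refine sup_le le_sup_left (sup_le (Submodule.smul_le_right.trans le_sup_left) le_sup_right)
  have hsurj : LinearMap.range T = ⊤ := by rw [← hRS, sup_eq_left.2 hle]
  have hδ : ∀ i : n, ∃ δ ∈ m • (⊤ : Submodule A (n → Polynomial A)),
      T δ = T (Pi.single i 1) := by
    intro i
    have h1 : T (Pi.single i 1) ∈ m • (⊤ : Submodule A (n → Polynomial A)) := by
      refine mem_msmul_pi _ fun j => ?_
      rw [hTred, Pi.single_apply]
      split_ifs <;> simp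
    rw [← hsurj, ← Submodule.map_top, ← Submodule.map_smul''] at h1
    exact h1
  choose δ hδm hδT using hδ
  refine ⟨Matrix.of fun i => Pi.single i 1 - δ i, ?_, ?_⟩
  · ext1 i j
    rw [map_apply, of_apply, Pi.sub_apply, map_sub, red_of_mem_msmul _ (hδm i), sub_zero,
      Matrix.one_apply, Pi.single_apply]
    simp only [eq_comm (a := j)]
    split_ifs <;> simp
  · intro i j
    apply divT_eq_zero g hg
    have h1 : T (Pi.single i 1 - δ i) = 0 := by rw [map_sub, hδT, sub_self]
    exact congrFun h1 j

end HorrocksA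

section HorrocksB

/-- monic polynomials -/
def Smon (A : Type*) [CommRing A] : Submonoid (Polynomial A) where
  carrier := {p | p.Monic}
  one_mem' := Polynomial.monic_one
  mul_mem' := fun h h' => Polynomial.Monic.mul h h'

theorem mem_Smon {A : Type*} [CommRing A] {p : Polynomial A} : p ∈ Smon A ↔ p.Monic := Iff.rfl

/-- localization at the monic polynomials -/
abbrev CM (A : Type*) [CommRing A] := Localization (Smon A)

theorem Smon_le {A : Type*} [CommRing A] : Smon A ≤ nonZeroDivisors (Polynomial A) :=
  fun _ hp => Polynomial.Monic.mem_nonZeroDivisors hp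

theorem algC_inj {A : Type*} [CommRing A] :
    Function.Injective (algebraMap (Polynomial A) (CM A)) :=
  IsLocalization.injective _ Smon_le

variable {A : Type*} [CommRing A] [IsLocalRing A]

/-- rational functions over the residue field -/
abbrev kap (A : Type*) [CommRing A] [IsLocalRing A] :=
  FractionRing (Polynomial (IsLocalRing.ResidueField A))

theorem redH_monic {p : Polynomial A} (h : p.Monic) : (redH A p).Monic := h.map _

/-- A[x] → k(x) -/
noncomputable def rkap (A : Type*) [CommRing A] [IsLocalRing A] : Polynomial A →+* kap A :=
  (algebraMap (Polynomial (IsLocalRing.ResidueField A)) (kap A)).comp (redH A)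

theorem algkap_inj : Function.Injective
    (algebraMap (Polynomial (IsLocalRing.ResidueField A)) (kap A)) :=
  IsFractionRing.injective _ _

theorem rkap_unit (y : Smon A) : IsUnit (rkap A (y : Polynomial A)) := by
  have h : redH A (y : Polynomial A) ≠ 0 := (redH_monic y.2).ne_zero
  rw [isUnit_iff_ne_zero]
  intro h0
  exact h (algkap_inj (by rw [map_zero]; exact h0))

/-- residue map -/
noncomputable def resC (A : Type*) [CommRing A] [IsLocalRing A] : CM A →+* kap A :=
  IsLocalization.lift (M := Smon A) (g := rkap A) rkap_unit

theorem resC_alg (p : Polynomial A) :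
    resC A (algebraMap _ (CM A) p) = algebraMap _ (kap A) (redH A p) :=
  IsLocalization.lift_eq _ _

/-- fractions of nonpositive degree -/
def CInf (A : Type*) [CommRing A] : Subring (CM A) where
  carrier := {c | ∃ p g : Polynomial A, g.Monic ∧ p.natDegree ≤ g.natDegree ∧
    c * algebraMap _ (CM A) g = algebraMap _ (CM A) p}
  one_mem' := ⟨1, 1, Polynomial.monic_one, le_rfl, by simp⟩
  zero_mem' := ⟨0, 1, Polynomial.monic_one, by simp, by simp⟩
  neg_mem' := by
    rintro c ⟨p, g, hg, hd, h⟩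
    exact ⟨-p, g, hg, by simpa using hd, by rw [map_neg, ← h]; ring⟩
  mul_mem' := by
    rintro c d ⟨p, g, hg, hd, h⟩ ⟨p', g', hg', hd', h'⟩
    refine ⟨p * p', g * g', hg.mul hg', ?_, ?_⟩
    · rw [hg.natDegree_mul hg']
      exact Polynomial.natDegree_mul_le.trans (add_le_add hd hd')
    · rw [map_mul, map_mul, ← h, ← h']; ring
  add_mem' := by
    rintro c d ⟨p, g, hg, hd, h⟩ ⟨p', g', hg', hd', h'⟩
    refine ⟨p * g' + p' * g, g * g', hg.mul hg', ?_, ?_⟩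
    · rw [hg.natDegree_mul hg']
      refine (Polynomial.natDegree_add_le _ _).trans (max_le ?_ ?_)
      · exact Polynomial.natDegree_mul_le.trans (add_le_add hd le_rfl)
      · rw [add_comm]
        exact Polynomial.natDegree_mul_le.trans (add_le_add hd' le_rfl)
    · simp only [map_mul, map_add]; rw [← h, ← h']; ring

theorem CInf_alg {A : Type*} [CommRing A] {p : Polynomial A}
    (h : algebraMap _ (CM A) p ∈ CInf A) : ∃ a, p = Polynomial.C a := by
  nontriviality A
  obtain ⟨q, g, hg, hd, he⟩ := h
  rw [← map_mul] at he
  have he := algC_inj he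
  have : p.natDegree = 0 := by
    by_cases hp : p = 0
    · simp [hp]
    have h1 := hg.natDegree_mul' hp
    rw [mul_comm, he] at h1
    omega
  exact ⟨_, Polynomial.eq_C_of_natDegree_eq_zero this⟩

theorem common_denom {A : Type*} [CommRing A] {n : Type*} [Finite n] (W : Matrix n n (CM A)) :
    ∃ (g : Polynomial A) (W' : Matrix n n (Polynomial A)), g.Monic ∧
      W'.map (algebraMap _ (CM A)) = (algebraMap _ (CM A) g) • W := by
  obtain ⟨b, hb⟩ := IsLocalization.exist_integer_multiples_of_finite (Smon A)
    (fun ij : n × n => W ij.1 ij.2)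
  choose w hw using hb
  refine ⟨b, Matrix.of fun i j => w (i, j), b.2, ?_⟩
  ext1 i j
  rw [map_apply, of_apply, hw, Matrix.smul_apply, Algebra.smul_def, smul_eq_mul]

theorem det_mem_subring {R : Type*} [CommRing R] {n : Type*} [Fintype n] [DecidableEq n]
    (S : Subring R) (M : Matrix n n R) (h : ∀ i j, M i j ∈ S) : M.det ∈ S := by
  rw [det_apply]
  refine S.sum_mem fun σ _ => ?_
  rw [Units.smul_def]
  exact S.zsmul_mem (S.prod_mem fun i _ => h _ _) _

theorem LB {A : Type*} [CommRing A] [IsDomain A] [IsLocalRing A] {n : Type*} [Fintype n]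
    [DecidableEq n] (W : Matrix n n (CM A)) (hW : IsUnit W.det) (hres : W.map (resC A) = 1) :
    ∃ Y : Matrix n n (Polynomial A), IsUnit Y.det ∧
      ∀ i j, (Y.map (algebraMap _ (CM A)) * W) i j ∈ CInf A := by
  obtain ⟨g, W', hg, hW'⟩ := common_denom W
  obtain ⟨g2, W2, hg2, hW2⟩ := common_denom W⁻¹
  have hWW : W2 * W' = (g * g2) • 1 := by
    apply Matrix.map_injective (algC_inj (A := A))
    beta_reduce
    rw [Matrix.map_mul, hW', hW2, Matrix.smul_mul, Matrix.mul_smul, nonsing_inv_mul _ hW]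
    ext1 i j
    simp only [Matrix.map_apply, Matrix.smul_apply, smul_eq_mul]
    by_cases hij : i = j
    · subst hij; simp only [Matrix.one_apply_eq, map_mul, map_one]; ring
    · simp only [Matrix.one_apply_ne hij, map_mul, map_zero]; ring
  have hred : W'.map (redH A) = redH A g • 1 := by
    apply Matrix.map_injective (algkap_inj (A := A))
    beta_reduce
    have h1 := congrArg (fun M => M.map (resC A)) hW'
    ext1 i j
    have h2 := congrFun (congrFun h1 i) j
    have h3 := congrFun (congrFun hres i) j
    simp only [map_apply, resC_alg, Matrix.smul_apply, smul_eq_mul, map_mul] at h2 h3 ⊢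
    rw [h2, h3]
    simp [Matrix.one_apply, apply_ite (algebraMap _ (kap A))]
  obtain ⟨Y, hY1, hYd⟩ := LB_poly g g2 hg hg2 W' W2 hWW hred
  have hZ : ∀ i j, (Y.map (algebraMap _ (CM A)) * W) i j ∈ CInf A := by
    intro i j
    refine ⟨(Y * W') i j, g, hg, hYd i j, ?_⟩
    have h1 : (Y * W').map (algebraMap _ (CM A)) =
        (algebraMap _ (CM A) g) • (Y.map (algebraMap _ (CM A)) * W) := by
      rw [Matrix.map_mul, hW', Matrix.mul_smul]
    have h2 := congrFun (congrFun h1 i) j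
    rw [map_apply, Matrix.smul_apply, smul_eq_mul] at h2
    rw [h2, mul_comm]
  refine ⟨Y, ?_, hZ⟩
  -- the determinant
  obtain ⟨p, g', hg', hd, he⟩ := det_mem_subring _ _ hZ
  have hredY : redH A Y.det = 1 := by
    rw [RingHom.map_det, RingHom.mapMatrix_apply, hY1, det_one]
  have hresZ : resC A ((Y.map (algebraMap _ (CM A)) * W).det) = 1 := by
    rw [det_mul, map_mul, RingHom.map_det (resC A) W, RingHom.mapMatrix_apply, hres, det_one, mul_one,
      ← RingHom.mapMatrix_apply, ← RingHom.map_det, resC_alg, hredY, map_one]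
  have hpg : redH A p = redH A g' := by
    apply algkap_inj
    rw [← resC_alg, ← resC_alg, ← he, map_mul, hresZ, one_mul]
  have hlc : IsUnit (p.coeff g'.natDegree) := by
    have h1 := congrArg (fun q => Polynomial.coeff q g'.natDegree) hpg
    simp only [redH, Polynomial.coe_mapRingHom, Polynomial.coeff_map] at h1
    rw [hg'.coeff_natDegree, map_one] at h1
    have : IsUnit (IsLocalRing.residue A (p.coeff g'.natDegree)) := by rw [h1]; exact isUnit_one
    exact isUnit_of_map_unit _ _ this
  have hpu : IsUnit (algebraMap _ (CM A) p) := by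
    obtain ⟨u, hu⟩ := hlc
    have hmon : (Polynomial.C (↑u⁻¹ : A) * p).Monic := by
      refine Polynomial.monic_of_natDegree_le_of_coeff_eq_one g'.natDegree
        ((Polynomial.natDegree_C_mul_le _ _).trans hd) ?_
      rw [Polynomial.coeff_C_mul, ← hu]; simp
    have h1 : IsUnit (algebraMap _ (CM A) (Polynomial.C (↑u⁻¹ : A) * p)) :=
      IsLocalization.map_units (CM A) (⟨_, hmon⟩ : Smon A)
    rw [map_mul, IsUnit.mul_iff] at h1
    exact h1.2
  have hYu : IsUnit (algebraMap _ (CM A) Y.det) := by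
    rw [← he, det_mul, IsUnit.mul_iff, IsUnit.mul_iff] at hpu
    have := hpu.1.1
    rwa [← RingHom.mapMatrix_apply, ← RingHom.map_det] at this
  obtain ⟨c, hc⟩ := hYu.exists_right_inv
  obtain ⟨⟨w, h⟩, hwh⟩ := IsLocalization.surj (Smon A) c
  have hmul : Y.det * w = h := by
    apply algC_inj
    rw [map_mul]
    simp only at hwh
    rw [← hwh, ← mul_assoc, hc, one_mul]
  have hl : IsUnit Y.det.leadingCoeff := by
    have h1 := congrArg Polynomial.leadingCoeff hmul
    rw [Polynomial.leadingCoeff_mul] at h1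
    have h2 : (h : Polynomial A).leadingCoeff = 1 := h.2
    rw [h2] at h1
    exact IsUnit.of_mul_eq_one _ h1
  have hdeg : Y.det.natDegree = 0 := by
    have h1 : (Y.det.map (IsLocalRing.residue A)).natDegree = Y.det.natDegree := by
      apply Polynomial.natDegree_map_of_leadingCoeff_ne_zero
      exact (hl.map _).ne_zero
    rw [← h1]
    have : Y.det.map (IsLocalRing.residue A) = 1 := hredY
    rw [this]; simp
  rw [Polynomial.eq_C_of_natDegree_eq_zero hdeg]
  rw [Polynomial.leadingCoeff, hdeg] at hl
  exact hl.map _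

end HorrocksB

section ALift

theorem GL_lift' {B D : Type*} [CommRing B] [EuclideanDomain D] (q : B →+* D)
    (hq : Function.Surjective q) (hu : ∀ d : D, IsUnit d → ∃ b : B, IsUnit b ∧ q b = d)
    {n : Type*} [Fintype n] [DecidableEq n] (M : Matrix n n D) (hM : IsUnit M.det) :
      ∃ M' : Matrix n n B, IsUnit M'.det ∧ M'.map q = M := by
  let e := Fintype.equivFin n
  obtain ⟨M', h1, h2⟩ := GL_lift q hq hu _ (M.submatrix e.symm e.symm)
    (by rwa [det_submatrix_equiv_self])
  refine ⟨M'.submatrix e e, by rwa [det_submatrix_equiv_self], ?_⟩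
  rw [← Matrix.submatrix_map, h2]
  ext i j; simp

variable {N : ℕ} (b : Fin N → Fin N)

/-- block upper triangular matrix with prescribed diagonal blocks -/
def asm {C : Type*} [CommRing C] (L : ∀ a, Matrix {i // b i = a} {i // b i = a} C)
    (up : Fin N → Fin N → C) : Matrix (Fin N) (Fin N) C :=
  Matrix.of fun i j => if h : b j = b i then L (b i) ⟨i, rfl⟩ ⟨j, h⟩ else
    if b i < b j then up i j else 0

variable {b}

theorem asm_eq {C : Type*} [CommRing C] (L : ∀ a, Matrix {i // b i = a} {i // b i = a} C)
    (up : Fin N → Fin N → C) (a : Fin N) (i j : Fin N) (hi : b i = a) (hj : b j = a) :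
    asm b L up i j = L a ⟨i, hi⟩ ⟨j, hj⟩ := by
  subst hi
  simp [asm, hj]

theorem asm_lt {C : Type*} [CommRing C] (L : ∀ a, Matrix {i // b i = a} {i // b i = a} C)
    (up : Fin N → Fin N → C) (i j : Fin N) (h : b i < b j) :
    asm b L up i j = up i j := by
  simp [asm, h, h.ne']

theorem asm_gt {C : Type*} [CommRing C] (L : ∀ a, Matrix {i // b i = a} {i // b i = a} C)
    (up : Fin N → Fin N → C) (i j : Fin N) (h : b j < b i) :
    asm b L up i j = 0 := by
  simp [asm, h.ne, h.not_gt]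

theorem asm_det {C : Type*} [CommRing C] (L : ∀ a, Matrix {i // b i = a} {i // b i = a} C)
    (up : Fin N → Fin N → C) (hL : ∀ a, IsUnit (L a).det) : IsUnit (asm b L up).det := by
  have h1 : (asm b L up).BlockTriangular b := fun i j h => asm_gt L up i j h
  rw [h1.det, IsUnit.prod_iff]
  intro a _
  have : (asm b L up).toSquareBlock b a = L a := by
    ext i j
    exact asm_eq L up a i j i.2 j.2
  rw [this]; exact hL a

theorem block_det {κ : Type*} [CommRing κ] (M : Matrix (Fin N) (Fin N) κ) (hM : IsUnit M.det)
    (h : ∀ i j, b j < b i → M i j = 0) (a : Fin N) : IsUnit (M.toSquareBlock b a).det := by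
  have h1 : M.BlockTriangular b := fun i j h' => h i j h'
  by_cases ha : a ∈ Finset.univ.image b
  · rw [h1.det, IsUnit.prod_iff] at hM
    exact hM a ha
  · have : IsEmpty {i // b i = a} := ⟨fun i => ha (by rw [← i.2]; simp)⟩
    rw [det_isEmpty]; exact isUnit_one

theorem A_lift {C κ : Type*} [CommRing C] [Field κ] (res : C →+* κ)
    (hs : Function.Surjective res) (hu : ∀ d : κ, IsUnit d → ∃ c : C, IsUnit c ∧ res c = d)
    (s : Fin N → C) (N1 : ∀ i j, b i = b j → s i = s j)
    (N2 : ∀ i j, b i < b j → ∃ ρ, res ρ = 0 ∧ s j = s i * ρ)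
    (σ τ : Matrix (Fin N) (Fin N) κ) (hσ : IsUnit σ.det) (hτ : IsUnit τ.det)
    (h1 : ∀ i j, b j < b i → σ i j = 0) (h2 : ∀ i j, b i < b j → τ i j = 0)
    (h3 : ∀ i j, b i = b j → s i ≠ 0 → σ i j = τ i j) :
    ∃ σ' τ' : Matrix (Fin N) (Fin N) C, IsUnit σ'.det ∧ IsUnit τ'.det ∧
      σ' * diagonal s = diagonal s * τ' ∧ σ'.map res = σ ∧ τ'.map res = τ := by
  classical
  have N2' : ∀ i j, ∃ ρ, b i < b j → res ρ = 0 ∧ s j = s i * ρ := by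
    intro i j
    by_cases h : b i < b j
    · obtain ⟨ρ, hρ⟩ := N2 i j h
      exact ⟨ρ, fun _ => hρ⟩
    · exact ⟨0, fun h' => absurd h' h⟩
  choose ρ hρ using N2'
  choose lift hlift using hs
  have hτt : ∀ a, IsUnit (τ.toSquareBlock b a).det := by
    intro a
    have := block_det (b := b) τᵀ (by rwa [det_transpose]) (fun i j h => h2 j i h) a
    rw [← det_transpose]
    exact this
  have hL : ∀ a, ∃ L L' : Matrix {i // b i = a} {i // b i = a} C,
      IsUnit L.det ∧ IsUnit L'.det ∧ L.map res = σ.toSquareBlock b a ∧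
      L'.map res = τ.toSquareBlock b a ∧ ∀ i j, L i j * s j = s i * L' i j := by
    intro a
    obtain ⟨L, hL, hL'⟩ := GL_lift' res (fun x => ⟨lift x, hlift x⟩) hu _ (block_det σ hσ h1 a)
    obtain ⟨L2, hL2, hL2'⟩ := GL_lift' res (fun x => ⟨lift x, hlift x⟩) hu _ (hτt a)
    by_cases h0 : ∃ i, b i = a ∧ s i ≠ 0
    · obtain ⟨i0, hi0, hs0⟩ := h0
      refine ⟨L, L, hL, hL, hL', ?_, ?_⟩
      · rw [hL']
        ext i j
        refine h3 i j (i.2.trans j.2.symm) ?_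
        rwa [N1 i i0 (i.2.trans hi0.symm)]
      · intro i j
        rw [N1 j i (j.2.trans i.2.symm), mul_comm]
    · push Not at h0
      refine ⟨L, L2, hL, hL2, hL', hL2', fun i j => ?_⟩
      rw [h0 i i.2, h0 j j.2]; simp
  choose L L' hLd hLd' hLm hLm' hLs using hL
  set σ1 := asm b L (fun i j => lift (σ i j)) with hσ1
  set τ1 := asm b L' (fun i j => ρ i j * lift (σ i j)) with hτ1
  have hσ1d : IsUnit σ1.det := asm_det _ _ hLd
  have hτ1d : IsUnit τ1.det := asm_det _ _ hLd'
  have e1 : σ1 * diagonal s = diagonal s * τ1 := by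
    ext i j
    rw [mul_diagonal, diagonal_mul]
    rcases lt_trichotomy (b i) (b j) with h | h | h
    · rw [hσ1, hτ1, asm_lt _ _ _ _ h, asm_lt _ _ _ _ h, (hρ i j h).2]; ring
    · rw [hσ1, hτ1, asm_eq _ _ (b i) i j rfl h.symm, asm_eq _ _ (b i) i j rfl h.symm]
      exact hLs (b i) ⟨i, rfl⟩ ⟨j, h.symm⟩
    · rw [hσ1, hτ1, asm_gt _ _ _ _ h, asm_gt _ _ _ _ h]; simp
  have r1 : σ1.map res = σ := by
    ext i j
    rw [map_apply]
    rcases lt_trichotomy (b i) (b j) with h | h | h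
    · rw [hσ1, asm_lt _ _ _ _ h, hlift]
    · rw [hσ1, asm_eq _ _ (b i) i j rfl h.symm]
      exact congrFun (congrFun (hLm (b i)) ⟨i, rfl⟩) ⟨j, h.symm⟩
    · rw [hσ1, asm_gt _ _ _ _ h, map_zero, h1 _ _ h]
  set D := τ1.map res with hD
  have hDd : IsUnit D.det := isUnit_map_det res hτ1d
  have D1 : ∀ i j, b i = b j → D i j = τ i j := by
    intro i j h
    rw [hD, map_apply, hτ1, asm_eq _ _ (b i) i j rfl h.symm]
    exact congrFun (congrFun (hLm' (b i)) ⟨i, rfl⟩) ⟨j, h.symm⟩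
  have D2 : ∀ i j, b i ≠ b j → D i j = 0 := by
    intro i j h
    rw [hD, map_apply, hτ1]
    rcases lt_or_gt_of_ne h with h | h
    · rw [asm_lt _ _ _ _ h, map_mul, (hρ i j h).1, zero_mul]
    · rw [asm_gt _ _ _ _ h, map_zero]
  have D3 : ∀ i j, b i ≠ b j → D⁻¹ i j = 0 := by
    intro i j h
    have : Invertible D := invertibleOfIsUnitDet D hDd
    have hu : D.BlockTriangular b := fun i j h => D2 i j h.ne'
    have hv : Dᵀ.BlockTriangular b := fun i j h => D2 j i h.ne
    have : Invertible Dᵀ := invertibleOfIsUnitDet Dᵀ (by rwa [det_transpose])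
    rcases lt_or_gt_of_ne h with h | h
    · have h5 := blockTriangular_inv_of_blockTriangular hv h
      rwa [← transpose_nonsing_inv, transpose_apply] at h5
    · exact blockTriangular_inv_of_blockTriangular hu h
  set T := D⁻¹ * τ with hT
  have T1 : ∀ i j, b i < b j → T i j = 0 := by
    intro i j h
    rw [hT, mul_apply]
    refine Finset.sum_eq_zero fun k _ => ?_
    by_cases hk : b i = b k
    · rw [h2 k j (hk ▸ h), mul_zero]
    · rw [D3 i k hk, zero_mul]
  have T2 : ∀ i j, b i = b j → T i j = (1 : Matrix _ _ κ) i j := by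
    intro i j h
    rw [hT, ← nonsing_inv_mul D hDd, mul_apply, mul_apply]
    refine Finset.sum_congr rfl fun k _ => ?_
    by_cases hk : b i = b k
    · rw [D1 k j (hk.symm.trans h)]
    · rw [D3 i k hk, zero_mul, zero_mul]
  set τ2 := (asm b (fun _ => (1 : Matrix _ _ C)) (fun i j => lift (T j i)))ᵀ with hτ2
  set σ2 := (asm b (fun _ => (1 : Matrix _ _ C)) (fun i j => ρ i j * lift (T j i)))ᵀ with hσ2
  have hσ2d : IsUnit σ2.det := by rw [hσ2, det_transpose]; exact asm_det _ _ (by simp)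
  have hτ2d : IsUnit τ2.det := by rw [hτ2, det_transpose]; exact asm_det _ _ (by simp)
  have one_sub : ∀ i j (h : b j = b i), (1 : Matrix {t // b t = b i} {t // b t = b i} C)
      ⟨i, rfl⟩ ⟨j, h⟩ = (1 : Matrix _ _ C) i j := by
    intro i j h
    simp [Matrix.one_apply]
  have e2 : σ2 * diagonal s = diagonal s * τ2 := by
    ext i j
    rw [mul_diagonal, diagonal_mul, hσ2, hτ2, transpose_apply, transpose_apply]
    rcases lt_trichotomy (b j) (b i) with h | h | h
    · rw [asm_lt _ _ _ _ h, asm_lt _ _ _ _ h, (hρ j i h).2]; ring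
    · rw [asm_eq _ _ (b j) j i rfl h.symm, asm_eq _ _ (b j) j i rfl h.symm, N1 i j h.symm, mul_comm]
    · rw [asm_gt _ _ _ _ h, asm_gt _ _ _ _ h]; simp
  have r2 : σ2.map res = 1 := by
    ext i j
    rw [map_apply, hσ2, transpose_apply]
    rcases lt_trichotomy (b j) (b i) with h | h | h
    · rw [asm_lt _ _ _ _ h, map_mul, (hρ j i h).1, zero_mul, one_apply_ne (by rintro rfl; exact h.ne rfl)]
    · rw [asm_eq _ _ (b j) j i rfl h.symm, one_sub j i h.symm]
      simp [Matrix.one_apply, apply_ite res, eq_comm]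
    · rw [asm_gt _ _ _ _ h, map_zero, one_apply_ne (by rintro rfl; exact h.ne rfl)]
  have r2' : τ2.map res = T := by
    ext i j
    rw [map_apply, hτ2, transpose_apply]
    rcases lt_trichotomy (b j) (b i) with h | h | h
    · rw [asm_lt _ _ _ _ h, hlift]
    · rw [asm_eq _ _ (b j) j i rfl h.symm, one_sub j i h.symm, T2 i j h.symm]
      simp [Matrix.one_apply, apply_ite res, eq_comm]
    · rw [asm_gt _ _ _ _ h, map_zero, T1 i j h]
  refine ⟨σ1 * σ2, τ1 * τ2, by rw [det_mul]; exact hσ1d.mul hσ2d,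
    by rw [det_mul]; exact hτ1d.mul hτ2d, ?_, ?_, ?_⟩
  · rw [Matrix.mul_assoc, e2, ← Matrix.mul_assoc, e1, Matrix.mul_assoc]
  · rw [Matrix.map_mul, r1, r2, Matrix.mul_one]
  · rw [Matrix.map_mul, r2', hT, ← Matrix.mul_assoc, ← hD, mul_nonsing_inv _ hDd, Matrix.one_mul]

end ALift

section HorrocksC

set_option linter.unusedSectionVars false

variable (A : Type*) [CommRing A] [IsDomain A] [IsLocalRing A]

/-- polynomials whose reduction is a unit -/
noncomputable def SBu : Submonoid (Polynomial A) := (IsUnit.submonoid _).comap (redH A)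

/-- polynomials whose reduction is nonzero -/
noncomputable def SCu : Submonoid (Polynomial A) := (nonZeroDivisors _).comap (redH A)

/-- localization at SBu -/
abbrev LBu := Localization (SBu A)
/-- localization at SCu -/
abbrev LCu := Localization (SCu A)

variable {A}

theorem mem_SBu {p : Polynomial A} : p ∈ SBu A ↔ IsUnit (redH A p) := Iff.rfl
theorem mem_SCu {p : Polynomial A} : p ∈ SCu A ↔ redH A p ≠ 0 :=
  mem_nonZeroDivisors_iff_ne_zero

theorem SCu_le : SCu A ≤ nonZeroDivisors (Polynomial A) := by
  intro p hp
  rw [mem_nonZeroDivisors_iff_ne_zero]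
  rintro rfl
  exact mem_SCu.1 hp (map_zero _)

theorem SBu_le_SCu : SBu A ≤ SCu A := fun _ hp => mem_SCu.2 (IsUnit.ne_zero hp)

theorem Smon_le_SCu : Smon A ≤ SCu A := fun _ hp => mem_SCu.2 (redH_monic hp).ne_zero

instance : IsDomain (LBu A) := IsLocalization.isDomain_localization (SBu_le_SCu.trans SCu_le)
instance : IsDomain (LCu A) := IsLocalization.isDomain_localization SCu_le

variable (A)

/-- residue map of LBu -/
noncomputable def qB : LBu A →+* Polynomial (IsLocalRing.ResidueField A) :=
  IsLocalization.lift (M := SBu A) (g := redH A) (fun y => y.2)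

/-- LBu → LCu -/
noncomputable def iB : LBu A →+* LCu A :=
  IsLocalization.lift (M := SBu A) (g := algebraMap (Polynomial A) (LCu A))
    (fun y => IsLocalization.map_units (LCu A) (⟨y, SBu_le_SCu y.2⟩ : SCu A))

/-- CM → LCu -/
noncomputable def iC : CM A →+* LCu A :=
  IsLocalization.lift (M := Smon A) (g := algebraMap (Polynomial A) (LCu A))
    (fun y => IsLocalization.map_units (LCu A) (⟨y, Smon_le_SCu y.2⟩ : SCu A))

/-- residue map of LCu -/
noncomputable def resL : LCu A →+* kap A :=
  IsLocalization.lift (M := SCu A) (g := rkap A) (fun y => by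
    rw [isUnit_iff_ne_zero]
    intro h0
    exact mem_SCu.1 y.2 (algkap_inj (by rw [map_zero]; exact h0)))

variable {A}

theorem qB_alg (p : Polynomial A) : qB A (algebraMap _ _ p) = redH A p :=
  IsLocalization.lift_eq _ _
theorem iB_alg (p : Polynomial A) : iB A (algebraMap _ _ p) = algebraMap _ _ p :=
  IsLocalization.lift_eq _ _
theorem iC_alg (p : Polynomial A) : iC A (algebraMap _ _ p) = algebraMap _ _ p :=
  IsLocalization.lift_eq _ _
theorem resL_alg (p : Polynomial A) : resL A (algebraMap _ _ p) = rkap A p :=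
  IsLocalization.lift_eq _ _

theorem resL_iC : (resL A).comp (iC A) = resC A := by
  apply IsLocalization.ringHom_ext (Smon A)
  refine RingHom.ext fun p => ?_
  simp [iC_alg, resL_alg, resC_alg, rkap]

theorem resL_iB : (resL A).comp (iB A) = (algebraMap _ (kap A)).comp (qB A) := by
  apply IsLocalization.ringHom_ext (SBu A)
  refine RingHom.ext fun p => ?_
  simp [iB_alg, resL_alg, qB_alg, rkap]

theorem redH_surj : Function.Surjective (redH A) :=
  Polynomial.map_surjective _ IsLocalRing.residue_surjective

theorem qB_surj : Function.Surjective (qB A) := fun p => by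
  obtain ⟨q, rfl⟩ := redH_surj p
  exact ⟨_, qB_alg q⟩

theorem qB_local (x : LBu A) (h : IsUnit (qB A x)) : IsUnit x := by
  obtain ⟨⟨p, s⟩, hs⟩ := IsLocalization.surj (SBu A) x
  simp only at hs
  have h1 : IsUnit (redH A p) := by
    rw [← qB_alg, ← hs, map_mul, qB_alg]
    exact h.mul s.2
  have h2 : IsUnit (algebraMap _ (LBu A) p) :=
    IsLocalization.map_units (LBu A) (⟨p, h1⟩ : SBu A)
  rw [← hs] at h2
  exact isUnit_of_mul_isUnit_left h2

theorem redH_units (d : Polynomial (IsLocalRing.ResidueField A)) (hd : IsUnit d) :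
    ∃ p : Polynomial A, IsUnit p ∧ redH A p = d := by
  obtain ⟨c, hc, rfl⟩ := Polynomial.isUnit_iff.1 hd
  obtain ⟨a, rfl⟩ := IsLocalRing.residue_surjective c
  refine ⟨Polynomial.C a, ?_, by simp [redH]⟩
  exact (isUnit_of_map_unit _ _ hc).map _

theorem exists_monic_lift (p : Polynomial (IsLocalRing.ResidueField A)) (hp : p ≠ 0) :
    ∃ (u : A) (g : Polynomial A), IsUnit u ∧ g.Monic ∧ redH A (Polynomial.C u * g) = p := by
  obtain ⟨a, ha⟩ := IsLocalRing.residue_surjective p.leadingCoeff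
  have hm : (p * Polynomial.C p.leadingCoeff⁻¹).Monic := Polynomial.monic_mul_leadingCoeff_inv hp
  have hl : p * Polynomial.C p.leadingCoeff⁻¹ ∈ Polynomial.lifts (IsLocalRing.residue A) := by
    rw [Polynomial.mem_lifts]
    exact Polynomial.map_surjective _ IsLocalRing.residue_surjective _
  obtain ⟨g, hg, -, hgm⟩ := Polynomial.lifts_and_degree_eq_and_monic hl hm
  refine ⟨a, g, ?_, hgm, ?_⟩
  · have : IsUnit (IsLocalRing.residue A a) := by
      rw [ha]; exact (Polynomial.leadingCoeff_ne_zero.2 hp).isUnit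
    exact isUnit_of_map_unit _ _ this
  · have h1 : redH A g = _ := hg
    rw [map_mul, h1]
    simp only [redH, Polynomial.coe_mapRingHom, Polynomial.map_C, ha]
    rw [mul_left_comm, ← Polynomial.C_mul, mul_inv_cancel₀ (Polynomial.leadingCoeff_ne_zero.2 hp)]
    simp

theorem resC_surj : Function.Surjective (resC A) := by
  intro z
  obtain ⟨p, g, hg, rfl⟩ := IsFractionRing.div_surjective (A := Polynomial (IsLocalRing.ResidueField A)) z
  obtain ⟨u, g', hu, hg', rfl⟩ := exists_monic_lift g (nonZeroDivisors.ne_zero hg)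
  obtain ⟨p, rfl⟩ := redH_surj p
  have h1 : IsUnit (algebraMap _ (CM A) (Polynomial.C u * g')) := by
    rw [map_mul]
    exact ((hu.map _).map _).mul (IsLocalization.map_units (CM A) (⟨g', hg'⟩ : Smon A))
  obtain ⟨v, hv⟩ := h1.exists_right_inv
  refine ⟨algebraMap _ _ p * v, ?_⟩
  have h2 := congrArg (resC A) hv
  rw [map_mul, map_one, resC_alg] at h2
  rw [map_mul, resC_alg, div_eq_mul_inv, eq_inv_of_mul_eq_one_right h2]

theorem resC_units (z : kap A) (hz : IsUnit z) : ∃ c : CM A, IsUnit c ∧ resC A c = z := by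
  have key : ∀ g : Polynomial (IsLocalRing.ResidueField A), g ≠ 0 →
      ∃ c : CM A, IsUnit c ∧ resC A c = algebraMap _ _ g := by
    intro g hg
    obtain ⟨u, g', hu, hg', rfl⟩ := exists_monic_lift g hg
    refine ⟨algebraMap _ _ (Polynomial.C u * g'), ?_, resC_alg _⟩
    rw [map_mul]
    exact ((hu.map _).map _).mul (IsLocalization.map_units (CM A) (⟨g', hg'⟩ : Smon A))
  obtain ⟨p, g, hg, rfl⟩ := IsFractionRing.div_surjective (A := Polynomial (IsLocalRing.ResidueField A)) z
  obtain ⟨c, hc, hc'⟩ := key g (nonZeroDivisors.ne_zero hg)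
  have hp : p ≠ 0 := by rintro rfl; simp at hz
  obtain ⟨d, hd, hd'⟩ := key p hp
  obtain ⟨c, rfl⟩ := hc
  refine ⟨d * ↑c⁻¹, hd.mul (Units.isUnit _), ?_⟩
  rw [map_mul, hd', ← hc', div_eq_mul_inv]
  congr 1
  rw [eq_comm, inv_eq_iff_eq_inv, eq_comm]
  apply inv_eq_of_mul_eq_one_right
  rw [← map_mul, Units.inv_mul, map_one]

theorem CInf_const (a : A) : algebraMap _ (CM A) (Polynomial.C a) ∈ CInf A :=
  ⟨Polynomial.C a, 1, Polynomial.monic_one, by simp, by simp⟩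

theorem map_inv_mat {R S : Type*} [CommRing R] [CommRing S] (f : R →+* S) {n : Type*} [Fintype n]
    [DecidableEq n] {M : Matrix n n R} (h : IsUnit M.det) : M⁻¹.map f = (M.map f)⁻¹ := by
  symm
  apply inv_eq_left_inv
  rw [← Matrix.map_mul, nonsing_inv_mul _ h]; simp

theorem horrocks_core {N : ℕ} (F : Matrix (Fin N) (Fin N) (Polynomial A)) (s : Fin N → A)
    (b : Fin N → Fin N) (N1 : ∀ i j, b i = b j → s i = s j)
    (N2 : ∀ i j, b i < b j → s i ≠ 0 ∧ ∃ ρ ∈ IsLocalRing.maximalIdeal A, s j = s i * ρ)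
    (hC : Eqv (F.map (algebraMap _ (CM A)))
      (diagonal fun i => algebraMap _ (CM A) (Polynomial.C (s i))))
    (U' V' : Matrix (Fin N) (Fin N) (LBu A)) (hU' : IsUnit U'.det) (hV' : IsUnit V'.det)
    (hB : F.map (algebraMap _ (LBu A)) =
      U' * (diagonal fun i => algebraMap _ (LBu A) (Polynomial.C (s i))) * V')
    (hqU : U'.map (qB A) = 1) (hqV : V'.map (qB A) = 1) :
    Eqv F (F.map ev0) := by
  obtain ⟨U, V, hU, hV, hUV⟩ := hC
  set sC : Fin N → CM A := fun i => algebraMap _ (CM A) (Polynomial.C (s i)) with hsC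
  set sL : Fin N → LCu A := fun i => algebraMap _ (LCu A) (Polynomial.C (s i)) with hsL
  have hsL0 : ∀ i, s i ≠ 0 → sL i ≠ 0 := by
    intro i h h'
    apply h
    have := IsLocalization.injective (LCu A) SCu_le (h'.trans (map_zero _).symm)
    simpa using this
  have hresm : ∀ ρ ∈ IsLocalRing.maximalIdeal A, rkap A (Polynomial.C ρ) = 0 := by
    intro ρ h
    simp [rkap, redH, (IsLocalRing.residue_eq_zero_iff _).2 h]
  set σ := (U.map (iC A))⁻¹ * U'.map (iB A) with hσ
  set τ := V.map (iC A) * (V'.map (iB A))⁻¹ with hτ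
  have hUu := isUnit_map_det (iC A) hU
  have hVu := isUnit_map_det (iC A) hV
  have hUu' := isUnit_map_det (iB A) hU'
  have hVu' := isUnit_map_det (iB A) hV'
  have hrel : σ * diagonal sL = diagonal sL * τ := by
    have e1 := congrArg (fun M => M.map (iC A)) hUV
    have e2 := congrArg (fun M => M.map (iB A)) hB
    have e3 : (F.map (algebraMap _ (CM A))).map (iC A) = (F.map (algebraMap _ (LBu A))).map (iB A) := by
      ext i j; simp [iC_alg, iB_alg]
    have e4 : (diagonal sC).map (iC A) = diagonal sL := by
      rw [diagonal_map (map_zero _)]; congr 1; ext i; exact iC_alg _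
    have e5 : (diagonal fun i => algebraMap _ (LBu A) (Polynomial.C (s i))).map (iB A) =
        diagonal sL := by
      rw [diagonal_map (map_zero _)]; congr 1; ext i; exact iB_alg _
    simp only [Matrix.map_mul] at e1 e2
    rw [e4] at e1
    rw [e5] at e2
    have e6 := e1.symm.trans (e3.trans e2)
    calc σ * diagonal sL = (U.map (iC A))⁻¹ * (U'.map (iB A) * diagonal sL * V'.map (iB A)) *
          (V'.map (iB A))⁻¹ := by
            simp only [hσ, Matrix.mul_assoc, mul_nonsing_inv _ hVu', Matrix.mul_one]
      _ = ((U.map (iC A))⁻¹ * U.map (iC A)) * diagonal sL * τ := by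
            rw [← e6]; simp only [hτ, Matrix.mul_assoc]
      _ = _ := by rw [nonsing_inv_mul _ hUu, Matrix.one_mul]
  have hent : ∀ i j, σ i j * sL j = sL i * τ i j := by
    intro i j
    have := congrFun (congrFun hrel i) j
    rwa [mul_diagonal, diagonal_mul] at this
  have hUr : IsUnit (U.map (resC A)).det := isUnit_map_det _ hU
  have hVr : IsUnit (V.map (resC A)).det := isUnit_map_det _ hV
  have hσr : σ.map (resL A) = (U.map (resC A))⁻¹ := by
    rw [hσ, Matrix.map_mul, map_inv_mat _ hUu, map_comp_mat, map_comp_mat, resL_iC, resL_iB,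
      ← map_comp_mat, hqU]
    simp
  have hτr : τ.map (resL A) = V.map (resC A) := by
    rw [hτ, Matrix.map_mul, map_inv_mat _ hVu', map_comp_mat, map_comp_mat, resL_iC, resL_iB,
      ← map_comp_mat, hqV]
    simp
  obtain ⟨σ', τ', hσd, hτd, hst, hσm, hτm⟩ := A_lift (b := b) (resC A) resC_surj resC_units sC
    (fun i j h => by simp only [hsC, N1 i j h])
    (fun i j h => by
      obtain ⟨-, ρ, hρ, h2⟩ := N2 i j h
      refine ⟨algebraMap _ _ (Polynomial.C ρ), ?_, ?_⟩
      · rw [resC_alg]; exact hresm ρ hρ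
      · simp only [hsC, h2, map_mul])
    (σ.map (resL A)) (τ.map (resL A))
    (by rw [hσr]; exact isUnit_nonsing_inv_det _ hUr) (by rw [hτr]; exact hVr)
    (fun i j h => by
      obtain ⟨h0, ρ, hρ, h2⟩ := N2 j i h
      have h3 := hent i j
      have h4 : sL i = sL j * algebraMap _ _ (Polynomial.C ρ) := by simp only [hsL, h2, map_mul]
      rw [h4, mul_comm, mul_assoc] at h3
      have h5 := mul_left_cancel₀ (hsL0 j h0) h3
      rw [map_apply, h5, map_mul, resL_alg, hresm ρ hρ, zero_mul])
    (fun i j h => by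
      obtain ⟨h0, ρ, hρ, h2⟩ := N2 i j h
      have h3 := hent i j
      have h4 : sL j = sL i * algebraMap _ _ (Polynomial.C ρ) := by simp only [hsL, h2, map_mul]
      rw [h4, mul_left_comm] at h3
      have h5 := mul_left_cancel₀ (hsL0 i h0) h3
      rw [map_apply, ← h5, map_mul, resL_alg, hresm ρ hρ, mul_zero])
    (fun i j h h0 => by
      have h0' : s i ≠ 0 := by
        intro h'; apply h0; simp [hsC, h']
      have h3 := hent i j
      have h4 : sL j = sL i := by simp only [hsL, N1 i j h]
      rw [h4, mul_comm] at h3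
      rw [map_apply, map_apply, mul_left_cancel₀ (hsL0 i h0') h3])
  set W1 := U * σ' with hW1
  set W2 := τ'⁻¹ * V with hW2
  have hF : F.map (algebraMap _ (CM A)) = W1 * diagonal sC * W2 := by
    rw [hUV, hW1, Matrix.mul_assoc U σ', hst]
    calc U * diagonal sC * V = U * diagonal sC * (τ' * τ'⁻¹) * V := by
          rw [mul_nonsing_inv _ hτd, Matrix.mul_one]
      _ = _ := by simp only [hW2, Matrix.mul_assoc]
  obtain ⟨Y1, hY1, hc1⟩ := LB W1 (by rw [hW1, det_mul]; exact hU.mul hσd)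
    (by rw [hW1, Matrix.map_mul, hσm, hσr, mul_nonsing_inv _ hUr])
  obtain ⟨Y2, hY2, hc2⟩ := LB W2ᵀ
    (by rw [det_transpose, hW2, det_mul]; exact (isUnit_nonsing_inv_det _ hτd).mul hV)
    (by rw [transpose_map, hW2, Matrix.map_mul, map_inv_mat _ hτd, hτm, hτr,
      nonsing_inv_mul _ hVr, transpose_one])
  set Z := Y1 * F * Y2ᵀ with hZ
  have hZc : ∀ i j, ∃ a, Z i j = Polynomial.C a := by
    intro i j
    apply CInf_alg
    have e1 : Z.map (algebraMap _ (CM A)) = (Y1.map (algebraMap _ (CM A)) * W1) * diagonal sC *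
        (Y2.map (algebraMap _ (CM A)) * W2ᵀ)ᵀ := by
      rw [hZ, Matrix.map_mul, Matrix.map_mul, hF, transpose_mul, transpose_transpose, ← transpose_map]
      simp only [Matrix.mul_assoc]
    have e2 := congrFun (congrFun e1 i) j
    rw [map_apply] at e2
    rw [e2, mul_apply]
    refine Subring.sum_mem _ fun k _ => Subring.mul_mem _ ?_ (hc2 _ _)
    rw [mul_diagonal]
    exact Subring.mul_mem _ (hc1 _ _) (CInf_const _)
  have hZ0 : Z.map ev0 = Z := by
    ext1 i j
    obtain ⟨a, ha⟩ := hZc i j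
    rw [map_apply, ha]
    simp [ev0]
  have h1 : Eqv Z F := Eqv.of_mul hY1 (by rwa [det_transpose])
  have h2 := h1.map ev0
  rw [hZ0] at h2
  exact h1.symm.trans h2

end HorrocksC

section HorrocksD

theorem dI_gt {B : Type*} [CommRing B] {N M : ℕ} (F : Matrix (Fin N) (Fin M) B) (k : ℕ)
    (hk : N < k) : dI F k = ⊥ := by
  rw [eq_bot_iff, dI_le_iff]
  intro r c
  obtain ⟨i, j, hij, h⟩ := Fintype.exists_ne_map_eq_of_card_lt r (by simpa using hk)
  rw [Submodule.mem_bot]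
  exact det_zero_of_row_eq hij (by ext t; simp [h])

theorem horrocks {A : Type*} [CommRing A] [IsDomain A] [IsLocalRing A] {N : ℕ}
    (F : Matrix (Fin N) (Fin N) (Polynomial A)) (Φ : Fin N → A) (hΦ : Chain Φ)
    (hd : ∀ k, k ≤ N → dI F k = Ideal.span {Polynomial.C (pp Φ k)})
    (hC : Eqv (F.map (algebraMap _ (CM A)))
      (smithDiag fun i => algebraMap _ (CM A) (Polynomial.C (Φ i)))) :
    Eqv F (F.map ev0) := by
  classical
  let S : Fin N → Finset (Fin N) := fun i => Finset.univ.filter fun j => Associated (Φ j) (Φ i)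
  have hS : ∀ i, (S i).Nonempty := fun i => ⟨i, by simp [S, Associated.refl]⟩
  let b : Fin N → Fin N := fun i => (S i).min' (hS i)
  have hb : ∀ i, Associated (Φ (b i)) (Φ i) := fun i => by
    have := (S i).min'_mem (hS i)
    simpa [S] using this
  have hbe : ∀ i j, Associated (Φ i) (Φ j) → b i = b j := by
    intro i j h
    have : S i = S j := by
      ext t
      simp only [S, Finset.mem_filter, Finset.mem_univ, true_and]
      exact ⟨fun h' => h'.trans h, fun h' => h'.trans h.symm⟩
    simp only [b, this]
  let s : Fin N → A := fun i => Φ (b i)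
  have N1 : ∀ i j, b i = b j → s i = s j := fun i j h => by simp only [s, h]
  have N2 : ∀ i j, b i < b j → s i ≠ 0 ∧ ∃ ρ ∈ IsLocalRing.maximalIdeal A, s j = s i * ρ := by
    intro i j h
    obtain ⟨ρ, hρ⟩ := hΦ _ _ h.le
    have hna : ¬ Associated (s i) (s j) := fun h' =>
      h.ne (hbe _ _ ((hb i).symm.trans (h'.trans (hb j))))
    refine ⟨?_, ρ, ?_, hρ⟩
    · intro h0
      apply hna
      have : s j = 0 := by
        show Φ (b j) = 0
        rw [hρ]; change s i * ρ = 0; rw [h0, zero_mul]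
      rw [h0, this]
    · rw [IsLocalRing.mem_maximalIdeal, mem_nonunits_iff]
      rintro ⟨u, rfl⟩
      exact hna ⟨u, hρ.symm⟩
  have hass : ∀ i, Associated (Φ i) (s i) := fun i => (hb i).symm
  have hC' : Eqv (F.map (algebraMap _ (CM A)))
      (diagonal fun i => algebraMap _ (CM A) (Polynomial.C (s i))) := by
    rw [← smithDiag_sq]
    exact hC.trans (smithDiag_assoc fun i => ((hass i).map Polynomial.C).map (algebraMap _ (CM A)))
  -- over LBu
  have hdB : ∀ k, k ≤ N → dI (F.map (algebraMap _ (LBu A))) k =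
      Ideal.span {pp (fun i => algebraMap _ (LBu A) (Polynomial.C (Φ i))) k} := by
    intro k hk
    rw [dI_map, hd k hk, Ideal.map_span, Set.image_singleton]
    congr 2
    exact (pp_map ((algebraMap _ (LBu A)).comp Polynomial.C) Φ k).symm
  obtain ⟨Ψ, hΨ, hE, hp⟩ := peel_smith (qB A) qB_surj qB_local (F.map (algebraMap _ (LBu A)))
    (fun k => by
      by_cases hk : k ≤ N
      · exact ⟨_, hdB k hk⟩
      · exact ⟨0, by rw [dI_gt _ _ (not_le.1 hk)]; simp⟩)
  have hu := chain_unique hΨ (hΦ.map ((algebraMap _ (LBu A)).comp Polynomial.C))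
    (fun k hk => (hp k hk).symm.trans (hdB k hk))
  have hE2 : Eqv (F.map (algebraMap _ (LBu A)))
      (diagonal fun i => algebraMap _ (LBu A) (Polynomial.C (s i))) := by
    rw [← smithDiag_sq]
    refine hE.trans (smithDiag_assoc fun i => (hu i).trans ?_)
    exact ((hass i).map Polynomial.C).map (algebraMap _ (LBu A))
  obtain ⟨U0, V0, hU0, hV0, hUV⟩ := hE2
  obtain ⟨P, hP, hPm⟩ := GL_lift (redH A) redH_surj redH_units N _ (isUnit_map_det (qB A) hU0)
  obtain ⟨Q, hQ, hQm⟩ := GL_lift (redH A) redH_surj redH_units N _ (isUnit_map_det (qB A) hV0)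
  have hPi := isUnit_nonsing_inv_det _ hP
  have hQi := isUnit_nonsing_inv_det _ hQ
  have e1 : Eqv (P⁻¹ * F * Q⁻¹) F := Eqv.of_mul hPi hQi
  have hcomp : (qB A).comp (algebraMap (Polynomial A) (LBu A)) = redH A :=
    RingHom.ext fun p => qB_alg p
  have key : Eqv (P⁻¹ * F * Q⁻¹) ((P⁻¹ * F * Q⁻¹).map ev0) := by
    refine horrocks_core _ s b N1 N2 ((e1.map _).trans hC')
      (P⁻¹.map (algebraMap _ (LBu A)) * U0) (V0 * Q⁻¹.map (algebraMap _ (LBu A))) ?_ ?_ ?_ ?_ ?_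
    · rw [det_mul]; exact (isUnit_map_det _ hPi).mul hU0
    · rw [det_mul]; exact hV0.mul (isUnit_map_det _ hQi)
    · rw [Matrix.map_mul, Matrix.map_mul, hUV]
      simp only [Matrix.mul_assoc]
    · rw [Matrix.map_mul, map_comp_mat, hcomp, map_inv_mat _ hP, ← hPm,
        nonsing_inv_mul _ (isUnit_map_det _ hP)]
    · rw [Matrix.map_mul, map_comp_mat, hcomp, map_inv_mat _ hQ, ← hQm,
        mul_nonsing_inv _ (isUnit_map_det _ hQ)]
  exact e1.symm.trans (key.trans (e1.map ev0))

end HorrocksD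

section TOne

universe u

/-- K → K(x) -/
noncomputable def kk (K K' : Type u) [Field K] [Field K'] [Algebra (Polynomial K) K'] : K →+* K' :=
  (algebraMap (Polynomial K) K').comp Polynomial.C

theorem theta_exists (n : ℕ) (K K' : Type u) [Field K] [Field K'] [Algebra (Polynomial K) K']
    [IsFractionRing (Polynomial K) K'] {L : Type u} [CommRing L]
    [IsLocalRing L] (g : MvPolynomial (Fin n) (Polynomial K) →+* L) :
    ∃ θ : MvPolynomial (Fin n) (Polynomial K') →+* CM L,
      (∀ a, θ (MvPolynomial.map (Polynomial.mapRingHom (kk K K')) a) =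
        algebraMap (Polynomial L) (CM L) (Polynomial.C (g a))) ∧
      θ (C (Polynomial.C (algebraMap (Polynomial K) K' Polynomial.X))) =
        algebraMap (Polynomial L) (CM L) Polynomial.X := by
  let ι : MvPolynomial (Fin n) (Polynomial K) →+* CM L :=
    ((algebraMap (Polynomial L) (CM L)).comp Polynomial.C).comp g
  let g0 : Polynomial K →+* CM L := (algebraMap (Polynomial L) (CM L)).comp
    (Polynomial.mapRingHom ((g.comp C).comp Polynomial.C))
  have hg0 : ∀ y : nonZeroDivisors (Polynomial K), IsUnit (g0 y) := by
    intro y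
    have hy : (y : Polynomial K) ≠ 0 := nonZeroDivisors.coe_ne_zero y
    have hm := Polynomial.monic_mul_leadingCoeff_inv hy
    have h1 : IsUnit (g0 ((y : Polynomial K) *
        Polynomial.C (y : Polynomial K).leadingCoeff⁻¹)) := by
      apply IsLocalization.map_units (CM L) (⟨_, hm.map ((g.comp C).comp Polynomial.C)⟩ : Smon L)
    rw [map_mul] at h1
    exact isUnit_of_mul_isUnit_left h1
  let θ0 : K' →+* CM L :=
    IsLocalization.lift (M := nonZeroDivisors (Polynomial K)) (g := g0) hg0
  have hθ0 : ∀ p, θ0 (algebraMap _ _ p) = g0 p := fun p => IsLocalization.lift_eq _ _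
  let θ1 : Polynomial K' →+* CM L :=
    Polynomial.eval₂RingHom θ0 (ι (C Polynomial.X))
  refine ⟨MvPolynomial.eval₂Hom θ1 (fun i => ι (MvPolynomial.X i)), fun a => ?_, ?_⟩
  · have : (MvPolynomial.eval₂Hom θ1 (fun i => ι (MvPolynomial.X i))).comp
        (MvPolynomial.map (Polynomial.mapRingHom (kk K K'))) = ι := by
      apply MvPolynomial.ringHom_ext'
      · apply Polynomial.ringHom_ext'
        · ext a
          simp [ι, θ1, kk, hθ0, g0]
        · simp [θ1, ι]
      · intro i
        simp [ι]
    exact congrArg (fun f => f a) this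
  · simp [θ1, hθ0, g0]

theorem dI_map_span {A B : Type*} [CommRing A] [CommRing B] (f : A →+* B) {l m : Type*}
    {F : Matrix l m A} {k : ℕ} {d : A} (h : dI F k = Ideal.span {d}) :
    dI (F.map f) k = Ideal.span {f d} := by
  rw [dI_map, h, Ideal.map_span, Set.image_singleton]

theorem T1_loc {A Q D D' T : Type*} [CommRing A] [CommRing Q] [CommRing D] [CommRing D']
    [CommRing T] (c : D →+* A) (μ : D →+* D') (cQ : D' →+* Q) (m : A →+* Q) (q : Q)
    (hm : ∀ d, m (c d) = cQ (μ d)) (θ : Q →+* T) (al : Polynomial A →+* T)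
    (h1 : ∀ a, θ (m a) = al (Polynomial.C a)) (h2 : θ q = al Polynomial.X) {N : ℕ}
    (Φ : Fin N → D)
    (ih : ∀ F : Matrix (Fin N) (Fin N) Q,
      (∀ k, k ≤ N → dI F k = Ideal.span {cQ (pp (fun i => μ (Φ i)) k)}) →
      Eqv F (smithDiag fun i => cQ (μ (Φ i))))
    (F : Matrix (Fin N) (Fin N) (Polynomial A))
    (hd : ∀ k, k ≤ N → dI F k = Ideal.span {Polynomial.C (c (pp Φ k))}) :
    Eqv (F.map al) (smithDiag fun i => al (Polynomial.C (c (Φ i)))) := by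
  have hal : al = θ.comp (Polynomial.eval₂RingHom m q) := by
    apply Polynomial.ringHom_ext
    · intro a; simp [h1]
    · simp [h2]
  rw [hal, ← map_comp_mat]
  have h3 := (ih (F.map (Polynomial.eval₂RingHom m q)) (by
    intro k hk
    rw [dI_map_span _ (hd k hk), pp_map, ← hm]
    simp)).map θ
  rw [smithDiag_map] at h3
  convert h3 using 3 with i
  simp [hm]

/-- abstract version of the inductive step -/
theorem T1_step {A D R : Type u} [CommRing A] [IsDomain A] [CommRing D] [CommRing R] (c : D →+* A)
    (c' : D →+* R) (e : R ≃+* Polynomial A) (hec : ∀ d, e (c' d) = Polynomial.C (c d)) {N : ℕ}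
    (Φ : Fin N → D) (hΦ : Chain Φ)
    (ih : ∀ F : Matrix (Fin N) (Fin N) A, (∀ k, k ≤ N → dI F k = Ideal.span {c (pp Φ k)}) →
      Eqv F (smithDiag fun i => c (Φ i)))
    (hloc : ∀ F : Matrix (Fin N) (Fin N) (Polynomial A),
      (∀ k, k ≤ N → dI F k = Ideal.span {Polynomial.C (c (pp Φ k))}) →
      ∀ (L : Type u) [CommRing L] [IsLocalRing L] (g : A →+* L),
        Eqv (F.map ((algebraMap (Polynomial L) (CM L)).comp (Polynomial.mapRingHom g)))
          (smithDiag fun i => algebraMap (Polynomial L) (CM L) (Polynomial.C (g (c (Φ i))))))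
    (F : Matrix (Fin N) (Fin N) R)
    (hd : ∀ k, k ≤ N → dI F k = Ideal.span {c' (pp Φ k)}) :
    Eqv F (smithDiag fun i => c' (Φ i)) := by
  set F' := F.map (e : R →+* Polynomial A) with hF'
  have hd' : ∀ k, k ≤ N → dI F' k = Ideal.span {Polynomial.C (c (pp Φ k))} := by
    intro k hk
    rw [hF', dI_map, hd k hk, Ideal.map_span, Set.image_singleton]
    congr 2
    exact hec _
  have hpatch : Eqv F' (F'.map ev0) := by
    apply patch
    intro M _
    refine horrocks _ (fun i => algebraMap A (Localization.AtPrime M) (c (Φ i)))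
      (hΦ.map ((algebraMap A (Localization.AtPrime M)).comp c)) ?_ ?_
    · intro k hk
      rw [dI_map, hd' k hk, Ideal.map_span, Set.image_singleton]
      congr 2
      have := pp_map ((algebraMap A (Localization.AtPrime M)).comp c) Φ k
      simp only [RingHom.comp_apply] at this
      rw [this]; simp
    · rw [map_comp_mat]
      exact hloc F' hd' (Localization.AtPrime M) (algebraMap A (Localization.AtPrime M))
  have h0 : F'.map ev0 = (F'.map (Polynomial.evalRingHom 0)).map Polynomial.C := by
    ext1 i j; simp [ev0]
  have h1 := ih (F'.map (Polynomial.evalRingHom 0)) (by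
    intro k hk
    rw [dI_map, hd' k hk, Ideal.map_span, Set.image_singleton]; simp)
  have h2 := h1.map Polynomial.C
  rw [← h0] at h2
  have h3 := (hpatch.trans h2).map (e.symm : Polynomial A →+* R)
  rw [smithDiag_map, smithDiag_map] at h3
  have e1 : F'.map (e.symm : Polynomial A →+* R) = F := by
    ext1 i j; simp [hF']
  have e2 : (fun i => (e.symm : Polynomial A →+* R) (Polynomial.C (c (Φ i)))) =
      fun i => c' (Φ i) := by
    funext i
    rw [← hec]
    exact e.symm_apply_apply _
  rw [e1, e2] at h3
  exact h3

theorem T1_loc2 (n : ℕ) (K K' : Type u) [Field K] [Field K'] [Algebra (Polynomial K) K']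
    [IsFractionRing (Polynomial K) K'] {L : Type u} [CommRing L]
    [IsLocalRing L] (g : MvPolynomial (Fin n) (Polynomial K) →+* L) {N : ℕ}
    (Φ : Fin N → Polynomial K) (hΦ : Chain Φ)
    (ih : ∀ (F : Matrix (Fin N) (Fin N) (MvPolynomial (Fin n) (Polynomial K')))
      (Φ : Fin N → Polynomial K'),
      Chain Φ → (∀ k, k ≤ N → dI F k = Ideal.span {C (pp Φ k)}) →
      Eqv F (smithDiag fun i => C (Φ i)))
    (F : Matrix (Fin N) (Fin N) (Polynomial (MvPolynomial (Fin n) (Polynomial K))))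
    (hd : ∀ k, k ≤ N → dI F k = Ideal.span {Polynomial.C (C (pp Φ k))}) :
    Eqv (F.map ((algebraMap (Polynomial L) (CM L)).comp (Polynomial.mapRingHom g)))
          (smithDiag fun i => algebraMap (Polynomial L) (CM L) (Polynomial.C (g (C (Φ i))))) := by
  obtain ⟨θ, hθ1, hθ2⟩ := theta_exists n K K' g
  have h1 : ∀ a, θ (MvPolynomial.map (Polynomial.mapRingHom (kk K K')) a) =
      ((algebraMap (Polynomial L) (CM L)).comp (Polynomial.mapRingHom g))
        (Polynomial.C a) := by
    intro a; rw [hθ1]; simp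
  have h2 : θ (C (Polynomial.C (algebraMap (Polynomial K) K' Polynomial.X))) =
      ((algebraMap (Polynomial L) (CM L)).comp (Polynomial.mapRingHom g)) Polynomial.X := by
    rw [hθ2]; simp
  have h := T1_loc C (Polynomial.mapRingHom (kk K K')) C
    (MvPolynomial.map (Polynomial.mapRingHom (kk K K'))) _ (fun d => map_C _ _) θ
    ((algebraMap (Polynomial L) (CM L)).comp (Polynomial.mapRingHom g))
    h1 h2 Φ (fun F hF => ih F _ (hΦ.map _) hF) F hd
  simpa using h

theorem T1 : ∀ (n : ℕ) (K : Type u) [Field K] (N : ℕ)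
    (F : Matrix (Fin N) (Fin N) (MvPolynomial (Fin n) (Polynomial K))) (Φ : Fin N → Polynomial K),
    Chain Φ → (∀ k, k ≤ N → dI F k = Ideal.span {C (pp Φ k)}) →
    Eqv F (smithDiag fun i => C (Φ i)) := by
  intro n
  induction n with
  | zero =>
    intro K _ N F Φ hΦ hd
    let e := isEmptyAlgEquiv (Polynomial K) (Fin 0)
    obtain ⟨Ψ, hΨ, hE, hp⟩ := peel_smith (e : _ →+* Polynomial K) e.surjective
      (fun b hb => by
        have h1 : IsUnit (e b) := hb
        have := h1.map e.symm
        simpa using this) F (fun k => by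
      by_cases hk : k ≤ N
      · exact ⟨_, hd k hk⟩
      · exact ⟨0, by rw [dI_gt _ _ (not_le.1 hk)]; simp⟩)
    refine hE.trans (smithDiag_assoc ?_)
    refine chain_unique hΨ (hΦ.map C) fun k hk => ?_
    rw [← hp k hk, hd k hk, pp_map C Φ k]
  | succ n ih =>
    intro K _ N F Φ hΦ hd
    refine T1_step (A := MvPolynomial (Fin n) (Polynomial K)) C C
      (finSuccEquiv (Polynomial K) n).toRingEquiv ?_ Φ hΦ (fun F hF => ih K N F Φ hΦ hF) ?_ F hd
    · intro d
      simp [finSuccEquiv_apply]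
    · intro F' hd' L _ _ g
      exact T1_loc2 n K (FractionRing (Polynomial K)) g Φ hΦ
        (fun F Φ => ih (FractionRing (Polynomial K)) N F Φ) F' hd'

end TOne

section TPrime

universe u

/-- diagonalizability of square matrices with determinantal ideals generated by constants -/
def T1P {D A : Type*} [CommRing D] [CommRing A] (c : D →+* A) : Prop :=
  ∀ (N : ℕ) (F : Matrix (Fin N) (Fin N) A),
    (∀ k, k ≤ N → ∃ d, dI F k = Ideal.span {c d}) →
    ∃ Φ : Fin N → D, Chain Φ ∧ Eqv F (smithDiag fun i => c (Φ i)) ∧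
      ∀ k, k ≤ N → dI F k = Ideal.span {c (pp Φ k)}

theorem T1P_of {D A : Type*} [EuclideanDomain D] [CommRing A] (c : D →+* A) (ev : A →+* D)
    (hev : ∀ d, ev (c d) = d)
    (h : ∀ (N : ℕ) (F : Matrix (Fin N) (Fin N) A) (Φ : Fin N → D),
      Chain Φ → (∀ k, k ≤ N → dI F k = Ideal.span {c (pp Φ k)}) →
      Eqv F (smithDiag fun i => c (Φ i))) : T1P c := by
  intro N F hd
  obtain ⟨Φ, hΦ, -, hp⟩ := peel_smith (RingHom.id D) (fun x => ⟨x, rfl⟩) (fun _ h => h)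
    (F.map ev) (fun k => by
      by_cases hk : k ≤ N
      · obtain ⟨d, hd⟩ := hd k hk
        exact ⟨_, dI_map_span ev hd⟩
      · exact ⟨0, by rw [dI_gt _ _ (not_le.1 hk)]; simp⟩)
  have key : ∀ k, k ≤ N → dI F k = Ideal.span {c (pp Φ k)} := by
    intro k hk
    obtain ⟨d, hd⟩ := hd k hk
    have h1 := hp k hk
    rw [dI_map_span ev hd, hev] at h1
    have h2 := congrArg (Ideal.map c) h1
    rw [Ideal.map_span, Ideal.map_span, Set.image_singleton, Set.image_singleton] at h2
    rw [hd, h2]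
  exact ⟨Φ, hΦ, h N F Φ hΦ key, key⟩

theorem T1P.trans {D A B : Type*} [CommRing D] [CommRing A] [CommRing B] {c : D →+* A}
    (h : T1P c) (e : A ≃+* B) (c' : D →+* B) (hc : ∀ d, e (c d) = c' d) : T1P c' := by
  intro N F hd
  have hsymm : ∀ d, e.symm (c' d) = c d := fun d => by rw [← hc, e.symm_apply_apply]
  obtain ⟨Φ, hΦ, hE, hp⟩ := h N (F.map (e.symm : B →+* A)) (fun k hk => by
    obtain ⟨d, hd⟩ := hd k hk
    refine ⟨d, ?_⟩
    rw [dI_map_span _ hd]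
    congr 2; exact hsymm d)
  have h1 : (F.map (e.symm : B →+* A)).map (e : A →+* B) = F := by ext1 i j; simp
  refine ⟨Φ, hΦ, ?_, ?_⟩
  · have h2 := hE.map (e : A →+* B)
    rw [h1, smithDiag_map] at h2
    convert h2 using 3 with i
    exact (hc _).symm
  · intro k hk
    rw [← h1, dI_map_span _ (hp k hk)]
    congr 2; exact hc _

theorem T1P_mv (n : ℕ) (K : Type u) [Field K] :
    T1P (C : Polynomial K →+* MvPolynomial (Fin n) (Polynomial K)) :=
  T1P_of _ (MvPolynomial.eval fun _ => 0) (fun d => by simp) fun N F Φ => T1 n K N F Φ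

theorem T1P_X {D A B : Type*} [CommRing D] [CommRing A] [CommRing B] {cB : D →+* B}
    (h : T1P cB) (e : B ≃+* Polynomial A) (c : D →+* A)
    (he : ∀ d, e (cB d) = Polynomial.C (c d)) : T1P (Polynomial.C.comp c) :=
  h.trans e _ he

theorem T0 {D A : Type*} [CommRing D] [CommRing A] [IsDomain A] {c : D →+* A}
    (h : T1P c) {N : ℕ} (v w : Fin (N + 1) → A) (hvw : v ⬝ᵥ w = 1) :
    ∃ P : Matrix (Fin (N + 1)) (Fin (N + 1)) A, IsUnit P.det ∧ P 0 = v := by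
  set F : Matrix (Fin (N + 1)) (Fin (N + 1)) A := Matrix.of fun i j => if i = 0 then v j else 0
    with hF
  have hrow : ∀ i j, i ≠ 0 → F i j = 0 := fun i j hi => by simp [hF, hi]
  have h1 : dI F 1 = ⊤ := by
    rw [Ideal.eq_top_iff_one, ← hvw]
    refine Ideal.sum_mem _ fun j _ => Ideal.mul_mem_right _ _ ?_
    have := entry_mem_dI F 0 j
    simpa [hF] using this
  have h2 : dI F 2 = ⊥ := by
    rw [eq_bot_iff, dI_le_iff]
    intro r c'
    rw [Submodule.mem_bot]
    by_cases h0 : r 0 = 0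
    · by_cases h0' : r 1 = 0
      · exact det_zero_of_row_eq (i := 0) (j := 1) (by simp) (by ext t; simp [h0, h0'])
      · exact det_eq_zero_of_row_eq_zero 1 fun t => hrow _ _ h0'
    · exact det_eq_zero_of_row_eq_zero 0 fun t => hrow _ _ h0
  obtain ⟨Φ, hΦ, ⟨U, V, hU, hV, hUV⟩, hp⟩ := h (N + 1) F (fun k hk => by
    rcases Nat.lt_or_ge k 2 with hk | hk
    · refine ⟨1, ?_⟩
      rw [map_one, Ideal.span_singleton_one]
      interval_cases k
      · exact dI_zero' F
      · exact h1
    · refine ⟨0, ?_⟩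
      rw [map_zero, Ideal.span_singleton_eq_bot.2 rfl, eq_bot_iff, ← h2]
      exact dI_antitone F hk)
  have hcΦ0 : ∀ i, i ≠ 0 → c (Φ i) = 0 := by
    intro i hi
    have hN : 1 ≤ N := by
      have := i.2
      have : (i : ℕ) ≠ 0 := fun h => hi (Fin.ext h)
      omega
    have e1 := hp 1 (by omega)
    have e2 := hp 2 (by omega)
    rw [h1, eq_comm, Ideal.span_singleton_eq_top] at e1
    rw [h2, eq_comm, Ideal.span_singleton_eq_bot] at e2
    have e3 := pp_succ Φ ⟨1, by omega⟩
    simp only [Nat.reduceAdd] at e3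
    rw [e3, map_mul] at e2
    have e4 := (mul_eq_zero.1 e2).resolve_left e1.ne_zero
    have e5 := hΦ ⟨1, by omega⟩ i (by
      rw [Fin.le_def]
      have : (i : ℕ) ≠ 0 := fun h => hi (Fin.ext h)
      show 1 ≤ (i : ℕ)
      omega)
    have := map_dvd c e5
    rw [e4] at this
    exact zero_dvd_iff.1 this
  have hent : ∀ i j, F i j = U i 0 * c (Φ 0) * V 0 j := by
    intro i j
    rw [hUV, smithDiag_sq, mul_apply, Finset.sum_eq_single 0]
    · rw [mul_diagonal]
    · intro t _ ht
      rw [mul_diagonal, hcΦ0 t ht]; simp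
    · simp
  have hv : ∀ j, v j = U 0 0 * c (Φ 0) * V 0 j := fun j => by
    rw [← hent]; simp [hF]
  have hu : IsUnit (U 0 0 * c (Φ 0)) := by
    refine IsUnit.of_mul_eq_one (∑ j, V 0 j * w j) ?_
    rw [← hvw, Finset.mul_sum]
    refine Finset.sum_congr rfl fun j _ => ?_
    rw [hv j]; ring
  refine ⟨(U 0 0 * c (Φ 0)) • V, ?_, ?_⟩
  · rw [det_smul]
    exact (hu.pow _).mul hV
  · ext j
    rw [Matrix.smul_apply, smul_eq_mul, hv j]

end TPrime

section TTwo

theorem adj_sq {R : Type*} [CommRing R] [IsDomain R] {m n : Type*} (x : R) (hx : Prime x)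
    (F : Matrix m n R) (k : ℕ) (hk : 1 ≤ k) (h : dI F k ≤ Ideal.span {x}) :
    dI F (k + 1) ≤ Ideal.span {x ^ 2} := by
  rw [dI_le_iff]
  intro r c
  set M := F.submatrix r c with hM
  have h1 : ∀ i j, ∃ b, M.adjugate i j = x * b := by
    intro i j
    rw [adjugate_fin_succ_eq_det_submatrix]
    have := (dI_le_iff F _).1 h (r ∘ j.succAbove) (c ∘ i.succAbove)
    rw [Ideal.mem_span_singleton] at this
    exact Dvd.dvd.mul_left this _
  choose B hB using h1
  have h2 : M.adjugate = x • (Matrix.of B) := by ext i j; simp [hB]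
  have h3 := det_adjugate M
  rw [h2, det_smul, Fintype.card_fin, Nat.add_sub_cancel] at h3
  have h4 : x ∣ M.det := by
    have : dI F (k+1) ≤ Ideal.span {x} := (dI_succ_le F k).trans h
    exact Ideal.mem_span_singleton.1 (this (mem_dI F r c))
  obtain ⟨y, hy⟩ := h4
  rw [hy, mul_pow, pow_succ, mul_assoc] at h3
  have h5 := mul_left_cancel₀ (pow_ne_zero _ hx.ne_zero) h3
  have h6 : x ∣ y := hx.dvd_of_dvd_pow ⟨_, h5.symm⟩
  obtain ⟨z, rfl⟩ := h6
  rw [Ideal.mem_span_singleton, hy]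
  exact ⟨z, by ring⟩

theorem C_dvd_X_pow {A : Type*} [CommRing A] (a : A) (e : ℕ) (q : Polynomial A)
    (h : Polynomial.C a ∣ Polynomial.X ^ e * q) : Polynomial.C a ∣ q := by
  rw [Polynomial.C_dvd_iff_dvd_coeff] at h ⊢
  intro i
  have := h (i + e)
  rwa [Polynomial.coeff_X_pow_mul] at this

theorem X_dvd_C {A : Type*} [CommRing A] (a : A) (h : (Polynomial.X : Polynomial A) ∣ Polynomial.C a) :
    a = 0 := by
  rw [Polynomial.X_dvd_iff] at h
  simpa using h

/-- the twisting diagonal -/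
noncomputable def dX {A : Type*} [CommRing A] (s : ℕ) (j : ℕ) : Polynomial A :=
  if j < s then 1 else Polynomial.X

theorem dX_prod {A : Type*} [CommRing A] (s : ℕ) {k N : ℕ} (c : Fin k → Fin N) :
    ∃ e, (∏ t, (dX s (c t : ℕ) : Polynomial A)) = Polynomial.X ^ e ∧
      (Function.Injective c → s < k → 1 ≤ e) := by
  refine ⟨(Finset.univ.filter fun t => ¬ ((c t : ℕ) < s)).card, ?_, ?_⟩
  · unfold dX
    rw [Finset.prod_ite]; simp
  · intro hc hk
    rw [Nat.one_le_iff_ne_zero, Finset.card_ne_zero]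
    by_contra hne
    rw [Finset.not_nonempty_iff_eq_empty, Finset.filter_eq_empty_iff] at hne
    have h1 : ∀ t, (c t : ℕ) < s := fun t => by
      have := hne (Finset.mem_univ t); simpa using this
    have := Fintype.card_le_of_injective (fun t : Fin k => (⟨c t, h1 t⟩ : Fin s)) (by
      intro a b hab
      simp only [Fin.mk.injEq] at hab
      exact hc (Fin.ext hab))
    simp at this
    omega

theorem det_dX {A : Type*} [CommRing A] (s : ℕ) {k N : ℕ} (G1 : Matrix (Fin N) (Fin N) (Polynomial A))
    (r c : Fin k → Fin N) :
    ((G1 * diagonal fun j : Fin N => dX s (j : ℕ)).submatrix r c).det =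
      (∏ t, dX s (c t : ℕ)) * (G1.submatrix r c).det := by
  rw [← det_mul_row]
  congr 1
  ext1 i j
  simp [mul_comm]

/-- commuting a matrix congruent to one past the twisting diagonal -/
theorem commute_dX {A : Type*} [CommRing A] [IsDomain A] (s : ℕ) {N : ℕ}
    (V : Matrix (Fin N) (Fin N) (Polynomial A)) (hV : IsUnit V.det) (h0 : V.map ev0 = 1) :
    ∃ W : Matrix (Fin N) (Fin N) (Polynomial A), IsUnit W.det ∧
      V * (diagonal fun j : Fin N => dX s (j : ℕ)) = (diagonal fun j : Fin N => dX s (j : ℕ)) * W := by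
  have h1 : ∀ i j, i ≠ j → Polynomial.X ∣ V i j := by
    intro i j hij
    have := congrFun (congrFun h0 i) j
    rw [Matrix.map_apply, one_apply_ne hij] at this
    rw [Polynomial.X_dvd_iff, Polynomial.coeff_zero_eq_eval_zero]
    simpa [ev0] using this
  have h2 : ∀ i j : Fin N, ∃ w : Polynomial A, V i j * dX s (j : ℕ) = dX s (i : ℕ) * w := by
    intro i j
    unfold dX
    by_cases hi : (i : ℕ) < s
    · exact ⟨V i j * dX s j, by simp [hi, dX]⟩
    · by_cases hj : (j : ℕ) < s
      · obtain ⟨w, hw⟩ := h1 i j (by rintro rfl; exact hi hj)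
        exact ⟨w, by simp [hi, hj, hw]⟩
      · exact ⟨V i j, by simp [hi, hj, mul_comm]⟩
  choose W hW using h2
  have h3 : V * (diagonal fun j : Fin N => dX s (j : ℕ)) =
      (diagonal fun j : Fin N => dX s (j : ℕ)) * Matrix.of W := by
    ext1 i j
    rw [mul_diagonal, diagonal_mul, of_apply, hW]
  refine ⟨Matrix.of W, ?_, h3⟩
  have h4 := congrArg Matrix.det h3
  rw [det_mul, det_mul, mul_comm] at h4
  have h5 : (diagonal fun j : Fin N => (dX s (j : ℕ) : Polynomial A)).det ≠ 0 := by
    rw [det_diagonal, Finset.prod_ne_zero_iff]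
    intro i _
    unfold dX
    split_ifs
    · exact one_ne_zero
    · exact Polynomial.X_ne_zero
  rwa [← mul_left_cancel₀ h5 h4]

end TTwo

section TTwoMain

theorem T2_two {D A : Type*} [CommRing D] [CommRing A] [IsDomain A] {c : D →+* A}
    (hA : T1P c) (hAX : T1P ((Polynomial.C : A →+* Polynomial A).comp c)) {N : ℕ}
    (F : Matrix (Fin (N + 1)) (Fin (N + 1)) (Polynomial A)) (h1 : dI F 1 = ⊤)
    (s : ℕ) (hs1 : 1 ≤ s) (hsN : s ≤ N) (d : ℕ → D)
    (hlt : ∀ k, k ≤ s → dI F k = Ideal.span {Polynomial.C (c (d k))})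
    (hlt0 : ∀ k, k ≤ s → c (d k) ≠ 0)
    (d' : D) (hd' : c d' ≠ 0)
    (heq : dI F (s + 1) = Ideal.span {Polynomial.X * Polynomial.C (c d')})
    (hgt : ∀ k, s + 1 < k → dI F k = ⊥) :
    ∃ H, Eqv F H ∧ IsUnit (H 0 0) := by
  have hev : ∀ a : A, Polynomial.evalRingHom 0 (Polynomial.C a) = a := fun a => by simp
  obtain ⟨Φ, hΦ, hE, hp⟩ := hA (N + 1) (F.map (Polynomial.evalRingHom 0)) (fun k hk => by
    rcases lt_trichotomy k (s + 1) with h | h | h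
    · exact ⟨d k, by rw [dI_map_span _ (hlt k (by omega)), hev]⟩
    · subst h
      exact ⟨0, by rw [dI_map_span _ heq]; simp⟩
    · exact ⟨0, by rw [dI_map, hgt k h]; simp⟩)
  have hΦs : ∀ i : Fin (N + 1), s ≤ (i : ℕ) → c (Φ i) = 0 := by
    intro i hi
    have e1 := hp s (by omega)
    have e2 := hp (s + 1) (by omega)
    rw [dI_map_span _ (hlt s le_rfl), hev] at e1
    rw [dI_map_span _ heq] at e2
    simp only [map_mul, Polynomial.coe_evalRingHom, Polynomial.eval_X, zero_mul] at e2
    rw [eq_comm, Ideal.span_singleton_eq_span_singleton] at e1 e2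
    rw [associated_zero_iff_eq_zero] at e2
    have e3 := pp_succ Φ ⟨s, by omega⟩
    simp only at e3
    rw [e3, map_mul] at e2
    have e4 : c (pp Φ s) ≠ 0 := fun h => hlt0 s le_rfl (by
      rw [h] at e1; exact (associated_zero_iff_eq_zero _).1 e1.symm)
    have e5 := (mul_eq_zero.1 e2).resolve_left e4
    have e6 := map_dvd c (hΦ ⟨s, by omega⟩ i hi)
    rw [e5] at e6
    exact zero_dvd_iff.1 e6
  have hΦ0 : IsUnit (c (Φ 0)) := by
    have e1 := hp 1 (by omega)
    rw [dI_map, h1, Ideal.map_top, eq_comm, Ideal.span_singleton_eq_top] at e1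
    have e3 := pp_succ Φ 0
    simp only [Fin.val_zero, zero_add, pp_zero, one_mul] at e3
    rwa [e3] at e1
  obtain ⟨U0, V0, hU0, hV0, hUV0⟩ := hE.symm
  set G := U0.map Polynomial.C * F * V0.map Polynomial.C with hG
  have hGF : Eqv G F := Eqv.of_mul (isUnit_map_det _ hU0) (isUnit_map_det _ hV0)
  have hG0 : G.map (Polynomial.evalRingHom 0) = smithDiag fun i => c (Φ i) := by
    rw [hUV0, hG, Matrix.map_mul, Matrix.map_mul, map_comp_mat, map_comp_mat]
    congr 2
    · ext1 i j; simp
    · ext1 i j; simp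
  have hG0' : ∀ i j, (G i j).coeff 0 = if (i : ℕ) = j then c (Φ i) else 0 := by
    intro i j
    have := congrFun (congrFun hG0 i) j
    rw [Polynomial.coeff_zero_eq_eval_zero]
    simpa [smithDiag] using this
  have hcol : ∀ i j : Fin (N + 1), ∃ q, G i j = q * dX s (j : ℕ) := by
    intro i j
    unfold dX
    split_ifs with h
    · exact ⟨G i j, by simp⟩
    · have : Polynomial.X ∣ G i j := by
        rw [Polynomial.X_dvd_iff, hG0']
        split_ifs with h'
        · exact hΦs i (by omega)
        · rfl
      obtain ⟨q, hq⟩ := this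
      exact ⟨q, by rw [hq, mul_comm]⟩
  choose G1' hG1' using hcol
  obtain ⟨G1, hG1d⟩ : ∃ G1, G1 = Matrix.of G1' := ⟨_, rfl⟩
  have hG1 : G = G1 * diagonal fun j : Fin (N + 1) => dX s (j : ℕ) := by
    ext1 i j
    rw [mul_diagonal, hG1d, of_apply, hG1']
  have hle : ∀ k, dI F k ≤ dI G1 k := by
    intro k
    rw [← hGF.dI_eq k, hG1]
    exact dI_mul_right_le _ _ _
  -- determinantal ideals of G1
  have hup : ∀ k, k ≤ s → dI G1 k ≤ Ideal.span {Polynomial.C (c (d k))} := by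
    intro k hk
    rw [dI_le_iff]
    intro r t
    rw [Ideal.mem_span_singleton]
    obtain ⟨e, he, -⟩ := dX_prod (A := A) s t
    apply C_dvd_X_pow _ e
    rw [← he, ← det_dX, ← hG1, ← Ideal.mem_span_singleton, ← hlt k hk, ← hGF.dI_eq k]
    exact mem_dI _ _ _
  have hupr : dI G1 (s + 1) ≤ Ideal.span {Polynomial.C (c d')} := by
    rw [dI_le_iff]
    intro r t
    rw [Ideal.mem_span_singleton]
    by_cases ht : Function.Injective t
    · obtain ⟨e, he, he1⟩ := dX_prod (A := A) s t
      obtain ⟨e, rfl⟩ := Nat.exists_eq_add_of_le' (he1 ht (by omega))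
      apply C_dvd_X_pow _ e
      have h2 : (G.submatrix r t).det ∈ dI F (s + 1) := by
        rw [← hGF.dI_eq]; exact mem_dI _ _ _
      rw [heq, hG1, det_dX, he, Ideal.mem_span_singleton, pow_succ', mul_assoc] at h2
      exact (mul_dvd_mul_iff_left Polynomial.X_ne_zero).1 h2
    · rw [Function.Injective] at ht
      push Not at ht
      obtain ⟨a, b, hab, hne⟩ := ht
      rw [det_zero_of_column_eq hne (fun i => by simp [hab])]
      exact dvd_zero _
  have hger : Polynomial.C (c d') ∈ dI G1 (s + 1) := by
    have h2 : dI G (s + 1) ≤ Ideal.span {Polynomial.X} * dI G1 (s + 1) := by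
      rw [dI_le_iff]
      intro r t
      by_cases ht : Function.Injective t
      · obtain ⟨e, he, he1⟩ := dX_prod (A := A) s t
        obtain ⟨e, rfl⟩ := Nat.exists_eq_add_of_le' (he1 ht (by omega))
        rw [hG1, det_dX, he, pow_succ', mul_assoc]
        exact Ideal.mul_mem_mul (Ideal.mem_span_singleton_self _)
          (Ideal.mul_mem_left _ _ (mem_dI _ _ _))
      · rw [Function.Injective] at ht
        push Not at ht
        obtain ⟨a, b, hab, hne⟩ := ht
        rw [det_zero_of_column_eq hne (fun i => by simp [hab])]
        exact Ideal.zero_mem _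
    rw [hGF.dI_eq, heq] at h2
    have h3 := h2 (Ideal.mem_span_singleton_self _)
    rw [Ideal.mem_span_singleton_mul] at h3
    obtain ⟨z, hz, hz'⟩ := h3
    rwa [← mul_left_cancel₀ Polynomial.X_ne_zero hz']
  have hbot : ∀ k, s + 1 < k → dI G1 k = ⊥ := by
    intro k hk
    rw [eq_bot_iff, dI_le_iff]
    intro r t
    obtain ⟨e, he, -⟩ := dX_prod (A := A) s t
    have h2 : (G.submatrix r t).det ∈ dI F k := by
      rw [← hGF.dI_eq]; exact mem_dI _ _ _
    rw [hgt k hk, Submodule.mem_bot, hG1, det_dX, he] at h2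
    exact (mul_eq_zero.1 h2).resolve_left (pow_ne_zero _ Polynomial.X_ne_zero)
  obtain ⟨Ψ, hΨ, ⟨U, V, hU, hV, hUV⟩, -⟩ := hAX (N + 1) G1 (fun k hk => by
    rcases lt_trichotomy k (s + 1) with h | h | h
    · refine ⟨d k, le_antisymm (hup k (by omega)) ?_⟩
      have := hle k
      rwa [hlt k (by omega)] at this
    · subst h
      refine ⟨d', le_antisymm hupr ?_⟩
      rw [Ideal.span_singleton_le_iff_mem]; exact hger
    · exact ⟨0, by rw [hbot k h]; simp⟩)
  set S : Matrix (Fin (N + 1)) (Fin (N + 1)) (Polynomial A) :=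
    smithDiag fun i => ((Polynomial.C : A →+* Polynomial A).comp c) (Ψ i) with hS
  have hS0 : S.map ev0 = S := by
    rw [hS, smithDiag_map]; congr 1; ext1 i; simp [ev0]
  have hU0' : IsUnit (U.map ev0).det := isUnit_map_det _ hU
  have hV0' : IsUnit (V.map ev0).det := isUnit_map_det _ hV
  have hG10 : G1.map ev0 = U.map ev0 * S * V.map ev0 := by
    rw [hUV, Matrix.map_mul, Matrix.map_mul, hS0]
  have hev0 : ∀ p : Polynomial A, ev0 (ev0 p) = ev0 p := fun p => by simp [ev0]
  obtain ⟨W, hW, hWe⟩ := commute_dX s ((V.map ev0)⁻¹ * V)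
    (by rw [det_mul]; exact (isUnit_nonsing_inv_det _ hV0').mul hV)
    (by
      have e : (V.map ev0).map ev0 = V.map ev0 := by ext1 i j; simp [hev0]
      rw [Matrix.map_mul, map_inv_mat, e, nonsing_inv_mul _ hV0']
      exact hV0')
  have hfin : G = (U * (U.map ev0)⁻¹) *
      (G1.map ev0 * diagonal fun j : Fin (N + 1) => dX s (j : ℕ)) * W := by
    rw [Matrix.mul_assoc, Matrix.mul_assoc (G1.map ev0), ← hWe, hG10, hG1, hUV]
    simp only [Matrix.mul_assoc]
    rw [nonsing_inv_mul_cancel_left _ _ hU0', mul_nonsing_inv_cancel_left _ _ hV0']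
  refine ⟨_, hGF.symm.trans ⟨_, _, ?_, hW, hfin⟩, ?_⟩
  · rw [det_mul]; exact hU.mul (isUnit_nonsing_inv_det _ hU0')
  · rw [mul_diagonal]
    have e1 : (dX s ((0 : Fin (N + 1)) : ℕ) : Polynomial A) = 1 := by
      unfold dX; rw [if_pos]; simp; omega
    have e2 : G1 0 0 = G 0 0 := by rw [hG1, mul_diagonal, e1, mul_one]
    have e3 := hG0' 0 0
    rw [if_pos rfl, Polynomial.coeff_zero_eq_eval_zero] at e3
    rw [e1, mul_one, Matrix.map_apply, e2]
    simp only [ev0, RingHom.comp_apply, Polynomial.coe_evalRingHom]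
    rw [e3]
    exact hΦ0.map Polynomial.C

theorem T2 {D A : Type*} [CommRing D] [CommRing A] [IsDomain A] {c : D →+* A}
    (hA : T1P c) (hAX : T1P ((Polynomial.C : A →+* Polynomial A).comp c)) {N : ℕ}
    (F : Matrix (Fin (N + 1)) (Fin (N + 1)) (Polynomial A)) (h1 : dI F 1 = ⊤)
    (hd : ∀ k, ∃ d, dI F k = Ideal.span {Polynomial.C (c d)} ∨
      dI F k = Ideal.span {Polynomial.X * Polynomial.C (c d)}) :
    ∃ H, Eqv F H ∧ IsUnit (H 0 0) := by
  by_cases hc : ∀ k, ∃ d, dI F k = Ideal.span {Polynomial.C (c d)}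
  · obtain ⟨Φ, hΦ, hE, hp⟩ := hAX (N + 1) F (fun k _ => hc k)
    refine ⟨_, hE, ?_⟩
    have e1 := hp 1 (by omega)
    rw [h1, eq_comm, Ideal.span_singleton_eq_top] at e1
    have e3 := pp_succ Φ 0
    simp only [Fin.val_zero, zero_add, pp_zero, one_mul] at e3
    rw [e3] at e1
    simpa [smithDiag] using e1
  · push Not at hc
    obtain ⟨r, hr⟩ := hc
    obtain ⟨d', hd'⟩ := hd r
    have hd' := hd'.resolve_left (hr d')
    have hcd : c d' ≠ 0 := by
      intro h0
      apply hr 0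
      rw [hd', h0]; simp
    have hr0 : r ≠ 0 := by
      rintro rfl
      apply hr 1
      rw [dI_zero']; simp
    have hr1 : r ≠ 1 := by
      rintro rfl
      apply hr 1
      rw [h1]; simp
    have hrN : r ≤ N + 1 := by
      by_contra h
      apply hr 0
      rw [dI_gt _ _ (not_le.1 h)]; simp
    obtain ⟨s, rfl⟩ : ∃ s, r = s + 1 := ⟨r - 1, by omega⟩
    have hX : Prime (Polynomial.X : Polynomial A) := Polynomial.prime_X
    have hgt0 : dI F (s + 1 + 1) = ⊥ := by
      have h2 := adj_sq _ hX F (s + 1) (by omega) (by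
        rw [hd', Ideal.span_singleton_le_span_singleton]; exact dvd_mul_right _ _)
      obtain ⟨e, he | he⟩ := hd (s + 1 + 1)
      · rw [he, Ideal.span_singleton_le_span_singleton] at h2
        have := X_dvd_C _ ((dvd_pow_self _ two_ne_zero).trans h2)
        rw [he, this]; simp
      · rw [he, Ideal.span_singleton_le_span_singleton, pow_two] at h2
        have := X_dvd_C _ ((mul_dvd_mul_iff_left Polynomial.X_ne_zero).1 h2)
        rw [he, this]; simp
    have hlt : ∀ k, ∃ e, k ≤ s → dI F k = Ideal.span {Polynomial.C (c e)} ∧ c e ≠ 0 := by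
      intro k
      obtain ⟨e, he⟩ := hd k
      refine ⟨e, fun hk => ?_⟩
      have hle : dI F (s + 1) ≤ dI F k := dI_antitone F (by omega)
      have he' : dI F k = Ideal.span {Polynomial.C (c e)} := by
        refine he.resolve_right fun he => ?_
        have hk0 : dI F k ≤ Ideal.span {Polynomial.X} := by
          rw [he, Ideal.span_singleton_le_span_singleton]; exact dvd_mul_right _ _
        by_cases hk1 : 1 ≤ k
        · have h2 := adj_sq _ hX F k hk1 hk0
          have h3 := (dI_antitone F (show k + 1 ≤ s + 1 by omega)).trans h2
          rw [hd', Ideal.span_singleton_le_span_singleton, pow_two] at h3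
          exact hcd (X_dvd_C _ ((mul_dvd_mul_iff_left Polynomial.X_ne_zero).1 h3))
        · obtain rfl : k = 0 := by omega
          rw [dI_zero', top_le_iff, Ideal.span_singleton_eq_top] at hk0
          exact hX.not_isUnit hk0
      refine ⟨he', fun h0 => ?_⟩
      rw [hd', he', h0, Ideal.span_singleton_le_span_singleton] at hle
      simp at hle
      exact hcd hle
    choose d hd2 using hlt
    exact T2_two hA hAX F h1 s (by omega) (by omega) d (fun k hk => (hd2 k hk).1)
      (fun k hk => (hd2 k hk).2) d' hcd hd' (fun k hk => by
        rw [eq_bot_iff, ← hgt0]; exact dI_antitone F (by omega))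

end TTwoMain

section Padding

/-- inclusion matrix -/
def incM (R : Type*) [CommRing R] (a b : ℕ) : Matrix (Fin a) (Fin b) R :=
  Matrix.of fun i j => if (i : ℕ) = (j : ℕ) then 1 else 0

theorem incM_mul {R : Type*} [CommRing R] {a b : ℕ} (h : b ≤ a) :
    incM R b a * incM R a b = 1 := by
  ext i j
  rw [mul_apply, Finset.sum_eq_single (Fin.castLE h i)]
  · simp [incM, one_apply, Fin.ext_iff]
  · intro t _ ht
    have : ¬ ((i : ℕ) = (t : ℕ)) := fun h' => ht (Fin.ext h'.symm)
    simp [incM, this]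
  · simp

theorem dI_pad {R : Type*} [CommRing R] {l m N : ℕ} (hl : l ≤ N) (hm : m ≤ N)
    (F : Matrix (Fin l) (Fin m) R) (k : ℕ) :
    dI (incM R N l * F * incM R m N) k = dI F k := by
  apply le_antisymm
  · exact (dI_mul_right_le _ _ _).trans (dI_mul_left_le _ _ _)
  · have e : F = incM R l N * (incM R N l * F * incM R m N) * incM R N m := by
      calc F = (incM R l N * incM R N l) * F * (incM R m N * incM R N m) := by
            rw [incM_mul hl, incM_mul hm, Matrix.one_mul, Matrix.mul_one]
        _ = _ := by simp only [Matrix.mul_assoc]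
    conv_lhs => rw [e]
    exact (dI_mul_right_le _ _ _).trans (dI_mul_left_le _ _ _)

theorem rect_step {D B : Type*} [CommRing D] [CommRing B] [IsDomain B] {c : D →+* B}
    (h : T1P c) (D0 : B)
    (hsq : ∀ (N : ℕ) (F : Matrix (Fin (N + 1)) (Fin (N + 1)) B), dI F 1 = ⊤ → HP D0 F →
      ∃ H, Eqv F H ∧ IsUnit (H 0 0))
    (l m : ℕ) (F : Matrix (Fin (l + 1)) (Fin (m + 1)) B) (h1 : dI F 1 = ⊤) (hF : HP D0 F) :
      ∃ F'', Eqv F (blk 1 F'') := by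
  have hl : l + 1 ≤ l + m + 1 := by omega
  have hm : m + 1 ≤ l + m + 1 := by omega
  obtain ⟨H, hE, hu⟩ := hsq (l + m) (incM B (l + m + 1) (l + 1) * F * incM B (m + 1) (l + m + 1))
    (by rw [dI_pad hl hm, h1]) (fun k => by
      obtain ⟨δ, hδ⟩ := hF k
      exact ⟨δ, by rw [dI_pad hl hm]; exact hδ⟩)
  obtain ⟨U, V, hU, hV, hUV⟩ := hE.symm
  obtain ⟨u, hu⟩ := hu
  set a : Fin (l + 1) → B := (↑u⁻¹ : B) • (U * incM B (l + m + 1) (l + 1)) 0 with ha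
  set b : Fin (m + 1) → B := fun j => (incM B (m + 1) (l + m + 1) * V) j 0 with hb
  have hab : a ⬝ᵥ (F *ᵥ b) = 1 := by
    have e1 : H 0 0 = (U * incM B (l + m + 1) (l + 1)) 0 ⬝ᵥ (F *ᵥ b) := by
      have e2 : H = (U * incM B (l + m + 1) (l + 1)) * (F * (incM B (m + 1) (l + m + 1) * V)) := by
        rw [hUV]; simp only [Matrix.mul_assoc]
      rw [e2, mul_apply]
      rfl
    rw [ha, smul_dotProduct, ← e1, ← hu]
    simp
  obtain ⟨P, hP, hPa⟩ := T0 h a (F *ᵥ b) hab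
  obtain ⟨Q, hQ, hQb⟩ := T0 h b (a ᵥ* F) (by
    rw [dotProduct_comm, ← dotProduct_mulVec]; exact hab)
  have h00 : (P * F * Qᵀ) 0 0 = 1 := by
    rw [← hab, Matrix.mul_assoc, mul_apply, ← hPa, ← hQb]
    rfl
  obtain ⟨F'', hF''⟩ := clear_pivot (P * F * Qᵀ) (by rw [h00]; exact isUnit_one)
  exact ⟨F'', (Eqv.of_mul hP (by rwa [det_transpose])).symm.trans hF''⟩

theorem smith_poly {D A : Type*} [CommRing D] [CommRing A] [IsDomain A] {c : D →+* A}
    (hA : T1P c) (hAX : T1P ((Polynomial.C : A →+* Polynomial A).comp c)) (D0 : Polynomial A)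
    (hdiv : ∀ δ, δ ∣ D0 → ∃ d, δ = Polynomial.C (c d) ∨ δ = Polynomial.X * Polynomial.C (c d))
    (l m : ℕ) (F : Matrix (Fin l) (Fin m) (Polynomial A)) (hF : HP D0 F) :
      ∃ Φ : Fin l → Polynomial A, Chain Φ ∧ Eqv F (smithDiag Φ) ∧
        ∀ k, k ≤ l → dI F k = Ideal.span {pp Φ k} := by
  refine general_peel D0 (rect_step hAX D0 ?_) l m F hF
  intro N F h1 hF
  refine T2 hA hAX F h1 fun k => ?_
  obtain ⟨δ, hδ, h0 | h0⟩ := hF k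
  · exact ⟨0, Or.inl (by rw [hδ, h0]; simp)⟩
  · obtain ⟨d, rfl | rfl⟩ := hdiv δ h0
    · exact ⟨d, Or.inl hδ⟩
    · exact ⟨d, Or.inr hδ⟩

theorem smith_transfer {R S : Type*} [CommRing R] [CommRing S] (e : R ≃+* S) (D0 : R)
    (H : ∀ (l m : ℕ) (F : Matrix (Fin l) (Fin m) S), HP (e D0) F →
      ∃ Φ : Fin l → S, Chain Φ ∧ Eqv F (smithDiag Φ) ∧
        ∀ k, k ≤ l → dI F k = Ideal.span {pp Φ k})
    (l m : ℕ) (F : Matrix (Fin l) (Fin m) R) (hF : HP D0 F) :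
      ∃ Φ : Fin l → R, Chain Φ ∧ Eqv F (smithDiag Φ) ∧
        ∀ k, k ≤ l → dI F k = Ideal.span {pp Φ k} := by
  obtain ⟨Φ, hΦ, hE, hp⟩ := H l m (F.map (e : R →+* S)) (fun k => by
    obtain ⟨δ, hδ, h0⟩ := hF k
    refine ⟨e δ, dI_map_span _ hδ, h0.imp (fun h => by rw [h, map_zero]) fun h => map_dvd e h⟩)
  have h1 : (F.map (e : R →+* S)).map (e.symm : S →+* R) = F := by ext1 i j; simp
  refine ⟨fun i => (e.symm : S →+* R) (Φ i), hΦ.map _, ?_, ?_⟩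
  · have h2 := hE.map (e.symm : S →+* R)
    rwa [h1, smithDiag_map] at h2
  · intro k hk
    rw [← h1, dI_map_span _ (hp k hk), pp_map]

theorem dI_eq_minors {R : Type*} [CommRing R] {l m : ℕ} (F : Matrix (Fin l) (Fin m) R) (k : ℕ) :
    dI F k = Ideal.span (minorsSet F k) := by
  apply le_antisymm
  · rw [dI_le_iff]
    intro r c
    by_cases hr : Function.Injective r
    · by_cases hc : Function.Injective c
      · exact Ideal.subset_span ⟨⟨r, hr⟩, ⟨c, hc⟩, rfl⟩
      · rw [Function.Injective] at hc
        push Not at hc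
        obtain ⟨a, b, hab, hne⟩ := hc
        rw [det_zero_of_column_eq hne (fun i => by simp [hab])]
        exact Ideal.zero_mem _
    · rw [Function.Injective] at hr
      push Not at hr
      obtain ⟨a, b, hab, hne⟩ := hr
      rw [det_zero_of_row_eq hne (by ext i; simp [hab])]
      exact Ideal.zero_mem _
  · rw [Ideal.span_le]
    rintro _ ⟨r, c, rfl⟩
    exact mem_dI F r c

theorem gcd_iff_le {R : Type*} [CommRing R] {l m : ℕ} (F : Matrix (Fin l) (Fin m) R) (k : ℕ) (d : R) :
    (∀ p ∈ minorsSet F k, d ∣ p) ↔ dI F k ≤ Ideal.span {d} := by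
  rw [dI_eq_minors, Ideal.span_le]
  simp only [Set.subset_def, SetLike.mem_coe, Ideal.mem_span_singleton]

theorem isGcd_of_dI {R : Type*} [CommRing R] {l m : ℕ} {F : Matrix (Fin l) (Fin m) R} {k : ℕ} {d : R}
    (h : dI F k = Ideal.span {d}) : IsGcdMinors F k d := by
  refine ⟨(gcd_iff_le F k d).2 h.le, fun e he => ?_⟩
  rw [gcd_iff_le, h, Ideal.span_singleton_le_span_singleton] at he
  exact he

theorem JkUnit_iff {R : Type*} [CommRing R] [IsDomain R] {l m : ℕ} (F : Matrix (Fin l) (Fin m) R)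
    (k : ℕ) (hne : dI F k ≠ ⊥) : JkUnit F k ↔ ∃ d, dI F k = Ideal.span {d} := by
  constructor
  · rintro ⟨d, hd, hJ⟩
    refine ⟨d, le_antisymm ((gcd_iff_le F k d).1 hd.1) ?_⟩
    have h1 : Ideal.span {d} * reducedIdeal F k d ≤ dI F k := by
      unfold reducedIdeal
      rw [Ideal.span_mul_span', Ideal.span_le, Set.singleton_mul]
      rintro _ ⟨v, hv, rfl⟩
      rw [dI_eq_minors]
      exact Ideal.subset_span hv
    rwa [hJ, Ideal.mul_top] at h1
  · rintro ⟨d, hd⟩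
    refine ⟨d, isGcd_of_dI hd, ?_⟩
    have hd0 : d ≠ 0 := by
      rintro rfl
      apply hne; rw [hd]; simp
    have h1 : dI F k ≤ Ideal.span {d} * reducedIdeal F k d := by
      rw [dI_eq_minors, Ideal.span_le]
      intro p hp
      obtain ⟨v, rfl⟩ := (isGcd_of_dI hd).1 p hp
      exact Ideal.mul_mem_mul (Ideal.mem_span_singleton_self _) (Ideal.subset_span hp)
    rw [hd] at h1
    have h2 := h1 (Ideal.mem_span_singleton_self d)
    rw [Ideal.mem_span_singleton_mul] at h2
    obtain ⟨z, hz, hz'⟩ := h2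
    rw [Ideal.eq_top_iff_one]
    have : z = 1 := mul_left_cancel₀ hd0 (by rw [hz', mul_one])
    rwa [← this]

theorem pp_Iic {R : Type*} [CommRing R] {l : ℕ} (Φ : Fin l → R) (i : Fin l) :
    pp Φ (i + 1) = ∏ j ∈ Finset.Iic i, Φ j := by
  unfold pp
  rw [← Finset.prod_filter]
  refine Finset.prod_congr ?_ fun _ _ => rfl
  ext t
  rw [Finset.mem_filter, Finset.mem_Iic, Fin.le_def]
  simp only [Finset.mem_univ, true_and]
  omega

theorem pp_castLE {R : Type*} [CommRing R] {l : ℕ} (Φ : Fin l → R) :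
    ∀ (k : ℕ) (hk : k ≤ l), pp Φ k = ∏ i : Fin k, Φ (Fin.castLE hk i) := by
  intro k
  induction k with
  | zero => intro _; simp [pp_zero]
  | succ k ih =>
    intro hk
    rw [Fin.prod_univ_castSucc, pp_succ Φ ⟨k, hk⟩]
    simp only
    rw [ih (by omega)]
    rfl

theorem pp_mem_dI {R : Type*} [CommRing R] {l m : ℕ} (Φ : Fin l → R) (k : ℕ) (hk : k ≤ l)
    (hm : k ≤ m) : pp Φ k ∈ dI (smithDiag Φ : Matrix (Fin l) (Fin m) R) k := by
  have := mem_dI (smithDiag Φ : Matrix (Fin l) (Fin m) R) (Fin.castLE hk) (Fin.castLE hm)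
  convert this
  rw [pp_castLE Φ k hk, ← det_diagonal]
  congr 1
  ext i j
  simp [smithDiag, diagonal, Fin.ext_iff]

theorem final_abs {R : Type*} [CommRing R] [IsDomain R] (D0 : R) {l m r : ℕ} (hlm : l < m)
    (F : Matrix (Fin l) (Fin m) R) (hrank : HasRank F r) (hd : IsGcdMinors F r D0)
    (H : HP D0 F → ∃ Φ : Fin l → R, Chain Φ ∧ Eqv F (smithDiag Φ) ∧
        ∀ k, k ≤ l → dI F k = Ideal.span {pp Φ k}) :
    SmithEquivAt F r ↔ ∀ k : ℕ, 1 ≤ k → k ≤ r → JkUnit F k := by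
  have hr : dI F r ≠ ⊥ := by
    obtain ⟨p, hp, hp0⟩ := hrank.1
    intro h
    apply hp0
    have : p ∈ dI F r := by rw [dI_eq_minors]; exact Ideal.subset_span hp
    rwa [h] at this
  have hr1 : dI F (r + 1) = ⊥ := by
    rw [dI_eq_minors, Ideal.span_eq_bot]; exact hrank.2
  have hne : ∀ k, k ≤ r → dI F k ≠ ⊥ := fun k hk h => hr (by
    rw [eq_bot_iff, ← h]; exact dI_antitone F hk)
  have hrl : r ≤ l := by
    obtain ⟨p, ⟨a, -, -⟩, -⟩ := hrank.1
    simpa using Fintype.card_le_of_embedding a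
  constructor
  · rintro ⟨Φ, hg, -, hE⟩ k hk1 hkr
    rw [JkUnit_iff F k (hne k hkr)]
    refine ⟨pp Φ k, le_antisymm ?_ ?_⟩
    · rw [← gcd_iff_le]
      have := (hg ⟨k - 1, by omega⟩ (by simp; omega)).1
      rw [← pp_Iic] at this
      have e : ((⟨k - 1, by omega⟩ : Fin l) : ℕ) + 1 = k := by simp; omega
      rwa [e] at this
    · rw [Ideal.span_singleton_le_iff_mem]
      have hE' : Eqv F (smithDiag Φ) := hE
      rw [hE'.dI_eq]
      exact pp_mem_dI Φ k (by omega) (by omega)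
  · intro hJ
    obtain ⟨Φ, hΦ, hE, hp⟩ := H (fun k => by
      rcases Nat.eq_zero_or_pos k with rfl | hk0
      · exact ⟨1, by rw [dI_zero']; simp, Or.inr (one_dvd _)⟩
      · by_cases hk : k ≤ r
        · obtain ⟨d, hdk⟩ := (JkUnit_iff F k (hne k hk)).1 (hJ k hk0 hk)
          refine ⟨d, hdk, Or.inr (hd.2 d ?_)⟩
          rw [gcd_iff_le, ← hdk]
          exact dI_antitone F hk
        · refine ⟨0, ?_, Or.inl rfl⟩
          rw [Ideal.span_singleton_eq_bot.2 rfl, eq_bot_iff, ← hr1]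
          exact dI_antitone F (by omega))
    refine ⟨Φ, ?_, ?_, hE⟩
    · intro i hi
      rw [← pp_Iic]
      exact isGcd_of_dI (hp _ (by omega))
    · intro i hi
      have e1 := hp r hrl
      have e2 := hp (r + 1) (by omega)
      rw [hr1, eq_comm, Ideal.span_singleton_eq_bot] at e2
      have e3 := pp_succ Φ ⟨r, by omega⟩
      simp only at e3
      rw [e3] at e2
      have e4 : pp Φ r ≠ 0 := fun h => hr (by rw [e1, h]; simp)
      have e5 := (mul_eq_zero.1 e2).resolve_left e4
      have e6 := hΦ ⟨r, by omega⟩ i hi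
      rw [e5] at e6
      exact zero_dvd_iff.1 e6

end Padding

section Assemble

universe u

theorem div_form {D A : Type*} [CommRing D] [CommRing A] [IsDomain A] (c : D →+* A)
    (hc : ∀ a d, c d ≠ 0 → a ∣ c d → ∃ d', a = c d') (d : D) (hd : c d ≠ 0) (δ : Polynomial A)
    (hδ : δ ∣ Polynomial.X * Polynomial.C (c d)) :
    ∃ d', δ = Polynomial.C (c d') ∨ δ = Polynomial.X * Polynomial.C (c d') := by
  have key : ∀ δ : Polynomial A, δ ∣ Polynomial.C (c d) → ∃ d', δ = Polynomial.C (c d') := by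
    intro δ hδ
    have h1 := Polynomial.natDegree_le_of_dvd hδ (by simpa using hd)
    rw [Polynomial.natDegree_C] at h1
    have h2 := Polynomial.eq_C_of_natDegree_le_zero h1
    rw [h2, Polynomial.C_dvd_iff_dvd_coeff] at hδ
    have h3 := hδ 0
    rw [Polynomial.coeff_C_zero] at h3
    obtain ⟨d', hd'⟩ := hc _ _ hd h3
    exact ⟨d', by rw [h2, hd']⟩
  have hX : Prime (Polynomial.X : Polynomial A) := Polynomial.prime_X
  by_cases hx : Polynomial.X ∣ δ
  · obtain ⟨δ', rfl⟩ := hx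
    obtain ⟨d', rfl⟩ := key δ' ((mul_dvd_mul_iff_left hX.ne_zero).1 hδ)
    exact ⟨d', Or.inr rfl⟩
  · obtain ⟨q, hq⟩ := hδ
    have h1 : Polynomial.X ∣ δ * q := ⟨_, hq.symm⟩
    obtain ⟨q', rfl⟩ := (hX.dvd_or_dvd h1).resolve_left hx
    obtain ⟨d', rfl⟩ := key δ ⟨q', mul_left_cancel₀ hX.ne_zero (by rw [hq]; ring)⟩
    exact ⟨d', Or.inl rfl⟩

theorem assemble {R S A D : Type*} [CommRing R] [CommRing S] [CommRing A] [IsDomain A] [CommRing D]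
    (c : D →+* A) (hA : T1P c) (hAX : T1P ((Polynomial.C : A →+* Polynomial A).comp c))
    (hc : ∀ a d, c d ≠ 0 → a ∣ c d → ∃ d', a = c d')
    (e1 : R ≃+* Polynomial S) (g : S ≃+* A) (x f h : R) (f' h' : S) (d : D)
    (hx : e1 x = Polynomial.X) (hf : e1 f = Polynomial.C f') (hh : e1 h = Polynomial.C h')
    (hg : g h' = c d) (h0 : (x - f) * h ≠ 0)
    (l m : ℕ) (F : Matrix (Fin l) (Fin m) R) (hF : HP ((x - f) * h) F) :
      ∃ Φ : Fin l → R, Chain Φ ∧ Eqv F (smithDiag Φ) ∧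
        ∀ k, k ≤ l → dI F k = Ideal.span {pp Φ k} := by
  set e : R ≃+* Polynomial A := (e1.trans (Polynomial.mapEquiv g)).trans
    (Polynomial.algEquivAevalXAddC (g f')).toRingEquiv with he
  have hD : e ((x - f) * h) = Polynomial.X * Polynomial.C (c d) := by
    rw [he]
    simp [hx, hf, hh, hg, Polynomial.algEquivAevalXAddC]
  refine smith_transfer e _ ?_ l m F hF
  rw [hD]
  refine smith_poly hA hAX _ (div_form c hc d ?_)
  intro hz
  apply h0
  apply e.injective
  rw [hD, hz]; simp

theorem e_supp {K : Type u} [Field K] (k : ℕ) (f : MvPolynomial (Fin (k + 2)) K)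
    (hf : f ∈ MvPolynomial.supported K {t : Fin (k + 2) | (t : ℕ) ≠ 0}) :
    ∃ f', finSuccEquiv K (k + 1) f = Polynomial.C f' := by
  unfold MvPolynomial.supported at hf
  induction hf using Algebra.adjoin_induction with
  | mem x hx =>
    obtain ⟨t, ht, rfl⟩ := hx
    obtain ⟨i, rfl⟩ := Fin.exists_succ_eq.2 (show t ≠ 0 from fun h => ht (by rw [h]; rfl))
    exact ⟨_, finSuccEquiv_X_succ⟩
  | algebraMap r => exact ⟨C r, by simp [finSuccEquiv_apply]⟩
  | add x y _ _ hx hy =>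
    obtain ⟨a, ha⟩ := hx
    obtain ⟨b, hb⟩ := hy
    exact ⟨a + b, by rw [map_add, ha, hb, map_add]⟩
  | mul x y _ _ hx hy =>
    obtain ⟨a, ha⟩ := hx
    obtain ⟨b, hb⟩ := hy
    exact ⟨a * b, by rw [map_mul, ha, hb, map_mul]⟩

noncomputable def gEq (K : Type u) [Field K] (k : ℕ) (i : Fin (k + 1)) :
    MvPolynomial (Fin (k + 1)) K ≃ₐ[K] MvPolynomial (Fin k) (Polynomial K) :=
  (renameEquiv K (_root_.finSuccEquiv' i)).trans (optionEquivRight K (Fin k))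

theorem e_supp2 {K : Type u} [Field K] (k : ℕ) (i : Fin (k + 1)) (h : MvPolynomial (Fin (k + 2)) K)
    (hh : h ∈ MvPolynomial.supported K {i.succ}) :
    ∃ h' d, finSuccEquiv K (k + 1) h = Polynomial.C h' ∧ gEq K k i h' = C d := by
  unfold MvPolynomial.supported at hh
  induction hh using Algebra.adjoin_induction with
  | mem x hx =>
    obtain ⟨t, rfl, rfl⟩ := hx
    refine ⟨X i, Polynomial.X, finSuccEquiv_X_succ, ?_⟩
    simp [gEq, optionEquivRight_X_none]
  | algebraMap r =>
    refine ⟨C r, Polynomial.C r, by simp [finSuccEquiv_apply], ?_⟩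
    simp [gEq, optionEquivRight_C]
  | add x y _ _ hx hy =>
    obtain ⟨a, a', ha, ha'⟩ := hx
    obtain ⟨b, b', hb, hb'⟩ := hy
    exact ⟨a + b, a' + b', by rw [map_add, ha, hb, map_add], by rw [map_add, ha', hb', map_add]⟩
  | mul x y _ _ hx hy =>
    obtain ⟨a, a', ha, ha'⟩ := hx
    obtain ⟨b, b', hb, hb'⟩ := hy
    exact ⟨a * b, a' * b', by rw [map_mul, ha, hb, map_mul], by rw [map_mul, ha', hb', map_mul]⟩

theorem mv_smith {K : Type u} [Field K] (k : ℕ) (i : Fin (k + 1))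
    (f h : MvPolynomial (Fin (k + 2)) K)
    (hf : f ∈ MvPolynomial.supported K {t : Fin (k + 2) | (t : ℕ) ≠ 0})
    (hh : h ∈ MvPolynomial.supported K {i.succ}) (h0 : (X 0 - f) * h ≠ 0)
    (l m : ℕ) (F : Matrix (Fin l) (Fin m) (MvPolynomial (Fin (k + 2)) K))
    (hF : HP ((X 0 - f) * h) F) :
      ∃ Φ : Fin l → MvPolynomial (Fin (k + 2)) K, Chain Φ ∧ Eqv F (smithDiag Φ) ∧
        ∀ k, k ≤ l → dI F k = Ideal.span {pp Φ k} := by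
  obtain ⟨f', hf'⟩ := e_supp k f hf
  obtain ⟨h', d, hh', hg⟩ := e_supp2 k i h hh
  refine assemble (C : Polynomial K →+* MvPolynomial (Fin k) (Polynomial K)) (T1P_mv k K)
    (T1P_X (T1P_mv (k + 1) K) (finSuccEquiv (Polynomial K) k).toRingEquiv C
      (fun d => by simp [finSuccEquiv_apply])) ?_
    (finSuccEquiv K (k + 1)).toRingEquiv (gEq K k i).toRingEquiv (X 0) f h f' h' d
    finSuccEquiv_X_zero hf' hh' hg h0 l m F hF
  intro a d hd ha
  obtain ⟨b, -, hb⟩ := (MvPolynomial.dvd_C_iff_exists (by rintro rfl; simp at hd)).1 ha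
  exact ⟨b, hb⟩

theorem main_thm {K : Type u} [Field K] (n : ℕ) (hn : 2 ≤ n) (l m r : ℕ) (hlm : l < m)
    (j : ℕ) (hj2 : 2 ≤ j) (hjn : j ≤ n) (p0 : 0 < n) (p1 : j - 1 < n)
    (F : Matrix (Fin l) (Fin m) (MvPolynomial (Fin n) K))
    (hrank : HasRank F r)
    (f h : MvPolynomial (Fin n) K)
    (hf : f ∈ MvPolynomial.supported K {t : Fin n | (t : ℕ) ≠ 0})
    (hh : h ∈ MvPolynomial.supported K {(⟨j - 1, p1⟩ : Fin n)})
    (hd : IsGcdMinors F r ((MvPolynomial.X (⟨0, p0⟩ : Fin n) - f) * h)) :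
    SmithEquivAt F r ↔ ∀ k : ℕ, 1 ≤ k → k ≤ r → JkUnit F k := by
  obtain ⟨k, rfl⟩ : ∃ k, n = k + 2 := ⟨n - 2, by omega⟩
  refine final_abs _ hlm F hrank hd fun hF => ?_
  refine mv_smith k ⟨j - 2, by omega⟩ f h hf ?_ ?_ l m F hF
  · convert hh using 3
    rw [Fin.ext_iff]
    show j - 2 + 1 = j - 1
    omega
  · intro h0
    obtain ⟨p, hp, hp0⟩ := hrank.1
    have := hd.1 p hp
    rw [show ((X (⟨0, p0⟩ : Fin (k + 2)) - f) * h : MvPolynomial (Fin (k + 2)) K) = 0 from h0] at this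
    exact hp0 (zero_dvd_iff.1 this)

end Assemble

theorem statement4 {K : Type*} [Field K] (n : ℕ) (hn : 2 ≤ n) (l m r : ℕ) (hlm : l < m)
    (j : ℕ) (hj2 : 2 ≤ j) (hjn : j ≤ n)
    (F : Matrix (Fin l) (Fin m) (MvPolynomial (Fin n) K))
    (hrank : HasRank F r)
    (f h : MvPolynomial (Fin n) K)
    (hf : f ∈ MvPolynomial.supported K {t : Fin n | (t : ℕ) ≠ 0})
    (hh : h ∈ MvPolynomial.supported K {(⟨j - 1, by omega⟩ : Fin n)})
    (hd : IsGcdMinors F r ((MvPolynomial.X (⟨0, by omega⟩ : Fin n) - f) * h)) :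
    SmithEquivAt F r ↔ ∀ k : ℕ, 1 ≤ k → k ≤ r → JkUnit F k := by
  exact main_thm n hn l m r hlm j hj2 hjn _ _ F hrank f h hf hh hd
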